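/- arXiv:2012.14801 — 7 statements merged into one kernel-verified Lean document; each statement's English description precedes it below -/
import Mathlib

section
/- Let p be a prime and let a, b : Fin 4 → ℚ_p with a i ≠ 0 and b i ≠ 0 for every i. If both diagonal quadratic forms q_a(x) = ∑ i, a i * (x i)^2 and q_b(x) = ∑ i, b i * (x i)^2 are anisotropic over ℚ_p, then q_a and q_b are equivalent: there exists a linear automorphism T of ℚ_p⁴ such that q_b(T x) = q_a(x) for all x. (Uniqueness of the rank-4 anisotropic form over a p-adic field.) -/
/-!
Call a field `F` Hilbert if the norms from each of its quadratic extensions `F(√d)` have index two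
in `Fˣ`; then the relation that `t` is a norm from `F(√d)` is a symmetric, bilinear and
nondegenerate pairing on `Fˣ` modulo squares. Pair the variables of an anisotropic quaternary form, writing it as
`w₀ N_d ⊥ w₂ N_d'` with binary norm forms `N_d` and `N_d'`. The values of `w₀ N_d` and `-w₂ N_d'`
are disjoint cosets of subgroups of index two, so these subgroups coincide, hence `d = d'` up to
squares, and the form is `c ⟨1, -d, -t, dt⟩` with `t` not a norm from `F(√d)`.

For fixed `c` all these quaternion norm forms are isometric: only the coset of `t` modulo norms
matters, and a common nonnorm `s` of `F(√d)` and `F(√d')` gives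
`(d, t) → (d, s) → (d', s) → (d', t')`. The scalar `c` can be changed by norms of quaternions,
which are all of `Fˣ` because `-1` is a sum of squares.

The field `ℚ_p` is Hilbert by Hensel's lemma: for odd `p` its square classes are generated by a
nonsquare unit and `p`, and for `p = 2` by `-1`, `2` and `5`, where everything is decided modulo
`8`.
-/

open QuadraticMap (weightedSumSquares weightedSumSquares_apply)

section Group

variable {G : Type*} [CommGroup G] {H K : Subgroup G}

theorem exists_notMem_and_notMem {x y : G} (hx : x ∉ H) (hy : y ∉ K) : ∃ z, z ∉ H ∧ z ∉ K := by
  by_cases hxK : x ∈ K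
  · by_cases hyH : y ∈ H
    · exact ⟨x * y, mt (H.mul_mem_cancel_right hyH).1 hx, mt (K.mul_mem_cancel_left hxK).1 hy⟩
    · exact ⟨y, hyH, hy⟩
  · exact ⟨x, hx, hxK⟩

theorem index_eq_two_of_closure_sup_square_eq_top {S : Set G} (h_sq : Subgroup.square G ≤ H)
    (hS : Subgroup.closure S ⊔ Subgroup.square G = ⊤) {t : G} (ht : t ∉ H)
    (h : ∀ s ∈ S, s ∈ H ∨ s * t ∈ H) : H.index = 2 := by
  refine Subgroup.index_eq_two_iff_exists_notMem_and.2 ⟨t, ht, fun g => ?_⟩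
  have hS_le : Subgroup.closure S ≤ H ⊔ Subgroup.zpowers t := by
    refine (Subgroup.closure_le _).2 fun s hs => ?_
    rcases h s hs with hs | hst
    · exact Subgroup.mem_sup_left hs
    · rw [← mul_inv_cancel_right s t]
      exact Subgroup.mul_mem_sup hst (inv_mem (Subgroup.mem_zpowers t))
  have hg : g ∈ H ⊔ Subgroup.zpowers t :=
    sup_le hS_le (h_sq.trans le_sup_left) (hS ▸ Subgroup.mem_top g)
  obtain ⟨x, hx, _, ⟨n, rfl⟩, rfl⟩ := Subgroup.mem_sup.1 hg
  rw [mul_assoc, ← zpow_add_one, H.mul_mem_cancel_left hx, H.mul_mem_cancel_left hx]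
  rcases Int.even_or_odd n with hn | hn
  · exact .inr (h_sq (hn.isSquare_zpow t))
  · exact .inl (h_sq (hn.add_one.isSquare_zpow t))

end Group

theorem isSquare_units_of_isSquare_val {M : Type*} [CommMonoid M] {u : Mˣ}
    (hu : IsSquare (u : M)) : IsSquare u := by
  obtain ⟨r, hr⟩ := hu
  obtain ⟨s, rfl⟩ := isUnit_of_mul_isUnit_left (hr ▸ u.isUnit)
  exact ⟨s, Units.ext hr⟩

theorem isSquare_mul_of_not_isSquare {F : Type*} [Field F] [Finite F] {x y : F}
    (hx : ¬ IsSquare x) (hy : ¬ IsSquare y) : IsSquare (x * y) := by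
  classical
  have := Fintype.ofFinite F
  have hx₀ : x ≠ 0 := fun h => hx (h ▸ .zero)
  have hy₀ : y ≠ 0 := fun h => hy (h ▸ .zero)
  rw [← quadraticChar_one_iff_isSquare (mul_ne_zero hx₀ hy₀), map_mul,
    quadraticChar_neg_one_iff_not_isSquare.2 hx, quadraticChar_neg_one_iff_not_isSquare.2 hy]
  norm_num

section NormGroup

variable {R : Type*} [CommRing R]

/-- The units of `R` that are norms from the quadratic algebra `R[√d]`, i.e. the unit values of the
binary form `⟨1, -d⟩`. -/
def normGroup (d : R) : Subgroup Rˣ :=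
  (Units.map (QuadraticAlgebra.norm : QuadraticAlgebra R d 0 →* R)).range

theorem mem_normGroup {d : R} {n : Rˣ} :
    n ∈ normGroup d ↔ ∃ x y : R, x ^ 2 - d * y ^ 2 = n := by
  constructor
  · rintro ⟨z, rfl⟩
    refine ⟨z.val.re, z.val.im, ?_⟩
    rw [Units.coe_map, QuadraticAlgebra.norm_def]
    ring
  · rintro ⟨x, y, h⟩
    have hz : QuadraticAlgebra.norm (⟨x, y⟩ : QuadraticAlgebra R d 0) = n := by
      rw [QuadraticAlgebra.norm_def, ← h]
      ring
    obtain ⟨u, hu⟩ := QuadraticAlgebra.isUnit_iff_norm_isUnit.2 (hz ▸ n.isUnit)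
    exact ⟨u, Units.ext (by rw [Units.coe_map, hu]; exact hz)⟩

theorem neg_mem_normGroup (d : Rˣ) : -d ∈ normGroup (d : R) :=
  mem_normGroup.2 ⟨0, 1, by simp⟩

theorem square_le_normGroup (d : R) : Subgroup.square Rˣ ≤ normGroup d := by
  rintro _ ⟨s, rfl⟩
  exact mem_normGroup.2 ⟨s, 0, by push_cast; ring⟩

theorem normGroup_mul_sq (d : R) (s : Rˣ) : normGroup (d * s ^ 2) = normGroup d := by
  ext n
  simp only [mem_normGroup]
  constructor
  · rintro ⟨x, y, h⟩
    exact ⟨x, s * y, by rw [← h]; ring⟩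
  · rintro ⟨x, y, h⟩
    refine ⟨x, ↑s⁻¹ * y, ?_⟩
    rw [← h]
    linear_combination (-d * y ^ 2 * (s * ↑s⁻¹ + 1)) * s.mul_inv

theorem map_mem_normGroup {R S : Type*} [CommRing R] [CommRing S] (f : R →+* S) {d : R} {n : Rˣ}
    (h : n ∈ normGroup d) : Units.map f n ∈ normGroup (f d) := by
  obtain ⟨x, y, hxy⟩ := mem_normGroup.1 h
  exact mem_normGroup.2 ⟨f x, f y, by simp [← hxy]⟩

open Polynomial in
/-- The squares and the elements `n + d y²` are too numerous to be disjoint. -/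
theorem normGroup_eq_top_of_finite {F : Type*} [Field F] [Finite F] {d : F} (hd : d ≠ 0) :
    normGroup d = ⊤ := by
  have := Fintype.ofFinite F
  refine eq_top_iff.2 fun n _ => ?_
  by_cases hF : ringChar F = 2
  · exact square_le_normGroup d
      (isSquare_units_of_isSquare_val (FiniteField.isSquare_of_char_two hF n))
  obtain ⟨x, y, h⟩ := FiniteField.exists_root_sum_quadratic (f := (X ^ 2 : F[X]))
    (g := C (-d) * X ^ 2 + C 0 * X + C (-(n : F))) (degree_X_pow 2)
    (degree_quadratic (neg_ne_zero.2 hd)) (FiniteField.odd_card_of_char_ne_two hF)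
  refine mem_normGroup.2 ⟨x, y, ?_⟩
  simp only [eval_add, eval_mul, eval_pow, eval_C, eval_X] at h
  linear_combination h

variable {F : Type*} [Field F] [NeZero (2 : F)]

theorem normGroup_eq_top {d : Fˣ} (hd : IsSquare d) : normGroup (d : F) = ⊤ := by
  obtain ⟨s, rfl⟩ := hd
  refine eq_top_iff.2 fun n _ => mem_normGroup.2 ⟨(n + 1) / 2, (n - 1) / (2 * s), ?_⟩
  have := two_ne_zero (α := F)
  push_cast
  field_simp
  ring

theorem mem_normGroup_symm {d n : Fˣ} (h : n ∈ normGroup (d : F)) : d ∈ normGroup (n : F) := by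
  obtain ⟨x, y, h⟩ := mem_normGroup.1 h
  by_cases hy : y = 0
  · have hn : IsSquare n := ⟨Units.mk0 x fun hx => n.ne_zero (by simp [← h, hx, hy]),
      Units.ext (by simp [← h, hy, sq])⟩
    simp [normGroup_eq_top hn]
  · exact mem_normGroup.2 ⟨x / y, 1 / y, by rw [← h]; field_simp; ring⟩

theorem mem_normGroup_comm {d n : Fˣ} : n ∈ normGroup (d : F) ↔ d ∈ normGroup (n : F) :=
  ⟨mem_normGroup_symm, mem_normGroup_symm⟩

end NormGroup

section WeightedSumSquares

variable {R ι : Type*} [CommSemiring R] [Fintype ι] {w w' : ι → R}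

theorem weightedSumSquares_eq_sum_mul_sq (w v : ι → R) :
    weightedSumSquares R w v = ∑ i, w i * v i ^ 2 := by
  simp only [weightedSumSquares_apply, smul_eq_mul, sq]

theorem anisotropic_weightedSumSquares_iff :
    (weightedSumSquares R w).Anisotropic ↔ ∀ v : ι → R, ∑ i, w i * v i ^ 2 = 0 → v = 0 := by
  simp only [QuadraticMap.Anisotropic, weightedSumSquares_eq_sum_mul_sq]

theorem equivalent_weightedSumSquares_iff :
    (weightedSumSquares R w).Equivalent (weightedSumSquares R w') ↔
      ∃ T : (ι → R) ≃ₗ[R] (ι → R), ∀ v, ∑ i, w' i * T v i ^ 2 = ∑ i, w i * v i ^ 2 := by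
  simp only [← weightedSumSquares_eq_sum_mul_sq]
  exact ⟨fun ⟨T⟩ => ⟨T.toLinearEquiv, T.map_app⟩, fun ⟨T, hT⟩ => ⟨⟨T, hT⟩⟩⟩

end WeightedSumSquares

section QuaternionForm

variable {R : Type*} [CommRing R]

/-- The norm form `⟨1, -d, -t, dt⟩` of the quaternion algebra with `i² = d` and `j² = t`, scaled
by `c`. -/
def quatForm (c d t : R) : QuadraticForm R (Fin 4 → R) :=
  weightedSumSquares R ![c, -(c * d), -(c * t), c * d * t]

theorem quatForm_apply (c d t : R) (v : Fin 4 → R) :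
    quatForm c d t v = c * (v 0 ^ 2 - d * v 1 ^ 2 - t * v 2 ^ 2 + d * t * v 3 ^ 2) := by
  simp only [quatForm, weightedSumSquares_eq_sum_mul_sq, Fin.sum_univ_four, Matrix.cons_val]
  ring

theorem nonempty_isometry_quatForm_of_mulVec {c d t c' d' t' : R} (M : Matrix (Fin 4) (Fin 4) R)
    (h : ∀ v, quatForm c' d' t' (M.mulVec v) = quatForm c d t v) :
    Nonempty (quatForm c d t →qᵢ quatForm c' d' t') :=
  ⟨{ M.mulVecLin with map_app' := h }⟩

theorem nonempty_isometry_quatForm_swap (c d t : R) :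
    Nonempty (quatForm c d t →qᵢ quatForm c t d) :=
  nonempty_isometry_quatForm_of_mulVec
    !![1, 0, 0, 0; 0, 0, 1, 0; 0, 1, 0, 0; 0, 0, 0, 1] fun v => by
    simp only [quatForm_apply, Matrix.mulVec, dotProduct, Fin.sum_univ_four, Matrix.of_apply,
      Matrix.cons_val]
    ring

theorem nonempty_isometry_quatForm_mul_norm (c d t x y : R) :
    Nonempty (quatForm c d (t * (x ^ 2 - d * y ^ 2)) →qᵢ quatForm c d t) :=
  nonempty_isometry_quatForm_of_mulVec
    !![1, 0, 0, 0; 0, 1, 0, 0; 0, 0, x, d * y; 0, 0, y, x] fun v => by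
    simp only [quatForm_apply, Matrix.mulVec, dotProduct, Fin.sum_univ_four, Matrix.of_apply,
      Matrix.cons_val]
    ring

/-- The matrix is left multiplication by the quaternion with coordinates `q`. -/
theorem nonempty_isometry_quatForm_scale (c d t : R) (q : Fin 4 → R) :
    Nonempty (quatForm (c * quatForm 1 d t q) d t →qᵢ quatForm c d t) :=
  nonempty_isometry_quatForm_of_mulVec !![q 0, d * q 1, t * q 2, -(d * t * q 3);
      q 1, q 0, t * q 3, -(t * q 2); q 2, -(d * q 3), q 0, d * q 1; q 3, -q 2, q 1, q 0] fun v => by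
    simp only [quatForm_apply, Matrix.mulVec, dotProduct, Fin.sum_univ_four, Matrix.of_apply,
      Matrix.cons_val]
    ring

/-- The units of `R` that are norms of quaternions with `i² = d` and `j² = t`. -/
def quatNormGroup (d t : R) : Subgroup Rˣ where
  carrier := {n | ∃ q, quatForm 1 d t q = n}
  one_mem' := ⟨![1, 0, 0, 0], by simp [quatForm_apply]⟩
  mul_mem' := by
    rintro m n ⟨q, hq⟩ ⟨r, hr⟩
    obtain ⟨f⟩ := nonempty_isometry_quatForm_scale 1 d t q
    refine ⟨f r, ?_⟩
    rw [f.map_app, Units.val_mul, ← hq, ← hr, one_mul, quatForm_apply _ _ _ r,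
      quatForm_apply 1 _ _ r, one_mul]
  inv_mem' := by
    rintro n ⟨q, hq⟩
    exact ⟨(↑n⁻¹ : R) • q, by simp [QuadraticMap.map_smul, hq]⟩

theorem normGroup_le_quatNormGroup (d t : R) : normGroup d ≤ quatNormGroup d t := by
  intro n hn
  obtain ⟨x, y, h⟩ := mem_normGroup.1 hn
  exact ⟨![x, y, 0, 0], by simp [quatForm_apply, ← h]⟩

end QuaternionForm

section QuaternionFormField

variable {F : Type*} [Field F]

/-- Since `n = m₁ + m₂` is the value `m₁ - t (m₂ / -t)` of `⟨1, -d, -t, dt⟩`, the group of norms is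
closed under addition. -/
theorem mem_normGroup_of_val_eq_add {d : F} {t m₁ m₂ n : Fˣ}
    (h : quatNormGroup d (t : F) ≤ normGroup d) (h₁ : m₁ ∈ normGroup d) (h₂ : m₂ ∈ normGroup d)
    (hn : (n : F) = m₁ + m₂) : n ∈ normGroup d := by
  have ht : -t ∈ normGroup d := h ⟨![0, 0, 1, 0], by simp [quatForm_apply]⟩
  obtain ⟨x, y, hxy⟩ := mem_normGroup.1 h₁
  obtain ⟨z, w, hzw⟩ := mem_normGroup.1 (div_mem h₂ ht)
  have hm₂ : (m₂ : F) = -t * (z ^ 2 - d * w ^ 2) := by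
    rw [hzw, Units.val_div_eq_div_val, Units.val_neg, mul_div_cancel₀ _ (neg_ne_zero.2 t.ne_zero)]
  refine h ⟨![x, y, z, w], ?_⟩
  rw [quatForm_apply, hn, hm₂, ← hxy]
  simp only [Matrix.cons_val]
  ring

theorem mem_normGroup_of_isSumSq {d : F} {t n : Fˣ} (h : quatNormGroup d (t : F) ≤ normGroup d)
    (hn : IsSumSq (n : F)) : n ∈ normGroup d := by
  suffices ∀ s : F, IsSumSq s → ∀ m : Fˣ, (m : F) = s → m ∈ normGroup d from this n hn n rfl
  intro s hs
  induction hs with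
  | zero => exact fun m hm => absurd hm m.ne_zero
  | @sq_add x s _ ih =>
    intro m hm
    by_cases hx : x = 0
    · exact ih m (by simpa [hx] using hm)
    · have hx_sq : Units.mk0 x hx * Units.mk0 x hx ∈ normGroup d :=
        square_le_normGroup d ⟨_, rfl⟩
      by_cases hs0 : s = 0
      · have : m = Units.mk0 x hx * Units.mk0 x hx := Units.ext (by simp [hm, hs0])
        exact this ▸ hx_sq
      · exact mem_normGroup_of_val_eq_add h hx_sq (ih (Units.mk0 s hs0) rfl) (by simp [hm])

/-- Anisotropy says that the cosets of norms represented by `⟨w 0, w 1⟩` and `-⟨w 2, w 3⟩` are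
disjoint. -/
theorem mul_notMem_normGroup_of_anisotropic {w : Fin 4 → Fˣ}
    (hw : (weightedSumSquares F w).Anisotropic) {m : Fˣ}
    (hm : m ∈ normGroup ((-(w 3 / w 2) : Fˣ) : F)) :
    -(w 2 / w 0) * m ∉ normGroup ((-(w 1 / w 0) : Fˣ) : F) := by
  intro h
  obtain ⟨x, y, hxy⟩ := mem_normGroup.1 h
  obtain ⟨z, u, hzu⟩ := mem_normGroup.1 hm
  have h_zero : weightedSumSquares F w ![x, y, z, u] = 0 := by
    push_cast at hxy hzu
    simp only [weightedSumSquares_apply, Fin.sum_univ_four, Matrix.cons_val, Units.smul_def,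
      smul_eq_mul]
    rw [← hzu] at hxy
    field_simp at hxy
    linear_combination hxy
  have hv := hw _ h_zero
  have hz : z = 0 := congrFun hv 2
  have hu : u = 0 := congrFun hv 3
  exact m.ne_zero (by simp [← hzu, hz, hu])

theorem exists_equivalent_weightedSumSquares [NeZero (2 : F)] {V : Type*} [AddCommGroup V]
    [Module F V] [FiniteDimensional F V] {n : ℕ} (hV : Module.finrank F V = n)
    {Q : QuadraticForm F V} (hQ : Q.Anisotropic) :
    ∃ w : Fin n → Fˣ, Q.Equivalent (weightedSumSquares F w) := by
  subst hV
  have : Invertible (2 : F) := invertibleOfNonzero two_ne_zero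
  exact QuadraticForm.equivalent_weightedSumSquares_units_of_nondegenerate' Q
    (QuadraticMap.separatingLeft_of_anisotropic Q hQ)

theorem equivalent_of_isometry {V V' : Type*} [AddCommGroup V] [Module F V] [AddCommGroup V']
    [Module F V'] [FiniteDimensional F V'] {Q : QuadraticForm F V} {Q' : QuadraticForm F V'}
    (hQ : Q.Anisotropic) (hV : Module.finrank F V = Module.finrank F V') (f : Q →qᵢ Q') :
    Q.Equivalent Q' := by
  have hf : Function.Injective f.toLinearMap := by
    refine (injective_iff_map_eq_zero _).2 fun v hv => hQ v ?_
    rw [← f.map_app v]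
    exact (congrArg Q' hv).trans Q'.map_zero
  exact ⟨⟨LinearEquiv.ofInjectiveOfFinrankEq f.toLinearMap hf hV, f.map_app⟩⟩

end QuaternionFormField

section HilbertField

/-- Hilbert fields: the norms from each quadratic extension `F(√d)` form a subgroup of index two
of `Fˣ`. -/
def IsHilbertField (F : Type*) [Field F] : Prop :=
  ∀ d : Fˣ, ¬ IsSquare d → (normGroup (d : F)).index = 2

namespace IsHilbertField

variable {F : Type*} [Field F] [NeZero (2 : F)]

theorem mul_mem_normGroup_iff (hF : IsHilbertField F) {d x y : Fˣ} :
    x * y ∈ normGroup (d : F) ↔ (x ∈ normGroup (d : F) ↔ y ∈ normGroup (d : F)) := by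
  by_cases hd : IsSquare d
  · simp [normGroup_eq_top hd]
  · exact Subgroup.mul_mem_iff_of_index_two (hF d hd)

theorem isSquare_mul_of_normGroup_eq (hF : IsHilbertField F) {d d' : Fˣ}
    (h : normGroup (d : F) = normGroup (d' : F)) : IsSquare (d * d') := by
  by_contra hdd
  have hne : normGroup ((d * d' : Fˣ) : F) ≠ ⊤ := fun htop =>
    absurd (hF _ hdd) (by rw [htop]; simp)
  obtain ⟨x, -, hx⟩ := SetLike.exists_of_lt hne.lt_top
  rw [mem_normGroup_comm, hF.mul_mem_normGroup_iff, mem_normGroup_comm, h, mem_normGroup_comm] at hx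
  exact hx Iff.rfl

theorem nonempty_isometry_quatForm_right (hF : IsHilbertField F) (c : F) {d t t' : Fˣ}
    (ht : t ∉ normGroup (d : F)) (ht' : t' ∉ normGroup (d : F)) :
    Nonempty (quatForm c d t →qᵢ quatForm c (d : F) t') := by
  have hn : t'⁻¹ * t ∈ normGroup (d : F) := hF.mul_mem_normGroup_iff.2 (by simp [ht, ht'])
  obtain ⟨x, y, hxy⟩ := mem_normGroup.1 hn
  have ht_eq : (t : F) = t' * (x ^ 2 - d * y ^ 2) := by rw [hxy]; simp
  exact ht_eq ▸ nonempty_isometry_quatForm_mul_norm c (d : F) t' x y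

theorem nonempty_isometry_quatForm (hF : IsHilbertField F) (c : F) {d t d' t' : Fˣ}
    (h : t ∉ normGroup (d : F)) (h' : t' ∉ normGroup (d' : F)) :
    Nonempty (quatForm c d t →qᵢ quatForm c (d' : F) t') := by
  obtain ⟨s, hs, hs'⟩ := exists_notMem_and_notMem h h'
  obtain ⟨f₁⟩ := hF.nonempty_isometry_quatForm_right c h hs
  obtain ⟨f₂⟩ := nonempty_isometry_quatForm_swap c (d : F) s
  obtain ⟨f₃⟩ := hF.nonempty_isometry_quatForm_right c (mem_normGroup_comm.not.1 hs)
    (mem_normGroup_comm.not.1 hs')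
  obtain ⟨f₄⟩ := nonempty_isometry_quatForm_swap c (s : F) d'
  obtain ⟨f₅⟩ := hF.nonempty_isometry_quatForm_right c hs' h'
  exact ⟨f₅.comp (f₄.comp (f₃.comp (f₂.comp f₁)))⟩

theorem quatNormGroup_eq_top (hF : IsHilbertField F) (hneg : IsSumSq (-1 : F)) {d t : Fˣ}
    (ht : t ∉ normGroup (d : F)) : quatNormGroup (d : F) t = ⊤ := by
  have hnot_le : ¬ quatNormGroup (d : F) t ≤ normGroup (d : F) := fun hle => by
    have h_neg_one : (-1 : Fˣ) ∈ normGroup (d : F) :=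
      mem_normGroup_of_isSumSq hle (by simpa using hneg)
    have h_neg_t : -t ∈ normGroup (d : F) := hle ⟨![0, 0, 1, 0], by simp [quatForm_apply]⟩
    exact ht (by simpa using mul_mem h_neg_one h_neg_t)
  obtain ⟨m, hm, hm'⟩ := SetLike.not_le_iff_exists.1 hnot_le
  refine eq_top_iff.2 fun n _ => ?_
  by_cases hn : n ∈ normGroup (d : F)
  · exact normGroup_le_quatNormGroup _ _ hn
  · have hmn : n * m ∈ normGroup (d : F) := hF.mul_mem_normGroup_iff.2 (by simp [hn, hm'])
    exact (Subgroup.mul_mem_cancel_right _ hm).1 (normGroup_le_quatNormGroup _ _ hmn)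

theorem nonempty_isometry_quatForm_left (hF : IsHilbertField F) (hneg : IsSumSq (-1 : F))
    (c c' : Fˣ) {d t : Fˣ} (ht : t ∉ normGroup (d : F)) :
    Nonempty (quatForm (c : F) d t →qᵢ quatForm (c' : F) d t) := by
  obtain ⟨q, hq⟩ : c'⁻¹ * c ∈ quatNormGroup (d : F) t := by
    simp [hF.quatNormGroup_eq_top hneg ht]
  have hc : (c : F) = c' * quatForm 1 (d : F) t q := by rw [hq]; simp
  exact hc ▸ nonempty_isometry_quatForm_scale (c' : F) d t q

theorem normGroup_eq_of_anisotropic (hF : IsHilbertField F) {w : Fin 4 → Fˣ}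
    (hw : (weightedSumSquares F w).Anisotropic) :
    normGroup ((-(w 1 / w 0) : Fˣ) : F) = normGroup ((-(w 3 / w 2) : Fˣ) : F) := by
  have h_disjoint := fun m => mul_notMem_normGroup_of_anisotropic hw (m := m)
  set k := -(w 2 / w 0)
  have hk : k ∉ normGroup ((-(w 1 / w 0) : Fˣ) : F) := by
    simpa only [mul_one] using h_disjoint 1 (one_mem _)
  have hk_inv : ∀ m ∈ normGroup ((-(w 1 / w 0) : Fˣ) : F),
      k⁻¹ * m ∉ normGroup ((-(w 3 / w 2) : Fˣ) : F) := fun m hm hm' =>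
    h_disjoint _ hm' (by rwa [mul_inv_cancel_left])
  have hk' := hk_inv 1 (one_mem _)
  rw [mul_one] at hk'
  refine le_antisymm (fun m hm => ?_) fun m hm => ?_
  · have h_notMem := hk_inv m hm
    rw [hF.mul_mem_normGroup_iff] at h_notMem
    tauto
  · have h_notMem := h_disjoint m hm
    rw [hF.mul_mem_normGroup_iff] at h_notMem
    tauto

theorem exists_equivalent_quatForm (hF : IsHilbertField F) {V : Type*} [AddCommGroup V]
    [Module F V] (hV : Module.finrank F V = 4) {Q : QuadraticForm F V} (hQ : Q.Anisotropic) :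
    ∃ c d t : Fˣ, t ∉ normGroup (d : F) ∧ Q.Equivalent (quatForm (c : F) d t) := by
  have : FiniteDimensional F V := .of_finrank_pos (by simp [hV])
  obtain ⟨w, ⟨e⟩⟩ := exists_equivalent_weightedSumSquares hV hQ
  have hw : (weightedSumSquares F w).Anisotropic := fun v hv =>
    e.symm.toLinearEquiv.map_eq_zero_iff.1 (hQ _ ((e.symm.map_app v).trans hv))
  refine ⟨w 0, -(w 1 / w 0), -(w 2 / w 0), ?_, ?_⟩
  · simpa only [mul_one] using mul_notMem_normGroup_of_anisotropic hw (one_mem _)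
  obtain ⟨r, h_sq⟩ := hF.isSquare_mul_of_normGroup_eq (hF.normGroup_eq_of_anisotropic hw)
  have hr : (w 1 * w 3 : F) = w 0 * w 2 * r ^ 2 := by
    have h_sq := congrArg Units.val h_sq
    push_cast at h_sq
    field_simp at h_sq
    exact h_sq
  refine ⟨e.trans <| QuadraticForm.isometryEquivWeightedSumSquaresWeightedSumSquares
    (w := fun i => (w i : F)) ![1, 1, 1, r * w 0 / w 1] fun i => ?_⟩
  match i with
  | 0 => simp
  | 1 | 2 =>
    simp only [Matrix.cons_val]
    push_cast
    field_simp
  | 3 =>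
    simp only [Matrix.cons_val]
    push_cast
    field_simp
    linear_combination -hr

end IsHilbertField

open Module in
theorem padic_rank_four_anisotropic_unique_general {F V V' : Type*} [Field F] [NeZero (2 : F)]
    (hF : IsHilbertField F) (hneg : IsSumSq (-1 : F)) [AddCommGroup V] [Module F V]
    [AddCommGroup V'] [Module F V'] (hV : finrank F V = 4) (hV' : finrank F V' = 4)
    {Q : QuadraticForm F V} {Q' : QuadraticForm F V'} (hQ : Q.Anisotropic) (hQ' : Q'.Anisotropic) :
    Q.Equivalent Q' := by
  obtain ⟨c, d, t, ht, ⟨e⟩⟩ := hF.exists_equivalent_quatForm hV hQ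
  obtain ⟨c', d', t', ht', ⟨e'⟩⟩ := hF.exists_equivalent_quatForm hV' hQ'
  have : FiniteDimensional F V' := .of_finrank_pos (by simp [hV'])
  obtain ⟨f⟩ := hF.nonempty_isometry_quatForm_left hneg c c' ht
  obtain ⟨g⟩ := hF.nonempty_isometry_quatForm (c' : F) ht ht'
  exact equivalent_of_isometry hQ (hV.trans hV'.symm)
    (e'.symm.toIsometry.comp (g.comp (f.comp e.toIsometry)))

end HilbertField

section Padic

variable {p : ℕ} [Fact p.Prime]

theorem isSquare_of_norm_sq_sub_lt {u y : ℤ_[p]} (h : ‖y ^ 2 - u‖ < ‖2 * y‖ ^ 2) :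
    IsSquare u := by
  obtain ⟨z, hz, -⟩ := hensels_lemma (F := (Polynomial.X ^ 2 - Polynomial.C u : Polynomial ℤ_[p]))
    (a := y) (by simpa [one_add_one_eq_two] using h)
  exact ⟨z, by simpa [sub_eq_zero, sq, eq_comm] using hz⟩

/-- Hensel's lemma provides `r` with `r² = 1 - 8p`, so `-1 = (8p - 1) / r²`. -/
theorem isSumSq_neg_one_padic : IsSumSq (-1 : ℚ_[p]) := by
  have h_prime : p.Prime := Fact.out
  obtain ⟨r, hr⟩ : IsSquare (1 - 8 * p : ℤ_[p]) := by
    refine isSquare_of_norm_sq_sub_lt (y := 1) ?_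
    have h₂ : 0 < ‖(2 : ℤ_[p])‖ := norm_pos_iff.2 two_ne_zero
    have hp : ‖(p : ℤ_[p])‖ < 1 :=
      (PadicInt.norm_lt_one_iff_dvd _).2 dvd_rfl
    have h_eq : (1 ^ 2 - (1 - 8 * p) : ℤ_[p]) = 2 ^ 2 * (2 * p) := by ring
    rw [h_eq, mul_one, norm_mul, norm_pow, norm_mul]
    refine mul_lt_of_lt_one_right (by positivity) ?_
    exact mul_lt_one_of_nonneg_of_lt_one_right (PadicInt.norm_le_one _) (norm_nonneg _) hp
  have hr' : (r * r : ℚ_[p]) = 1 - 8 * p := by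
    exact_mod_cast congrArg ((↑) : ℤ_[p] → ℚ_[p]) hr.symm
  have hr₀ : (r : ℚ_[p]) ≠ 0 := fun h => by
    have h8p : (8 * p : ℚ_[p]) = 1 := by
      rw [h, zero_mul] at hr'
      exact (sub_eq_zero.1 hr'.symm).symm
    have : 8 * p = 1 := by exact_mod_cast h8p
    omega
  have h_eq : (-1 : ℚ_[p]) = (8 * p - 1 : ℕ) * ((r : ℚ_[p])⁻¹ * (r : ℚ_[p])⁻¹) := by
    rw [Nat.cast_sub (by have := h_prime.pos; omega)]
    push_cast
    field_simp
    linear_combination -hr'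
  rw [h_eq]
  exact (IsSumSq.natCast _).mul (IsSquare.isSumSq ⟨_, rfl⟩)

theorem isUnit_toZMod {x : ℤ_[p]} : IsUnit (PadicInt.toZMod x) ↔ IsUnit x :=
  have : IsLocalHom (PadicInt.toZMod (p := p)) := .of_surjective _ (ZMod.ringHom_surjective _)
  isUnit_map_iff _ _

theorem toZMod_eq_zero_iff {x : ℤ_[p]} : PadicInt.toZMod x = 0 ↔ (p : ℤ_[p]) ∣ x := by
  rw [← RingHom.mem_ker, PadicInt.ker_toZMod, PadicInt.maximalIdeal_eq_span_p,
    Ideal.mem_span_singleton]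

/-- The inclusion `ℤ_pˣ → ℚ_pˣ`. -/
noncomputable def padicUnit : ℤ_[p]ˣ →* ℚ_[p]ˣ :=
  Units.map (PadicInt.Coe.ringHom : ℤ_[p] →+* ℚ_[p])

@[simp]
theorem coe_padicUnit (u : ℤ_[p]ˣ) : (padicUnit u : ℚ_[p]) = (u : ℤ_[p]) := rfl

/-- The uniformizer `p` as an element of `ℚ_pˣ`. -/
noncomputable def padicUniformizer (p : ℕ) [Fact p.Prime] : ℚ_[p]ˣ :=
  Units.mk0 p (Nat.cast_ne_zero.2 (Fact.out : p.Prime).ne_zero)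

@[simp]
theorem coe_padicUniformizer : (padicUniformizer p : ℚ_[p]) = p := rfl

theorem exists_eq_padicUnit_mul_zpow (x : ℚ_[p]ˣ) :
    ∃ (u : ℤ_[p]ˣ) (n : ℤ), x = padicUnit u * padicUniformizer p ^ n := by
  set n := (x : ℚ_[p]).valuation
  have h_norm : ‖((x * padicUniformizer p ^ (-n) : ℚ_[p]ˣ) : ℚ_[p])‖ = 1 := by
    push_cast
    rw [norm_mul, Padic.norm_eq_zpow_neg_valuation x.ne_zero, coe_padicUniformizer,
      Padic.norm_p_zpow, neg_neg, ← zpow_add₀ (by exact_mod_cast (Fact.out : p.Prime).ne_zero),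
      neg_add_cancel, zpow_zero]
  have hu : padicUnit (PadicInt.mkUnits h_norm) = x * padicUniformizer p ^ (-n) :=
    Units.ext (PadicInt.mkUnits_eq h_norm)
  exact ⟨PadicInt.mkUnits h_norm, n, by rw [hu, zpow_neg, inv_mul_cancel_right]⟩

theorem exists_eq_padicUnit_mul_pow_mul_sq (x : ℚ_[p]ˣ) :
    ∃ (u : ℤ_[p]ˣ) (k : Fin 2) (s : ℚ_[p]ˣ),
      x = padicUnit u * padicUniformizer p ^ (k : ℕ) * s ^ 2 := by
  obtain ⟨u, n, rfl⟩ := exists_eq_padicUnit_mul_zpow x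
  obtain ⟨m, rfl | rfl⟩ := Int.even_or_odd' n
  · exact ⟨u, 0, padicUniformizer p ^ m, by simp [zpow_mul']⟩
  · refine ⟨u, 1, padicUniformizer p ^ m, ?_⟩
    rw [zpow_add_one, zpow_mul', zpow_ofNat, ← mul_assoc, mul_right_comm, Fin.val_one, pow_one]

theorem exists_smul_eq_one {ι : Type*} [Finite ι] {v : ι → ℚ_[p]} (hv : v ≠ 0) :
    ∃ (c : ℚ_[p]) (w : ι → ℤ_[p]) (i : ι), w i = 1 ∧ ∀ j, (w j : ℚ_[p]) = c * v j := by
  obtain ⟨k, hk⟩ := Function.ne_iff.1 hv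
  have : Nonempty ι := ⟨k⟩
  obtain ⟨i, hi⟩ := Finite.exists_max fun i => ‖v i‖
  have hvi : 0 < ‖v i‖ := (norm_pos_iff.2 hk).trans_le (hi k)
  have h_le (j : ι) : ‖(v i)⁻¹ * v j‖ ≤ 1 := by
    rw [norm_mul, norm_inv, inv_mul_le_one₀ hvi]
    exact hi j
  exact ⟨(v i)⁻¹, fun j => ⟨_, h_le j⟩, i,
    Subtype.ext (inv_mul_cancel₀ (norm_pos_iff.1 hvi)), fun j => rfl⟩

theorem exists_primitive_of_mem_normGroup {d t : ℤ_[p]} {n : ℚ_[p]ˣ} (hn : (n : ℚ_[p]) = t)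
    (h : n ∈ normGroup (d : ℚ_[p])) :
    ∃ x y z : ℤ_[p], x ^ 2 - d * y ^ 2 = t * z ^ 2 ∧ (x = 1 ∨ y = 1 ∨ z = 1) := by
  obtain ⟨x, y, hxy⟩ := mem_normGroup.1 h
  obtain ⟨c, w, i, hi, hw⟩ := exists_smul_eq_one (v := ![x, y, 1]) fun h₀ =>
    one_ne_zero (congrFun h₀ 2)
  refine ⟨w 0, w 1, w 2, Subtype.coe_injective ?_, ?_⟩
  · push_cast
    simp only [hw, Matrix.cons_val, ← hn, ← hxy]
    ring
  · fin_cases i <;> tauto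

end Padic

section OddPrime

variable {p : ℕ} [Fact p.Prime]

theorem isSquare_padicInt_of_isSquare_toZMod (hp : p ≠ 2) {u : ℤ_[p]ˣ}
    (h : IsSquare (PadicInt.toZMod (u : ℤ_[p]))) : IsSquare u := by
  obtain ⟨r, hr⟩ := h
  obtain ⟨y, rfl⟩ := ZMod.ringHom_surjective PadicInt.toZMod r
  have hy : IsUnit y := isUnit_toZMod.1 (isUnit_of_mul_isUnit_left (hr ▸ isUnit_toZMod.2 u.isUnit))
  have h₂ : IsUnit (2 : ℤ_[p]) := isUnit_toZMod.1 <| by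
    rw [isUnit_iff_ne_zero, map_ofNat]
    exact Ring.two_ne_zero (by rwa [ZMod.ringChar_zmod_n])
  refine isSquare_units_of_isSquare_val (isSquare_of_norm_sq_sub_lt (y := y) ?_)
  rw [PadicInt.isUnit_iff.1 (h₂.mul hy), one_pow, PadicInt.norm_lt_one_iff_dvd,
    ← toZMod_eq_zero_iff, map_sub, map_pow, hr, sq, sub_self]

theorem isSquare_or_isSquare_mul (hp : p ≠ 2) {u v : ℤ_[p]ˣ} (hv : ¬ IsSquare v) :
    IsSquare u ∨ IsSquare (u * v) := by
  refine or_iff_not_imp_left.2 fun hu => isSquare_padicInt_of_isSquare_toZMod hp ?_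
  rw [Units.val_mul, map_mul]
  exact isSquare_mul_of_not_isSquare (mt (isSquare_padicInt_of_isSquare_toZMod hp) hu)
    (mt (isSquare_padicInt_of_isSquare_toZMod hp) hv)

theorem normGroup_padicInt_eq_top (hp : p ≠ 2) (v : ℤ_[p]ˣ) : normGroup (v : ℤ_[p]) = ⊤ := by
  refine eq_top_iff.2 fun w _ => ?_
  have hw : Units.map (PadicInt.toZMod (p := p)) w ∈ normGroup (PadicInt.toZMod (v : ℤ_[p])) := by
    rw [normGroup_eq_top_of_finite (isUnit_toZMod.2 v.isUnit).ne_zero]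
    exact Subgroup.mem_top _
  obtain ⟨x, y, hxy⟩ := mem_normGroup.1 hw
  obtain ⟨x, rfl⟩ := ZMod.ringHom_surjective PadicInt.toZMod x
  obtain ⟨y, rfl⟩ := ZMod.ringHom_surjective PadicInt.toZMod y
  replace hxy : PadicInt.toZMod x ^ 2 = PadicInt.toZMod ((w : ℤ_[p]) + (v : ℤ_[p]) * y ^ 2) := by
    simp only [Units.coe_map, MonoidHom.coe_coe] at hxy
    simp only [map_add, map_mul, map_pow]
    linear_combination hxy
  by_cases hx : IsUnit x
  · obtain ⟨u, hu⟩ : IsUnit (↑w + ↑v * y ^ 2 : ℤ_[p]) := isUnit_toZMod.1 (by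
      rw [← hxy]
      exact (isUnit_toZMod.2 hx).pow 2)
    obtain ⟨s, rfl⟩ := isSquare_padicInt_of_isSquare_toZMod hp (u := u) ⟨_, by rw [hu, ← hxy, sq]⟩
    exact mem_normGroup.2 ⟨s, y, by rw [sub_eq_iff_eq_add, ← hu, Units.val_mul, sq]⟩
  · have hx₀ : PadicInt.toZMod x = 0 := by
      rwa [← isUnit_toZMod, isUnit_iff_ne_zero, not_not] at hx
    have h_sq : IsSquare (-v * w) := isSquare_padicInt_of_isSquare_toZMod hp
      ⟨PadicInt.toZMod (v * y), by
        simp only [hx₀, Units.val_mul, Units.val_neg, map_mul, map_neg, map_add, map_pow] at hxy ⊢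
        linear_combination PadicInt.toZMod (v : ℤ_[p]) * hxy⟩
    exact (Subgroup.mul_mem_cancel_left _ (neg_mem_normGroup v)).1 (square_le_normGroup _ h_sq)

theorem padicUnit_mul_uniformizer_notMem_normGroup (hp : p ≠ 2) {v : ℤ_[p]ˣ} (hv : ¬ IsSquare v)
    (u : ℤ_[p]ˣ) :
    padicUnit u * padicUniformizer p ∉ normGroup (padicUnit v : ℚ_[p]) := by
  intro h
  obtain ⟨x, y, z, hxyz, h_prim⟩ := exists_primitive_of_mem_normGroup (t := ↑u * p) (by simp) h
  have h_mod : PadicInt.toZMod x ^ 2 = PadicInt.toZMod (v : ℤ_[p]) * PadicInt.toZMod y ^ 2 := by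
    have := congrArg PadicInt.toZMod hxyz
    simpa [sub_eq_zero] using this
  have hy : PadicInt.toZMod y = 0 := by
    by_contra hy
    refine hv (isSquare_padicInt_of_isSquare_toZMod hp
      ⟨PadicInt.toZMod x / PadicInt.toZMod y, ?_⟩)
    field_simp
    exact h_mod.symm
  have hx : PadicInt.toZMod x = 0 := by simpa [hy] using h_mod
  have hz : PadicInt.toZMod z = 0 := by
    obtain ⟨x', rfl⟩ := toZMod_eq_zero_iff.1 hx
    obtain ⟨y', rfl⟩ := toZMod_eq_zero_iff.1 hy
    have hp₀ : (p : ℤ_[p]) ≠ 0 := Nat.cast_ne_zero.2 (Fact.out : p.Prime).ne_zero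
    have h_eq : (↑u * z ^ 2 : ℤ_[p]) = p * (x' ^ 2 - v * y' ^ 2) :=
      mul_left_cancel₀ hp₀ (by linear_combination -hxyz)
    have := toZMod_eq_zero_iff.2 (Dvd.intro _ h_eq.symm)
    simpa [(isUnit_toZMod.2 u.isUnit).ne_zero] using this
  rcases h_prim with rfl | rfl | rfl <;> simp_all

theorem closure_sup_square_padic_eq_top_of_ne_two (hp : p ≠ 2) {v : ℤ_[p]ˣ} (hv : ¬ IsSquare v) :
    Subgroup.closure {padicUnit v, padicUniformizer p} ⊔ Subgroup.square ℚ_[p]ˣ = ⊤ := by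
  set H := Subgroup.closure {padicUnit v, padicUniformizer p} ⊔ Subgroup.square ℚ_[p]ˣ
  have h_le : Subgroup.closure {padicUnit v, padicUniformizer p} ≤ H := le_sup_left
  have hv_mem : padicUnit v ∈ H := h_le (Subgroup.subset_closure (by simp))
  have hp_mem : padicUniformizer p ∈ H := h_le (Subgroup.subset_closure (by simp))
  have h_sq {x : ℚ_[p]ˣ} (hx : IsSquare x) : x ∈ H :=
    (le_sup_right : Subgroup.square _ ≤ H) hx
  refine eq_top_iff.2 fun x _ => ?_
  obtain ⟨u, k, s, rfl⟩ := exists_eq_padicUnit_mul_pow_mul_sq x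
  refine mul_mem (mul_mem ?_ (pow_mem hp_mem _)) (h_sq (.sq s))
  rcases isSquare_or_isSquare_mul hp hv (u := u) with hu | hu
  · exact h_sq (hu.map padicUnit)
  · rw [← H.mul_mem_cancel_right hv_mem, ← map_mul]
    exact h_sq (hu.map padicUnit)

end OddPrime

theorem exists_not_isSquare_padicInt {p : ℕ} [Fact p.Prime] (hp : p ≠ 2) :
    ∃ u : ℤ_[p]ˣ, ¬ IsSquare u := by
  obtain ⟨a, ha⟩ := FiniteField.exists_nonsquare (F := ZMod p) (by rwa [ZMod.ringChar_zmod_n])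
  obtain ⟨y, rfl⟩ := ZMod.ringHom_surjective PadicInt.toZMod a
  obtain ⟨u, rfl⟩ : IsUnit y :=
    isUnit_toZMod.1 (isUnit_iff_ne_zero.2 fun h₀ => ha (h₀ ▸ .zero))
  refine ⟨u, fun ⟨r, hr⟩ => ha ⟨PadicInt.toZMod (r : ℤ_[p]), ?_⟩⟩
  rw [hr, Units.val_mul, map_mul]

theorem isHilbertField_padic_of_ne_two {p : ℕ} [Fact p.Prime] (hp : p ≠ 2) :
    IsHilbertField ℚ_[p] := by
  intro d hd
  obtain ⟨u, k, s, rfl⟩ := exists_eq_padicUnit_mul_pow_mul_sq d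
  rw [Units.val_mul, Units.val_pow_eq_pow_val, normGroup_mul_sq]
  match k with
  | 0 =>
    rw [Fin.val_zero, pow_zero, mul_one] at hd ⊢
    have hu : ¬ IsSquare u := fun hu => hd ((hu.map padicUnit).mul (.sq s))
    refine index_eq_two_of_closure_sup_square_eq_top (square_le_normGroup _)
      (closure_sup_square_padic_eq_top_of_ne_two hp hu)
      (by simpa using padicUnit_mul_uniformizer_notMem_normGroup hp hu 1) ?_
    rintro _ (rfl | rfl)
    · exact .inl (map_mem_normGroup PadicInt.Coe.ringHom (d := (u : ℤ_[p]))
        (by simp [normGroup_padicInt_eq_top hp]))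
    · exact .inr (square_le_normGroup _ ⟨_, rfl⟩)
  | 1 =>
    rw [Fin.val_one, pow_one]
    obtain ⟨v, hv⟩ := exists_not_isSquare_padicInt hp
    refine index_eq_two_of_closure_sup_square_eq_top (square_le_normGroup _)
      (closure_sup_square_padic_eq_top_of_ne_two hp hv)
      (mem_normGroup_comm.not.1 (padicUnit_mul_uniformizer_notMem_normGroup hp hv u)) ?_
    have h_neg : padicUnit (-u) * padicUniformizer p ∈
        normGroup ((padicUnit u * padicUniformizer p : ℚ_[p]ˣ) : ℚ_[p]) := by
      convert neg_mem_normGroup (padicUnit u * padicUniformizer p)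
      ext
      simp
    rintro _ (rfl | rfl)
    · exact .inr (square_le_normGroup _ ⟨_, rfl⟩)
    · rcases isSquare_or_isSquare_mul hp hv (u := -u) with hu | hu
      · exact .inl ((Subgroup.mul_mem_cancel_left _
          (square_le_normGroup _ (hu.map padicUnit))).1 h_neg)
      · refine .inr ((Subgroup.mul_mem_cancel_left _
          (square_le_normGroup _ (hu.map padicUnit))).1 ?_)
        convert mul_mem h_neg (square_le_normGroup _ ⟨padicUnit v, rfl⟩) using 1
        rw [map_mul]
        ac_rfl

theorem isSquare_padicInt_of_toZModPow_eq_one {u : ℤ_[2]} (h : PadicInt.toZModPow 3 u = 1) :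
    IsSquare u := by
  refine isSquare_of_norm_sq_sub_lt (y := 1) ?_
  have h_mem : 1 - u ∈ RingHom.ker (PadicInt.toZModPow (p := 2) 3) := by
    rw [RingHom.mem_ker, map_sub, map_one, h, sub_self]
  have h_two : ‖(2 : ℤ_[2])‖ = 2⁻¹ := by simpa using PadicInt.norm_p (p := 2)
  rw [PadicInt.ker_toZModPow, ← PadicInt.norm_le_pow_iff_mem_span_pow] at h_mem
  rw [one_pow, mul_one, h_two]
  exact h_mem.trans_lt (by norm_num [zpow_neg])

theorem exists_sq_eq_intCast {m : ℤ} (hm : (m : ZMod (2 ^ 3)) = 1) :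
    ∃ r : ℚ_[2]ˣ, (r : ℚ_[2]) ^ 2 = m := by
  obtain ⟨r, hr⟩ := isSquare_padicInt_of_toZModPow_eq_one (u := (m : ℤ_[2])) (by simpa using hm)
  have hr' : (r : ℚ_[2]) ^ 2 = m := by
    rw [sq]
    exact_mod_cast congrArg ((↑) : ℤ_[2] → ℚ_[2]) hr.symm
  refine ⟨Units.mk0 r fun h₀ => ?_, hr'⟩
  have hm₀ : m = 0 := by simpa [h₀, eq_comm] using hr'
  exact absurd (hm₀ ▸ hm) (by decide)

theorem exists_square_class_two (x : ℚ_[2]ˣ) :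
    ∃ (i j k : Fin 2) (s : ℚ_[2]ˣ),
      (x : ℚ_[2]) = (-1) ^ (i : ℕ) * 5 ^ (j : ℕ) * 2 ^ (k : ℕ) * s ^ 2 := by
  obtain ⟨u, k, s, rfl⟩ := exists_eq_padicUnit_mul_pow_mul_sq x
  have h_mod : ∀ m : ZMod (2 ^ 3), IsUnit m →
      ∃ i j : Fin 2, (-1) ^ (i : ℕ) * 5 ^ (j : ℕ) * m = 1 := by decide
  obtain ⟨i, j, hij⟩ := h_mod _ (u.isUnit.map (PadicInt.toZModPow 3))
  obtain ⟨r, hr⟩ := isSquare_padicInt_of_toZModPow_eq_one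
    (u := (-1) ^ (i : ℕ) * 5 ^ (j : ℕ) * (u : ℤ_[2])) (by
      rw [map_mul, map_mul, map_pow, map_pow, map_neg, map_one, map_ofNat]
      exact hij)
  have hr' : (-1) ^ (i : ℕ) * 5 ^ (j : ℕ) * ((u : ℤ_[2]) : ℚ_[2]) = r ^ 2 := by
    rw [sq]
    exact_mod_cast congrArg ((↑) : ℤ_[2] → ℚ_[2]) hr
  have hu : ((u : ℤ_[2]) : ℚ_[2]) ≠ 0 := (padicUnit u).ne_zero
  have hr₀ : (r : ℚ_[2]) ≠ 0 := fun h₀ => by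
    rw [h₀, zero_pow two_ne_zero] at hr'
    simp_all
  refine ⟨i, j, k, Units.mk0 (r : ℚ_[2]) hr₀ /
    ((-1) ^ (i : ℕ) * Units.mk0 5 (by norm_num) ^ (j : ℕ)) * s, ?_⟩
  push_cast
  simp only [coe_padicUnit, coe_padicUniformizer, Units.val_mk0, mul_pow, div_pow, ← hr']
  field_simp
  push_cast
  ring

theorem closure_sup_square_padic_eq_top_two :
    Subgroup.closure {u : ℚ_[2]ˣ | ∃ n ∈ ({-1, 2, 5} : Set ℤ), (u : ℚ_[2]) = n} ⊔
      Subgroup.square ℚ_[2]ˣ = ⊤ := by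
  set S : Set ℚ_[2]ˣ := {u | ∃ n ∈ ({-1, 2, 5} : Set ℤ), (u : ℚ_[2]) = n}
  have h_mem {u : ℚ_[2]ˣ} {n : ℤ} (hn : n ∈ ({-1, 2, 5} : Set ℤ)) (hu : (u : ℚ_[2]) = n)
      (e : ℕ) : u ^ e ∈ Subgroup.closure S :=
    pow_mem (Subgroup.subset_closure (Set.mem_ofPred.2 ⟨n, hn, hu⟩)) e
  refine eq_top_iff.2 fun x _ => ?_
  obtain ⟨i, j, k, s, hx⟩ := exists_square_class_two x
  have hx' : x = (-1) ^ (i : ℕ) * Units.mk0 5 (by norm_num) ^ (j : ℕ) *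
      padicUniformizer 2 ^ (k : ℕ) * s ^ 2 := Units.ext (by simp [hx])
  rw [hx']
  exact Subgroup.mul_mem_sup (mul_mem (mul_mem (h_mem (n := -1) (by simp) (by simp) _)
    (h_mem (n := 5) (by simp) (by simp) _)) (h_mem (n := 2) (by simp) (by simp) _))
    (Subgroup.mem_square.2 (.sq s))

theorem notMem_normGroup_of_zmod_eight {c t : ℤ}
    (h : ∀ x y z : ZMod (2 ^ 3), x = 1 ∨ y = 1 ∨ z = 1 →
      x ^ 2 - (c : ZMod (2 ^ 3)) * y ^ 2 ≠ (t : ZMod (2 ^ 3)) * z ^ 2)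
    {u : ℚ_[2]ˣ} (hu : (u : ℚ_[2]) = t) : u ∉ normGroup (c : ℚ_[2]) := by
  intro hmem
  obtain ⟨x, y, z, hxyz, h_prim⟩ := exists_primitive_of_mem_normGroup (d := c) (t := t)
    (by rw [hu, PadicInt.coe_intCast]) (by rwa [PadicInt.coe_intCast])
  refine h (PadicInt.toZModPow 3 x) (PadicInt.toZModPow 3 y) (PadicInt.toZModPow 3 z) ?_ ?_
  · rcases h_prim with rfl | rfl | rfl <;> simp
  · simpa using congrArg (PadicInt.toZModPow 3) hxyz

theorem mem_normGroup_of_zmod_eight {c n x y m : ℤ} (h : x ^ 2 - c * y ^ 2 = n * m)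
    (hm : (m : ZMod (2 ^ 3)) = 1) {u : ℚ_[2]ˣ} (hu : (u : ℚ_[2]) = n) :
    u ∈ normGroup (c : ℚ_[2]) := by
  obtain ⟨r, hr⟩ := exists_sq_eq_intCast hm
  have h' : (x ^ 2 - c * y ^ 2 : ℚ_[2]) = n * r ^ 2 := by rw [hr]; exact_mod_cast h
  refine mem_normGroup.2 ⟨x / r, y / r, ?_⟩
  rw [hu]
  field_simp
  linear_combination h'

theorem index_normGroup_intCast_eq_two {c t : ℤ}
    (ht : ∀ x y z : ZMod (2 ^ 3), x = 1 ∨ y = 1 ∨ z = 1 →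
      x ^ 2 - (c : ZMod (2 ^ 3)) * y ^ 2 ≠ (t : ZMod (2 ^ 3)) * z ^ 2)
    (h : ∀ n ∈ ({-1, 2, 5} : Set ℤ), ∃ ε x y m : ℤ,
      (ε = 1 ∨ ε = t) ∧ x ^ 2 - c * y ^ 2 = n * ε * m ∧ (m : ZMod (2 ^ 3)) = 1) :
    (normGroup (c : ℚ_[2])).index = 2 := by
  have ht₀ : (t : ℚ_[2]) ≠ 0 := Int.cast_ne_zero.2 fun h₀ => ht 0 0 1 (by simp) (by simp [h₀])
  refine index_eq_two_of_closure_sup_square_eq_top (square_le_normGroup _)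
    closure_sup_square_padic_eq_top_two
    (notMem_normGroup_of_zmod_eight ht (Units.val_mk0 ht₀)) ?_
  rintro s ⟨n, hn, hs⟩
  obtain ⟨ε, x, y, m, rfl | rfl, hxy, hm⟩ := h n hn
  · exact .inl (mem_normGroup_of_zmod_eight hxy hm (by simp [hs]))
  · exact .inr (mem_normGroup_of_zmod_eight hxy hm (by simp [hs]))

theorem index_normGroup_padic_two :
    ∀ c ∈ ({-1, 5, -5, 2, -2, 10, -10} : Set ℤ), (normGroup (c : ℚ_[2])).index = 2 := by
  rintro _ (rfl | rfl | rfl | rfl | rfl | rfl | rfl)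
  · refine index_normGroup_intCast_eq_two (t := -1) (by decide) ?_
    rintro _ (rfl | rfl | rfl)
    exacts [⟨-1, 1, 0, 1, by decide⟩, ⟨1, 1, 1, 1, by decide⟩, ⟨1, 1, 2, 1, by decide⟩]
  · refine index_normGroup_intCast_eq_two (t := 2) (by decide) ?_
    rintro _ (rfl | rfl | rfl)
    exacts [⟨1, 2, 1, 1, by decide⟩, ⟨2, 2, 0, 1, by decide⟩, ⟨1, 5, 2, 1, by decide⟩]
  · refine index_normGroup_intCast_eq_two (t := -1) (by decide) ?_
    rintro _ (rfl | rfl | rfl)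
    exacts [⟨-1, 1, 0, 1, by decide⟩, ⟨-1, 5, 1, -15, by decide⟩, ⟨1, 0, 1, 1, by decide⟩]
  · refine index_normGroup_intCast_eq_two (t := 5) (by decide) ?_
    rintro _ (rfl | rfl | rfl)
    exacts [⟨1, 1, 1, 1, by decide⟩, ⟨1, 2, 1, 1, by decide⟩, ⟨5, 5, 0, 1, by decide⟩]
  · refine index_normGroup_intCast_eq_two (t := -1) (by decide) ?_
    rintro _ (rfl | rfl | rfl)
    exacts [⟨-1, 1, 0, 1, by decide⟩, ⟨1, 0, 1, 1, by decide⟩, ⟨-1, 5, 5, -15, by decide⟩]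
  · refine index_normGroup_intCast_eq_two (t := 3) (by decide) ?_
    rintro _ (rfl | rfl | rfl)
    exacts [⟨1, 3, 1, 1, by decide⟩, ⟨3, 4, 1, 1, by decide⟩, ⟨3, 5, 1, 1, by decide⟩]
  · refine index_normGroup_intCast_eq_two (t := -1) (by decide) ?_
    rintro _ (rfl | rfl | rfl)
    exacts [⟨-1, 1, 0, 1, by decide⟩, ⟨-1, 10, 1, -55, by decide⟩, ⟨-1, 5, 5, -55, by decide⟩]

theorem isHilbertField_padic_two : IsHilbertField ℚ_[2] := by
  intro d hd
  obtain ⟨i, j, k, s, hx⟩ := exists_square_class_two d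
  have h_cast : ((-1) ^ (i : ℕ) * 5 ^ (j : ℕ) * 2 ^ (k : ℕ) : ℚ_[2]) =
      ((-1) ^ (i : ℕ) * 5 ^ (j : ℕ) * 2 ^ (k : ℕ) : ℤ) := by push_cast; rfl
  rw [hx, normGroup_mul_sq, h_cast]
  have h_one : ¬ (i = 0 ∧ j = 0 ∧ k = 0) := by
    rintro ⟨rfl, rfl, rfl⟩
    exact hd ⟨s, Units.ext (by simpa [sq] using hx)⟩
  refine index_normGroup_padic_two _ ?_
  clear hx h_cast
  revert i j k
  decide

theorem isHilbertField_padic (p : ℕ) [Fact p.Prime] : IsHilbertField ℚ_[p] := by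
  by_cases hp : p = 2
  · subst hp
    exact isHilbertField_padic_two
  · exact isHilbertField_padic_of_ne_two hp

/-- Uniqueness of the rank-4 anisotropic quadratic form over a p-adic field:
any two anisotropic diagonal quadratic forms of rank 4 over ℚ_p are equivalent. -/
theorem padic_rank_four_anisotropic_unique
    (p : ℕ) [Fact p.Prime] (a b : Fin 4 → ℚ_[p])
    (ha : ∀ i, a i ≠ 0) (hb : ∀ i, b i ≠ 0)
    (haniso : ∀ x : Fin 4 → ℚ_[p], ∑ i, a i * (x i) ^ 2 = 0 → x = 0)
    (hbniso : ∀ x : Fin 4 → ℚ_[p], ∑ i, b i * (x i) ^ 2 = 0 → x = 0) :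
    ∃ T : (Fin 4 → ℚ_[p]) ≃ₗ[ℚ_[p]] (Fin 4 → ℚ_[p]),
      ∀ x : Fin 4 → ℚ_[p], ∑ i, b i * (T x i) ^ 2 = ∑ i, a i * (x i) ^ 2 := by
  exact equivalent_weightedSumSquares_iff.1 <|
    padic_rank_four_anisotropic_unique_general (isHilbertField_padic p) isSumSq_neg_one_padic
      (Module.finrank_fin_fun _) (Module.finrank_fin_fun _)
      (anisotropic_weightedSumSquares_iff.2 haniso) (anisotropic_weightedSumSquares_iff.2 hbniso)
end

section
/- Let p be an odd prime and let u be a unit of the ring ℤ_p of p-adic integers whose residue in 𝔽_p = ZMod p is not a square. Then the rank-4 diagonal quadratic form with coefficients (1, −u, −p, u·p) is anisotropic over ℚ_p: if x₀² − u x₁² − p x₂² + u p x₃² = 0 with x₀, x₁, x₂, x₃ ∈ ℚ_p, then x₀ = x₁ = x₂ = x₃ = 0. -/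
/-!
Springer's argument. Suppose a diagonal form with integral coefficients stays anisotropic over the
residue field. Dividing a vector `x` by its largest coordinate `xⱼ` gives an integral vector with
nonzero reduction, so the form takes a unit value there and the value at `x` has valuation
`v(xⱼ)²`. Multiplying such a form by `π`, where `v(π)` is not a square in the value group, moves its
nonzero values to other valuations, so they cannot cancel the values of a second such form.
Here both forms are `x² - u y²`, and `π = p`.
-/

open QuadraticMap

theorem map_weightedSumSquares {R S ι : Type*} [CommSemiring R] [CommSemiring S] [Fintype ι]
    (f : R →+* S) (w x : ι → R) :
    f (weightedSumSquares R w x) = weightedSumSquares S (f ∘ w) (f ∘ x) := by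
  simp

theorem anisotropic_weightedSumSquares_one_neg {F : Type*} [Field F] {a : F} (ha : ¬ IsSquare a) :
    (weightedSumSquares F ![1, -a]).Anisotropic := by
  intro x hx
  have hx : x 0 ^ 2 = a * x 1 ^ 2 := by
    simp only [weightedSumSquares_apply, Fin.sum_univ_two, Matrix.cons_val_zero,
      Matrix.cons_val_one, smul_eq_mul] at hx
    linear_combination hx
  have hx₁ : x 1 = 0 := by
    by_contra hne
    exact ha ⟨x 0 / x 1, by field_simp; exact hx.symm⟩
  have hx₀ : x 0 = 0 := by simpa [hx₁] using hx
  ext i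
  fin_cases i <;> assumption

section Valuation

variable {K Γ₀ : Type*} [Field K] [LinearOrderedCommGroupWithZero Γ₀] {v : Valuation K Γ₀}

theorem anisotropic_prod_smul_of_valuation_eq_sq {M N : Type*} [AddCommGroup M] [Module K M]
    [AddCommGroup N] [Module K N] {Q : QuadraticForm K M} {Q' : QuadraticForm K N}
    (hQ : Q.Anisotropic) (hQ' : Q'.Anisotropic) (hsq : ∀ x, ∃ z, v (Q x) = v z ^ 2)
    (hsq' : ∀ y, ∃ z, v (Q' y) = v z ^ 2) {π : K} (hπ : ∀ z, v z ^ 2 ≠ v π) :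
    (Q.prod (π • Q')).Anisotropic := by
  rintro ⟨x, y⟩ hxy
  have hxy : Q x = -(π * Q' y) := eq_neg_of_add_eq_zero_left (by simpa using hxy)
  obtain ⟨a, ha⟩ := hsq x
  obtain ⟨b, hb⟩ := hsq' y
  have hval : v a ^ 2 = v π * v b ^ 2 := by
    rw [← ha, ← hb, hxy, Valuation.map_neg, map_mul]
  have hb₀ : v b = 0 := by
    by_contra hne
    apply hπ (a / b)
    rw [map_div₀, div_pow, hval, mul_div_cancel_right₀ _ (pow_ne_zero 2 hne)]
  have hy : y = 0 := hQ' y (by simpa [hb₀] using hb)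
  have hx : x = 0 := hQ x (by simpa [hy] using hxy)
  rw [hx, hy, Prod.mk_zero_zero]

variable {O k ι : Type*} [CommRing O] [Algebra O K] [Field k] [Fintype ι]

theorem valuation_weightedSumSquares_eq_sq (hv : v.Integers O) (φ : O →+* k) [IsLocalHom φ]
    {w : ι → O} (hw : (weightedSumSquares k (φ ∘ w)).Anisotropic) {x : ι → K} {j : ι}
    (hj : ∀ i, v (x i) ≤ v (x j)) :
    v (weightedSumSquares K (algebraMap O K ∘ w) x) = v (x j) ^ 2 := by
  obtain hxj | hxj := eq_or_ne (x j) 0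
  · have hx : x = 0 := by
      ext i
      simpa [hxj] using hj i
    simp [hx]
  have hquot (i : ι) : v (x i / x j) ≤ 1 := by
    rw [map_div₀]
    exact div_le_one_of_le₀ (hj i) zero_le
  choose t ht using fun i ↦ hv.exists_of_le_one (hquot i)
  have htj : t j = 1 := hv.hom_inj (by rw [ht, div_self hxj, map_one])
  have hunit : IsUnit (weightedSumSquares O w t) := by
    refine isUnit_of_map_unit φ _ (IsUnit.mk0 _ fun h ↦ ?_)
    rw [map_weightedSumSquares] at h
    simpa [htj] using congr_fun (hw _ h) j
  have hx : x = x j • (algebraMap O K ∘ t) := by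
    ext i
    simp [ht, mul_div_cancel₀ _ hxj]
  conv_lhs => rw [hx]
  rw [QuadraticMap.map_smul, ← map_weightedSumSquares, smul_eq_mul, map_mul,
    hv.one_of_isUnit hunit, mul_one, map_mul, ← pow_two]

theorem exists_valuation_weightedSumSquares_eq_sq (hv : v.Integers O) (φ : O →+* k) [IsLocalHom φ]
    {w : ι → O} (hw : (weightedSumSquares k (φ ∘ w)).Anisotropic) (x : ι → K) :
    ∃ z, v (weightedSumSquares K (algebraMap O K ∘ w) x) = v z ^ 2 := by
  cases isEmpty_or_nonempty ι
  · exact ⟨0, by simp⟩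
  · obtain ⟨j, hj⟩ := Finite.exists_max fun i ↦ v (x i)
    exact ⟨x j, valuation_weightedSumSquares_eq_sq hv φ hw hj⟩

theorem anisotropic_weightedSumSquares_of_residue (hv : v.Integers O) (φ : O →+* k) [IsLocalHom φ]
    {w : ι → O} (hw : (weightedSumSquares k (φ ∘ w)).Anisotropic) :
    (weightedSumSquares K (algebraMap O K ∘ w)).Anisotropic := by
  intro x hx
  ext i
  have : Nonempty ι := ⟨i⟩
  obtain ⟨j, hj⟩ := Finite.exists_max fun i ↦ v (x i)
  have hxj : v (x j) = 0 := by
    simpa [hx] using (valuation_weightedSumSquares_eq_sq hv φ hw hj).symm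
  simpa [hxj] using hj i

theorem anisotropic_weightedSumSquares_prod_smul {κ : Type*} [Fintype κ] (hv : v.Integers O)
    (φ : O →+* k) [IsLocalHom φ] {w : ι → O} {w' : κ → O}
    (hw : (weightedSumSquares k (φ ∘ w)).Anisotropic)
    (hw' : (weightedSumSquares k (φ ∘ w')).Anisotropic) {π : K} (hπ : ∀ z, v z ^ 2 ≠ v π) :
    ((weightedSumSquares K (algebraMap O K ∘ w)).prod
      (π • weightedSumSquares K (algebraMap O K ∘ w'))).Anisotropic :=
  anisotropic_prod_smul_of_valuation_eq_sq
    (anisotropic_weightedSumSquares_of_residue hv φ hw)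
    (anisotropic_weightedSumSquares_of_residue hv φ hw')
    (exists_valuation_weightedSumSquares_eq_sq hv φ hw)
    (exists_valuation_weightedSumSquares_eq_sq hv φ hw') hπ

theorem padic_anisotropic_rank_four_general (hv : v.Integers O) (φ : O →+* k) [IsLocalHom φ]
    {u : O} (hu : ¬ IsSquare (φ u)) {π : K} (hπ : ∀ z, v z ^ 2 ≠ v π) {x₀ x₁ x₂ x₃ : K}
    (h : x₀ ^ 2 - algebraMap O K u * x₁ ^ 2 - π * x₂ ^ 2 + algebraMap O K u * π * x₃ ^ 2 = 0) :
    x₀ = 0 ∧ x₁ = 0 ∧ x₂ = 0 ∧ x₃ = 0 := by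
  have hw : (weightedSumSquares k (φ ∘ ![1, -u])).Anisotropic := by
    have hφ : φ ∘ ![1, -u] = ![1, -φ u] := by simp [funext_iff, Fin.forall_fin_two]
    rw [hφ]
    exact anisotropic_weightedSumSquares_one_neg hu
  have hπ' (z : K) : v z ^ 2 ≠ v (-π) := by
    rw [Valuation.map_neg]
    exact hπ z
  have hx : (![x₀, x₁], ![x₂, x₃]) = 0 := by
    refine anisotropic_weightedSumSquares_prod_smul hv φ hw hw hπ' _ ?_
    simp only [prod_apply, smul_apply, weightedSumSquares_apply, Fin.sum_univ_two,
      Function.comp_apply, Matrix.cons_val_zero, Matrix.cons_val_one, map_one, map_neg, smul_eq_mul]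
    linear_combination h
  simpa [and_assoc] using hx

end Valuation

section Padic

variable {p : ℕ} [Fact p.Prime]

theorem padicInt_integers : (NormedField.valuation (K := ℚ_[p])).Integers ℤ_[p] where
  hom_inj := Subtype.coe_injective
  map_le_one x := x.2
  exists_of_le_one x hx := ⟨⟨x, hx⟩, rfl⟩

instance isLocalHom_padicInt_toZMod : IsLocalHom (PadicInt.toZMod (p := p)) :=
  .of_surjective _ (ZMod.ringHom_surjective _)

theorem padic_norm_sq_ne_norm_p (z : ℚ_[p]) : ‖z‖ ^ 2 ≠ ‖(p : ℚ_[p])‖ := by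
  intro h
  have hp : 1 < (p : ℝ) := mod_cast (Fact.out : p.Prime).one_lt
  have hz : z ≠ 0 := by
    rintro rfl
    exact (zero_lt_one.trans hp).ne (by simpa using h)
  rw [Padic.norm_eq_zpow_neg_valuation hz, Padic.norm_p, ← zpow_natCast, ← zpow_mul,
    ← zpow_neg_one] at h
  have hval : -z.valuation * (2 : ℕ) = -1 := zpow_right_injective₀ (by positivity) hp.ne' h
  omega

end Padic

/-- For an odd prime p and a unit u of ℤ_p whose residue mod p is a non-square,
the form ⟨1, -u, -p, up⟩ is anisotropic over ℚ_p. -/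
theorem padic_anisotropic_rank_four
    (p : ℕ) [Fact p.Prime] (hp : p ≠ 2) (u : ℤ_[p]ˣ)
    (hu : ¬ IsSquare (PadicInt.toZMod ((u : ℤ_[p])) : ZMod p))
    (x₀ x₁ x₂ x₃ : ℚ_[p])
    (h : x₀ ^ 2 - ((u : ℤ_[p]) : ℚ_[p]) * x₁ ^ 2 - (p : ℚ_[p]) * x₂ ^ 2
        + ((u : ℤ_[p]) : ℚ_[p]) * (p : ℚ_[p]) * x₃ ^ 2 = 0) :
    x₀ = 0 ∧ x₁ = 0 ∧ x₂ = 0 ∧ x₃ = 0 :=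
  padic_anisotropic_rank_four_general padicInt_integers PadicInt.toZMod hu
    (fun z hz ↦ padic_norm_sq_ne_norm_p z (congrArg NNReal.toReal hz)) h
end

section
/- Let p be an odd prime, let r, s ≥ 1, let u : Fin r → ℤ_pˣ and v : Fin s → ℤ_pˣ be units of the ring of p-adic integers. The diagonal quadratic form ∑ i, (u i) * (x i)^2 + ∑ j, p * (v j) * (y j)^2 in the r + s variables (x, y) is anisotropic over ℚ_p if and only if both residue diagonal forms ∑ i, (ū i) * (x i)^2 and ∑ j, (v̄ j) * (y j)^2 are anisotropic over 𝔽_p = ZMod p, where ū i and v̄ j denote the images of u i and v j under the residue map ℤ_p → ZMod p. -/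
/-!
This is Springer's theorem on a form `q₁ ⊥ ϖ q₂` over the fraction field of a Henselian valuation
ring with uniformizer `ϖ`, for diagonal `q₁` and `q₂` with unit coefficients. A nontrivial zero of a
residue form lifts: fix a nonzero coordinate, lift the others arbitrarily and solve for the fixed
one by extracting a square root, which Hensel's lemma provides since `2` is invertible. Conversely,
scale a nontrivial zero of `q₁ ⊥ ϖ q₂` to an integral one having an entry equal to `1`. Reducing
modulo `ϖ` shows that `ϖ` divides the `q₁`-coordinates, so `ϖ²` divides the value of `q₁`; dividing
the equation by `ϖ` and reducing again shows that `ϖ` divides the `q₂`-coordinates too, a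
contradiction.
-/

open QuadraticMap (weightedSumSquares Anisotropic anisotropic_of_prod)

theorem henselianLocalRing_of_henselianRing_maximalIdeal (R : Type*) [CommRing R] [IsLocalRing R]
    [HenselianRing R (IsLocalRing.maximalIdeal R)] : HenselianLocalRing R where
  is_henselian f hf t ht hderiv :=
    HenselianRing.is_henselian f hf t ht (hderiv.map (Ideal.Quotient.mk _))

section Lifting

variable {R k ι : Type*} [CommRing R] [HenselianLocalRing R] [Field k] {φ : R →+* k}

theorem exists_sq_eq_and_map_eq (hφ : Function.Surjective φ) (h2 : (2 : k) ≠ 0)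
    {c : R} {x : k} (hx : x ≠ 0) (hc : φ c = x ^ 2) : ∃ z : R, z ^ 2 = c ∧ φ z = x := by
  obtain ⟨t, rfl⟩ := hφ x
  have := hφ.isLocalHom
  have eval_mem : (Polynomial.X ^ 2 - Polynomial.C c).eval t ∈ IsLocalRing.maximalIdeal R := by
    simp [← IsLocalRing.ker_eq_maximalIdeal φ hφ, RingHom.mem_ker, hc]
  have isUnit_deriv : IsUnit ((Polynomial.X ^ 2 - Polynomial.C c).derivative.eval t) := by
    refine IsUnit.of_map φ _ (IsUnit.mk0 _ ?_)
    simpa [one_add_one_eq_two, map_ofNat] using ⟨h2, hx⟩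
  obtain ⟨z, hz, hzt⟩ := HenselianLocalRing.is_henselian _
    (Polynomial.monic_X_pow_sub_C c two_ne_zero) t eval_mem isUnit_deriv
  refine ⟨z, by simpa [sub_eq_zero] using hz, ?_⟩
  rwa [← IsLocalRing.ker_eq_maximalIdeal φ hφ, RingHom.mem_ker, map_sub, sub_eq_zero] at hzt

variable [Fintype ι]

theorem exists_sum_mul_sq_eq_zero_and_map_eq (hφ : Function.Surjective φ)
    (h2 : (2 : k) ≠ 0) {a : ι → R} {x : ι → k} {j : ι} (ha : IsUnit (a j)) (hx : x j ≠ 0)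
    (h : ∑ i, φ (a i) * x i ^ 2 = 0) :
    ∃ z : ι → R, ∑ i, a i * z i ^ 2 = 0 ∧ ∀ i, φ (z i) = x i := by
  classical
  choose t ht using fun i ↦ hφ (x i)
  obtain ⟨b, hb⟩ := ha.exists_right_inv
  set rest : R := ∑ i ∈ Finset.univ.erase j, a i * t i ^ 2 with rest_def
  have map_rest : φ (a j) * x j ^ 2 + φ rest = 0 := by
    simpa [rest_def, ht, Finset.add_sum_erase] using h
  have map_b : φ (a j) * φ b = 1 := by rw [← map_mul, hb, map_one]
  obtain ⟨y, hy, hyx⟩ := exists_sq_eq_and_map_eq hφ h2 (c := -(b * rest)) hx <| by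
    rw [map_neg, map_mul]
    linear_combination -φ b * map_rest + x j ^ 2 * map_b
  refine ⟨Function.update t j y, ?_, fun i ↦ ?_⟩
  · have sum_erase : ∑ i ∈ Finset.univ.erase j, a i * Function.update t j y i ^ 2 = rest :=
      Finset.sum_congr rfl fun i hi ↦ by rw [Function.update_of_ne (Finset.ne_of_mem_erase hi)]
    rw [← Finset.add_sum_erase _ _ (Finset.mem_univ j), sum_erase, Function.update_self]
    linear_combination a j * hy - rest * hb
  · obtain rfl | hij := eq_or_ne i j
    · rwa [Function.update_self]
    · rw [Function.update_of_ne hij, ht]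

theorem anisotropic_residue_of_anisotropic {K : Type*} [CommRing K] [Algebra R K]
    [FaithfulSMul R K] (hφ : Function.Surjective φ) (h2 : (2 : k) ≠ 0) {a : ι → R}
    (ha : ∀ i, IsUnit (a i))
    (h : (weightedSumSquares K a).Anisotropic) :
    (weightedSumSquares k fun i ↦ φ (a i)).Anisotropic := by
  intro x hx
  by_contra hne
  obtain ⟨j, hj⟩ := Function.ne_iff.mp hne
  obtain ⟨z, hz, hzx⟩ := exists_sum_mul_sq_eq_zero_and_map_eq hφ h2 (ha j) hj <| by
    simpa [sq] using hx
  have map_z : (fun i ↦ algebraMap R K (z i)) = 0 := h _ <| by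
    simpa [sq, Algebra.smul_def] using congrArg (algebraMap R K) hz
  have z_eq_zero : z j = 0 := by simpa using congrFun map_z j
  exact hj (by simp [← hzx, z_eq_zero])

end Lifting

theorem dvd_of_sum_mul_sq_add_mul_sum_mul_sq_eq_zero {R k ι κ : Type*} [CommRing R] [IsDomain R]
    [CommRing k] [Fintype ι] [Fintype κ] {φ : R →+* k} {ϖ : R} (hϖ : ϖ ≠ 0)
    (hφ : ∀ z, φ z = 0 ↔ ϖ ∣ z) {a : ι → R} {b : κ → R}
    (ha : (weightedSumSquares k fun i ↦ φ (a i)).Anisotropic)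
    (hb : (weightedSumSquares k fun j ↦ φ (b j)).Anisotropic) {x : ι → R} {y : κ → R}
    (h : ∑ i, a i * x i ^ 2 + ϖ * ∑ j, b j * y j ^ 2 = 0) :
    (∀ i, ϖ ∣ x i) ∧ ∀ j, ϖ ∣ y j := by
  have map_ϖ : φ ϖ = 0 := (hφ ϖ).mpr dvd_rfl
  have dvd_x (i : ι) : ϖ ∣ x i := by
    have map_x : (fun i ↦ φ (x i)) = 0 := ha _ <| by
      simpa [sq, map_ϖ] using congrArg φ h
    exact (hφ _).mp (congrFun map_x i)
  refine ⟨dvd_x, fun j ↦ ?_⟩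
  choose w hw using dvd_x
  have h_div : ϖ * ∑ i, a i * w i ^ 2 + ∑ j, b j * y j ^ 2 = 0 := by
    have sum_x : ∑ i, a i * x i ^ 2 = ϖ ^ 2 * ∑ i, a i * w i ^ 2 := by
      rw [Finset.mul_sum]
      exact Finset.sum_congr rfl fun i _ ↦ by rw [hw]; ring
    refine (mul_eq_zero.mp ?_).resolve_left hϖ
    linear_combination h - sum_x
  have map_y : (fun j ↦ φ (y j)) = 0 := hb _ <| by
    simpa [sq, map_ϖ] using congrArg φ h_div
  exact (hφ _).mp (congrFun map_y j)

section ValuationRing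

variable {R K k ι κ : Type*} [CommRing R] [IsDomain R] [ValuationRing R]

theorem exists_eq_mul_algebraMap_and_eq_one [Field K] [Algebra R K] [IsFractionRing R K] [Finite ι]
    {w : ι → K} (hw : w ≠ 0) :
    ∃ c ≠ 0, ∃ z : ι → R, (∀ i, w i = c * algebraMap R K (z i)) ∧ ∃ i, z i = 1 := by
  obtain ⟨i, hi⟩ := Function.ne_iff.mp hw
  have : Nonempty ι := ⟨i⟩
  let ν := ValuationRing.valuation R K
  obtain ⟨j, hj⟩ := Finite.exists_max fun i ↦ ν (w i)
  have w_ne_zero : w j ≠ 0 :=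
    ν.ne_zero_iff.mp ((zero_lt_iff.mpr (ν.ne_zero_iff.mpr hi)).trans_le (hj i)).ne'
  have div_integral (i : ι) : ∃ z : R, algebraMap R K z = w i / w j := by
    rw [← ValuationRing.mem_integer_iff, Valuation.mem_integer_iff, map_div₀]
    exact div_le_one_of_le₀ (hj i) zero_le
  choose z hz using div_integral
  refine ⟨w j, w_ne_zero, z, fun i ↦ by rw [hz, mul_div_cancel₀ _ w_ne_zero], j, ?_⟩
  exact IsFractionRing.injective R K (by rw [hz, div_self w_ne_zero, map_one])

variable [Field k] {φ : R →+* k} {ϖ : R}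

theorem map_eq_zero_iff_irreducible_dvd (hφ : Function.Surjective φ) (hϖ : Irreducible ϖ) (z : R) :
    φ z = 0 ↔ ϖ ∣ z := by
  rw [← RingHom.mem_ker, IsLocalRing.ker_eq_maximalIdeal φ hφ, IsLocalRing.mem_maximalIdeal,
    mem_nonunits_iff]
  refine ⟨fun hz ↦ ?_, fun hdvd hz ↦ hϖ.not_isUnit (isUnit_of_dvd_unit hdvd hz)⟩
  obtain hdvd | hdvd := ValuationRing.dvd_total ϖ z
  · exact hdvd
  · exact ((hϖ.dvd_iff.mp hdvd).resolve_left hz).dvd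

variable [Field K] [Algebra R K] [IsFractionRing R K] [Fintype ι] [Fintype κ]

theorem anisotropic_prod_of_anisotropic_residues (hφ : Function.Surjective φ) (hϖ : Irreducible ϖ)
    {a : ι → R} {b : κ → R}
    (ha : (weightedSumSquares k fun i ↦ φ (a i)).Anisotropic)
    (hb : (weightedSumSquares k fun j ↦ φ (b j)).Anisotropic) :
    ((weightedSumSquares K a).prod (ϖ • weightedSumSquares K b)).Anisotropic := by
  rintro ⟨x, y⟩ hxy
  suffices Sum.elim x y = 0 from
    Prod.ext (funext fun i ↦ congrFun this (.inl i)) (funext fun j ↦ congrFun this (.inr j))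
  by_contra hne
  obtain ⟨c, hc, z, hz, l, hl⟩ := exists_eq_mul_algebraMap_and_eq_one (R := R) hne
  have primitive_zero :
      ((weightedSumSquares K a).prod (ϖ • weightedSumSquares K b))
        (fun i ↦ algebraMap R K (z (.inl i)), fun j ↦ algebraMap R K (z (.inr j))) = 0 := by
    have hxyz : (x, y) =
        c • (fun i ↦ algebraMap R K (z (.inl i)), fun j ↦ algebraMap R K (z (.inr j))) :=
      Prod.ext (funext fun i ↦ hz (.inl i)) (funext fun j ↦ hz (.inr j))
    rw [hxyz, QuadraticMap.map_smul] at hxy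
    exact (mul_eq_zero.mp hxy).resolve_left (mul_self_ne_zero.mpr hc)
  have integral_zero : ∑ i, a i * z (.inl i) ^ 2 + ϖ * ∑ j, b j * z (.inr j) ^ 2 = 0 :=
    IsFractionRing.injective R K (by simpa [sq, Algebra.smul_def] using primitive_zero)
  obtain ⟨dvd_inl, dvd_inr⟩ := dvd_of_sum_mul_sq_add_mul_sum_mul_sq_eq_zero hϖ.ne_zero
    (map_eq_zero_iff_irreducible_dvd hφ hϖ) ha hb integral_zero
  have dvd_one : ϖ ∣ 1 := hl ▸ Sum.rec dvd_inl dvd_inr l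
  exact hϖ.not_isUnit (isUnit_of_dvd_one dvd_one)

end ValuationRing

theorem padic_mixed_form_anisotropic_iff_residues_general {R K k ι κ : Type*} [CommRing R]
    [IsDomain R] [ValuationRing R] [HenselianLocalRing R] [Field K] [Algebra R K]
    [IsFractionRing R K] [Field k] [Fintype ι] [Fintype κ] {φ : R →+* k}
    (hφ : Function.Surjective φ) (h2 : (2 : k) ≠ 0) {ϖ : R} (hϖ : Irreducible ϖ)
    {a : ι → R} {b : κ → R} (ha : ∀ i, IsUnit (a i)) (hb : ∀ j, IsUnit (b j)) :
    ((weightedSumSquares K a).prod (ϖ • weightedSumSquares K b)).Anisotropic ↔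
      (weightedSumSquares k fun i ↦ φ (a i)).Anisotropic ∧
        (weightedSumSquares k fun j ↦ φ (b j)).Anisotropic := by
  refine ⟨fun h ↦ ?_, fun h ↦ anisotropic_prod_of_anisotropic_residues hφ hϖ h.1 h.2⟩
  obtain ⟨h_a, h_ϖb⟩ := anisotropic_of_prod h
  refine ⟨anisotropic_residue_of_anisotropic hφ h2 ha h_a,
    anisotropic_residue_of_anisotropic hφ h2 hb fun y hy ↦ h_ϖb y ?_⟩
  rw [smul_apply, hy, smul_zero]

/-- For an odd prime p and units u₁,…,u_r, v₁,…,v_s of ℤ_p, the diagonal form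
∑ uᵢ xᵢ² + ∑ p vⱼ yⱼ² is anisotropic over ℚ_p if and only if both residue forms
∑ ūᵢ xᵢ² and ∑ v̄ⱼ yⱼ² are anisotropic over 𝔽_p. -/
theorem padic_mixed_form_anisotropic_iff_residues
    (p : ℕ) [Fact p.Prime] (hp : p ≠ 2) (r s : ℕ) (hr : 1 ≤ r) (hs : 1 ≤ s)
    (u : Fin r → ℤ_[p]ˣ) (v : Fin s → ℤ_[p]ˣ) :
    (∀ (x : Fin r → ℚ_[p]) (y : Fin s → ℚ_[p]),
        (∑ i, ((u i : ℤ_[p]) : ℚ_[p]) * (x i) ^ 2)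
          + (∑ j, (p : ℚ_[p]) * ((v j : ℤ_[p]) : ℚ_[p]) * (y j) ^ 2) = 0 →
        x = 0 ∧ y = 0) ↔
      ((∀ x : Fin r → ZMod p,
          ∑ i, PadicInt.toZMod ((u i : ℤ_[p])) * (x i) ^ 2 = 0 → x = 0) ∧
        (∀ y : Fin s → ZMod p,
          ∑ j, PadicInt.toZMod ((v j : ℤ_[p])) * (y j) ^ 2 = 0 → y = 0)) := by
  have := henselianLocalRing_of_henselianRing_maximalIdeal ℤ_[p]
  have h2 : (2 : ZMod p) ≠ 0 := Ring.two_ne_zero (by rwa [ZMod.ringChar_zmod_n])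
  simpa [Anisotropic, Algebra.smul_def, sq, Finset.mul_sum, mul_assoc] using
    padic_mixed_form_anisotropic_iff_residues_general (K := ℚ_[p])
      (ZMod.ringHom_surjective PadicInt.toZMod) h2 PadicInt.irreducible_p
      (fun i ↦ (u i).isUnit) (fun j ↦ (v j).isUnit)
end

section
/- Let p be an odd prime, let β ∈ ZMod p be a nonzero non-square, and let n ≥ 1. Then every diagonal quadratic form ∑ i, a i * (x i)^2 over ZMod p with all coefficients a i ≠ 0 is equivalent to exactly one of the two forms x_1² + ⋯ + x_n² and x_1² + ⋯ + x_{n−1}² + β x_n²; in particular these two forms of rank n are not equivalent to each other. -/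
/-!
If `a u² + b v² = 1`, then `(u, v)` and `(-b v, a u)` form an orthogonal basis of `⟨a, b⟩`, so
`⟨a, b⟩ ≃ ⟨ab, 1⟩`. Over a finite field of odd characteristic every nondegenerate binary form
represents `1`, because `x ↦ a x²` and `x ↦ 1 - b x²` both take more than half of all values. So a
nondegenerate diagonal form reduces to `⟨d, 1, …, 1⟩`, where `d` is the product of its coefficients.
The discriminant `d` is an invariant up to squares, and the nonzero squares of a finite field of odd
characteristic have index two in the multiplicative group.
-/

open QuadraticMap QuadraticForm

section CommSemiring

variable {R ι κ : Type*} [CommSemiring R] [Fintype ι] [Fintype κ]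

theorem weightedSumSquares_equivalent_iff_exists_linearEquiv {w : ι → R} {w' : κ → R} :
    Equivalent (weightedSumSquares R w) (weightedSumSquares R w') ↔
      ∃ φ : (ι → R) ≃ₗ[R] (κ → R), ∀ x, ∑ i, w' i * (φ x i) ^ 2 = ∑ i, w i * (x i) ^ 2 := by
  have weightedSumSquares_eq_iff (x : ι → R) (y : κ → R) :
      weightedSumSquares R w' y = weightedSumSquares R w x ↔
        ∑ i, w' i * y i ^ 2 = ∑ i, w i * x i ^ 2 := by
    simp only [weightedSumSquares_apply, smul_eq_mul, pow_two]
  exact ⟨fun ⟨φ⟩ ↦ ⟨φ.toLinearEquiv, fun x ↦ (weightedSumSquares_eq_iff _ _).1 (φ.map_app x)⟩,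
    fun ⟨φ, hφ⟩ ↦ ⟨⟨φ, fun x ↦ (weightedSumSquares_eq_iff _ _).2 (hφ x)⟩⟩⟩

theorem weightedSumSquares_equivalent_comp_equiv (w : ι → R) (e : κ ≃ ι) :
    Equivalent (weightedSumSquares R w) (weightedSumSquares R (w ∘ e)) :=
  ⟨⟨LinearEquiv.funCongrLeft R R e, fun x ↦ by
    simpa [weightedSumSquares_apply] using e.sum_comp fun i ↦ w i * (x i * x i)⟩⟩

theorem weightedSumSquares_cons_equivalent_prod {n : ℕ} (a : R) (w : Fin n → R) :
    Equivalent (weightedSumSquares R (Fin.cons a w : Fin (n + 1) → R))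
      ((a • sq (R := R)).prod (weightedSumSquares R w)) :=
  .symm ⟨⟨Fin.consLinearEquiv R fun _ ↦ R, fun x ↦ by
    simp [weightedSumSquares_apply, Fin.sum_univ_succ, Fin.consLinearEquiv]⟩⟩

theorem weightedSumSquares_cons_equivalent_cons {n : ℕ} (a : R) {w w' : Fin n → R}
    (h : Equivalent (weightedSumSquares R w) (weightedSumSquares R w')) :
    Equivalent (weightedSumSquares R (Fin.cons a w : Fin (n + 1) → R))
      (weightedSumSquares R (Fin.cons a w' : Fin (n + 1) → R)) :=
  (weightedSumSquares_cons_equivalent_prod a w).trans <|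
    ((Equivalent.refl _).prod h).trans (weightedSumSquares_cons_equivalent_prod a w').symm

theorem prod_assoc_equivalent {M₁ M₂ M₃ N : Type*} [AddCommMonoid M₁] [AddCommMonoid M₂]
    [AddCommMonoid M₃] [AddCommMonoid N] [Module R M₁] [Module R M₂] [Module R M₃] [Module R N]
    (Q₁ : QuadraticMap R M₁ N) (Q₂ : QuadraticMap R M₂ N) (Q₃ : QuadraticMap R M₃ N) :
    Equivalent ((Q₁.prod Q₂).prod Q₃) (Q₁.prod (Q₂.prod Q₃)) :=
  ⟨⟨LinearEquiv.prodAssoc R M₁ M₂ M₃, fun x ↦ by simp [add_assoc]⟩⟩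

theorem weightedSumSquares_cons_cons_equivalent_prod {n : ℕ} (a b : R) (w : Fin n → R) :
    Equivalent (weightedSumSquares R (Fin.cons a (Fin.cons b w) : Fin (n + 2) → R))
      (((a • sq (R := R)).prod (b • sq (R := R))).prod (weightedSumSquares R w)) :=
  (weightedSumSquares_cons_equivalent_prod a _).trans <|
    ((Equivalent.refl _).prod (weightedSumSquares_cons_equivalent_prod b w)).trans
      (prod_assoc_equivalent ..).symm

theorem weightedSumSquares_cons_equivalent_cons_of_isSquare_mul {n : ℕ} {a b : R} (ha : IsUnit a)
    (hb : IsUnit b) (h : IsSquare (a * b)) (w : Fin n → R) :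
    Equivalent (weightedSumSquares R (Fin.cons a w : Fin (n + 1) → R))
      (weightedSumSquares R (Fin.cons b w : Fin (n + 1) → R)) := by
  obtain ⟨c, hc⟩ := h
  obtain ⟨c, rfl⟩ : IsUnit c := isUnit_of_mul_isUnit_left (hc ▸ ha.mul hb)
  obtain ⟨a, rfl⟩ := ha
  obtain ⟨b, rfl⟩ := hb
  have hscale : b * (c * b⁻¹) ^ 2 = a := by
    have hc' : a * b = c * c := Units.ext hc
    rw [mul_pow, pow_two c, ← hc', mul_comm b]
    group
  refine ⟨isometryEquivWeightedSumSquaresWeightedSumSquares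
    (Fin.cons (c * b⁻¹) 1 : Fin (n + 1) → Rˣ) (Fin.cases ?_ fun i ↦ by simp)⟩
  simpa using congrArg Units.val hscale

end CommSemiring

section CommRing

variable {R ι : Type*} [CommRing R] [Fintype ι]

theorem prod_smul_sq_equivalent_of_represents_one {a b u v : R} (h : a * u ^ 2 + b * v ^ 2 = 1) :
    Equivalent ((a • sq (R := R)).prod (b • sq (R := R)))
      (((a * b) • sq (R := R)).prod (sq (R := R) (A := R))) := by
  refine ⟨{
    toFun := fun x ↦ (u * x.2 - v * x.1, a * u * x.1 + b * v * x.2)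
    invFun := fun y ↦ (u * y.2 - b * v * y.1, a * u * y.1 + v * y.2)
    map_add' := fun x y ↦ by ext <;> simp <;> ring
    map_smul' := fun c x ↦ by ext <;> simp <;> ring
    left_inv := fun x ↦ ?_
    right_inv := fun y ↦ ?_
    map_app' := fun x ↦ ?_ }⟩
  · ext
    · linear_combination x.1 * h
    · linear_combination x.2 * h
  · ext
    · linear_combination y.1 * h
    · linear_combination y.2 * h
  · simp only [prod_apply, smul_apply, sq_apply, smul_eq_mul]
    linear_combination (a * x.1 ^ 2 + b * x.2 ^ 2) * h

theorem weightedSumSquares_cons_cons_equivalent_of_represents_one {n : ℕ} {a b u v : R}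
    (h : a * u ^ 2 + b * v ^ 2 = 1) (w : Fin n → R) :
    Equivalent (weightedSumSquares R (Fin.cons a (Fin.cons b w) : Fin (n + 2) → R))
      (weightedSumSquares R (Fin.cons (a * b) (Fin.cons 1 w) : Fin (n + 2) → R)) := by
  refine (weightedSumSquares_cons_cons_equivalent_prod a b w).trans <|
    .trans ?_ (weightedSumSquares_cons_cons_equivalent_prod (a * b) 1 w).symm
  rw [one_smul]
  exact (prod_smul_sq_equivalent_of_represents_one h).prod (.refl _)

theorem associated_weightedSumSquares_apply [Invertible (2 : R)] (w x y : ι → R) :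
    associated (weightedSumSquares R w) x y = ∑ i, w i * (x i * y i) := by
  simp [weightedSumSquares, proj]

theorem discr'_weightedSumSquares [DecidableEq ι] [Invertible (2 : R)] (w : ι → R) :
    discr' (weightedSumSquares R w) = ∏ i, w i := by
  have toMatrix'_eq : toMatrix' (weightedSumSquares R w) = Matrix.diagonal w := by
    ext i j
    rcases eq_or_ne i j with rfl | hij
    · simp [toMatrix', LinearMap.toMatrix₂'_apply, associated_weightedSumSquares_apply,
        Pi.single_apply]
    · simp [toMatrix', LinearMap.toMatrix₂'_apply, associated_weightedSumSquares_apply,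
        Pi.single_apply, hij, hij.symm]
  rw [discr', toMatrix'_eq, Matrix.det_diagonal]

theorem exists_discr'_eq_sq_mul_discr'_of_equivalent [DecidableEq ι] [Invertible (2 : R)]
    {Q Q' : QuadraticForm R (ι → R)} (h : Q.Equivalent Q') :
    ∃ u : Rˣ, discr' Q = u ^ 2 * discr' Q' := by
  obtain ⟨φ⟩ := h
  have hQ : Q'.comp (φ.toLinearEquiv : (ι → R) →ₗ[R] ι → R) = Q := by
    ext x
    exact φ.map_app x
  refine ⟨LinearEquiv.det φ.toLinearEquiv, ?_⟩
  rw [LinearEquiv.coe_det, pow_two, ← LinearMap.det_toMatrix', ← discr'_comp, hQ]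

theorem isSquare_prod_mul_prod_of_weightedSumSquares_equivalent [Invertible (2 : R)]
    {w w' : ι → R} (h : Equivalent (weightedSumSquares R w) (weightedSumSquares R w')) :
    IsSquare ((∏ i, w i) * ∏ i, w' i) := by
  classical
  obtain ⟨u, hu⟩ := exists_discr'_eq_sq_mul_discr'_of_equivalent h
  rw [discr'_weightedSumSquares, discr'_weightedSumSquares] at hu
  exact ⟨u * ∏ i, w' i, by rw [hu]; ring⟩

/-- Every binary diagonal form `⟨a, b⟩` with unit coefficients represents `1`. This is what reduces
diagonal forms with unit coefficients to `⟨d, 1, …, 1⟩`. -/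
def UnitBinaryFormsRepresentOne (R : Type*) [CommRing R] : Prop :=
  ∀ ⦃a b : R⦄, IsUnit a → IsUnit b → ∃ u v : R, a * u ^ 2 + b * v ^ 2 = 1

theorem UnitBinaryFormsRepresentOne.weightedSumSquares_equivalent_cons_prod_one
    (hR : UnitBinaryFormsRepresentOne R) {n : ℕ} {w : Fin (n + 1) → R} (hw : ∀ i, IsUnit (w i)) :
    Equivalent (weightedSumSquares R w)
      (weightedSumSquares R (Fin.cons (∏ i, w i) 1 : Fin (n + 1) → R)) := by
  induction n with
  | zero =>
    have w_eq : w = Fin.cons (∏ i, w i) 1 := by ext i; fin_cases i; simp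
    rw [← w_eq]
  | succ n ih =>
    obtain ⟨u, v, huv⟩ := hR (hw 0) (IsUnit.prod_univ_iff.2 fun i : Fin (n + 1) ↦ hw i.succ)
    have h_tail := weightedSumSquares_cons_equivalent_cons (w 0)
      (ih (w := Fin.tail w) fun i ↦ hw i.succ)
    have h_merge := weightedSumSquares_cons_cons_equivalent_of_represents_one huv (1 : Fin n → R)
    have h_ones : (Fin.cons 1 1 : Fin (n + 1) → R) = 1 := Fin.cons_self_tail 1
    rw [Fin.cons_self_tail] at h_tail
    rw [h_ones, ← Fin.prod_univ_succ] at h_merge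
    exact h_tail.trans h_merge

theorem UnitBinaryFormsRepresentOne.weightedSumSquares_equivalent_iff
    [Invertible (2 : R)] (hR : UnitBinaryFormsRepresentOne R) {w w' : ι → R}
    (hw : ∀ i, IsUnit (w i)) (hw' : ∀ i, IsUnit (w' i)) :
    Equivalent (weightedSumSquares R w) (weightedSumSquares R w') ↔
      IsSquare ((∏ i, w i) * ∏ i, w' i) := by
  refine ⟨isSquare_prod_mul_prod_of_weightedSumSquares_equivalent, fun h ↦ ?_⟩
  obtain ⟨n, ⟨e⟩⟩ := Finite.exists_equiv_fin ι
  rcases n with _ | n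
  · have := e.isEmpty
    rw [Subsingleton.elim w w']
  have h_normal_form {v : ι → R} (hv : ∀ i, IsUnit (v i)) : Equivalent (weightedSumSquares R v)
      (weightedSumSquares R (Fin.cons (∏ i, v i) 1 : Fin (n + 1) → R)) := by
    rw [← e.symm.prod_comp v]
    exact (weightedSumSquares_equivalent_comp_equiv v e.symm).trans
      (hR.weightedSumSquares_equivalent_cons_prod_one fun i ↦ hv (e.symm i))
  have h_discr := weightedSumSquares_cons_equivalent_cons_of_isSquare_mul
    (IsUnit.prod_univ_iff.2 hw) (IsUnit.prod_univ_iff.2 hw') h (1 : Fin n → R)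
  exact ((h_normal_form hw).trans h_discr).trans (h_normal_form hw').symm

end CommRing

section FiniteField

variable {F ι : Type*} [Field F] [Finite F] [Fintype ι]

open Polynomial in
theorem unitBinaryFormsRepresentOne_of_ringChar_ne_two (hF : ringChar F ≠ 2) :
    UnitBinaryFormsRepresentOne F := by
  intro a b ha hb
  have := Fintype.ofFinite F
  have := ha.ne_zero
  have := hb.ne_zero
  obtain ⟨u, v, h⟩ := FiniteField.exists_root_sum_quadratic (f := C a * X ^ 2)
    (g := C b * X ^ 2 - C 1) (by compute_degree!) (by compute_degree!)
    (FiniteField.odd_card_of_char_ne_two hF)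
  exact ⟨u, v, by simpa [← add_sub_assoc, sub_eq_zero] using h⟩

theorem isSquare_mul_iff_not_isSquare {a b : F} (ha : a ≠ 0) (hb : ¬IsSquare b) :
    IsSquare (a * b) ↔ ¬IsSquare a := by
  classical
  have := Fintype.ofFinite F
  have hb0 : b ≠ 0 := by rintro rfl; exact hb .zero
  rw [← quadraticChar_one_iff_isSquare (mul_ne_zero ha hb0),
    ← quadraticChar_neg_one_iff_not_isSquare, map_mul,
    quadraticChar_neg_one_iff_not_isSquare.2 hb]
  lia

theorem weightedSumSquares_equivalent_iff_isSquare_of_ringChar_ne_two (hF : ringChar F ≠ 2)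
    {w w' : ι → F} (hw : ∀ i, w i ≠ 0) (hw' : ∀ i, w' i ≠ 0) :
    Equivalent (weightedSumSquares F w) (weightedSumSquares F w') ↔
      IsSquare ((∏ i, w i) * ∏ i, w' i) := by
  have := invertibleOfNonzero (Ring.two_ne_zero hF)
  exact (unitBinaryFormsRepresentOne_of_ringChar_ne_two hF).weightedSumSquares_equivalent_iff
    (fun i ↦ (hw i).isUnit) (fun i ↦ (hw' i).isUnit)

theorem zmod_diagonal_form_classification_general [DecidableEq ι] {β : F} (hβ : ¬IsSquare β) (j : ι)
    {a : ι → F} (ha : ∀ i, a i ≠ 0) :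
    Xor
      (∃ φ : (ι → F) ≃ₗ[F] (ι → F), ∀ x, ∑ i, (φ x i) ^ 2 = ∑ i, a i * (x i) ^ 2)
      (∃ φ : (ι → F) ≃ₗ[F] (ι → F),
        ∀ x, ∑ i, (if i = j then β else 1) * (φ x i) ^ 2 = ∑ i, a i * (x i) ^ 2) ∧
    ¬ ∃ φ : (ι → F) ≃ₗ[F] (ι → F),
        ∀ x, ∑ i, (if i = j then β else 1) * (φ x i) ^ 2 = ∑ i, (x i) ^ 2 := by
  have hF : ringChar F ≠ 2 := fun h ↦ hβ (FiniteField.isSquare_of_char_two h β)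
  have h_one (_ : ι) : (1 : F) ≠ 0 := one_ne_zero
  have h_ite (i : ι) : (if i = j then β else 1) ≠ 0 := by
    split_ifs
    exacts [fun h ↦ hβ (h ▸ .zero), one_ne_zero]
  have hone := weightedSumSquares_equivalent_iff_isSquare_of_ringChar_ne_two hF ha h_one
  have hbeta := weightedSumSquares_equivalent_iff_isSquare_of_ringChar_ne_two hF ha h_ite
  have honebeta := weightedSumSquares_equivalent_iff_isSquare_of_ringChar_ne_two hF h_one h_ite
  simp only [weightedSumSquares_equivalent_iff_exists_linearEquiv, one_mul, mul_one,
    Finset.prod_const_one, Fintype.prod_ite_eq'] at hone hbeta honebeta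
  rw [hone, hbeta, honebeta,
    isSquare_mul_iff_not_isSquare (Finset.prod_ne_zero_iff.2 fun i _ ↦ ha i) hβ]
  exact ⟨xor_not_right.2 .rfl, hβ⟩

end FiniteField

/-- Over 𝔽_p (p an odd prime), every nondegenerate diagonal quadratic form of rank n
is equivalent to exactly one of `x₁² + ⋯ + xₙ²` and `x₁² + ⋯ + x_{n-1}² + β xₙ²`,
where β is a fixed nonzero non-square; in particular these two forms are not
equivalent to each other. -/
theorem zmod_diagonal_form_classification
    (p : ℕ) [Fact p.Prime] (hp : p ≠ 2) (β : ZMod p) (hβ0 : β ≠ 0) (hβ : ¬ IsSquare β)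
    (n : ℕ) (hn : 1 ≤ n) (a : Fin n → ZMod p) (ha : ∀ i, a i ≠ 0) :
    (Xor'
      (∃ φ : (Fin n → ZMod p) ≃ₗ[ZMod p] (Fin n → ZMod p),
        ∀ x, ∑ i : Fin n, (φ x i) ^ 2 = ∑ i : Fin n, a i * (x i) ^ 2)
      (∃ φ : (Fin n → ZMod p) ≃ₗ[ZMod p] (Fin n → ZMod p),
        ∀ x, ∑ i : Fin n, (if (i : ℕ) = n - 1 then β else 1) * (φ x i) ^ 2
          = ∑ i : Fin n, a i * (x i) ^ 2)) ∧
    ¬ (∃ φ : (Fin n → ZMod p) ≃ₗ[ZMod p] (Fin n → ZMod p),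
        ∀ x, ∑ i : Fin n, (if (i : ℕ) = n - 1 then β else 1) * (φ x i) ^ 2
          = ∑ i : Fin n, (x i) ^ 2) := by
  have h := zmod_diagonal_form_classification_general hβ (⟨n - 1, by lia⟩ : Fin n) ha
  simpa only [Fin.ext_iff] using! h
end

section
/- Let p be a prime. There exist x, y ∈ ℚ_p with x² + y² = −1 if and only if p is odd. (Equivalently, the Hilbert symbol (−1, −1)_p equals 1 for odd p and equals −1 for p = 2.) -/
/-!
The equation `a ^ n + b ^ n + c ^ n = 0` is homogeneous, so over a valuation ring a nontrivial
solution can be divided by the coordinate that divides the other two. Hence `-1` is a sum of two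
`n`-th powers in `ℚ_[p]` if and only if it is one in `ℤ_[p]`. For `p = 2` and `n = 2` this fails
modulo `4`. For odd `p`, counting squares writes `-1` as a sum of two squares modulo `p`; one of
them is nonzero modulo `p`, and Hensel's lemma adjusts its root to a solution in `ℤ_[p]`.
-/

open IsLocalRing Polynomial

section ValuationRing

variable {R : Type*} [CommRing R] [IsDomain R] [ValuationRing R]

theorem exists_pow_add_pow_eq_neg_one_of_pow_add_pow_add_pow_eq_zero {n : ℕ} {a b c : R}
    (hc : c ≠ 0) (h : a ^ n + b ^ n + c ^ n = 0) : ∃ x y : R, x ^ n + y ^ n = -1 := by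
  wlog hab : a ∣ b generalizing a b
  · exact this (by rwa [add_comm (b ^ n)]) ((ValuationRing.dvd_total a b).resolve_left hab)
  obtain ⟨y, rfl⟩ := hab
  rcases ValuationRing.dvd_total a c with ⟨z, rfl⟩ | ⟨x, rfl⟩
  · have ha : a ^ n ≠ 0 := pow_ne_zero n (left_ne_zero_of_mul hc)
    exact ⟨y, z, mul_left_cancel₀ ha (by linear_combination h)⟩
  · exact ⟨x, x * y, mul_left_cancel₀ (pow_ne_zero n hc) (by linear_combination h)⟩

variable (R) in
theorem exists_pow_add_pow_eq_neg_one_iff_of_isFractionRing (K : Type*) [Field K] [Algebra R K]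
    [IsFractionRing R K] (n : ℕ) :
    (∃ x y : K, x ^ n + y ^ n = -1) ↔ ∃ x y : R, x ^ n + y ^ n = -1 := by
  constructor
  · rintro ⟨x, y, h⟩
    obtain ⟨a, s, hs, rfl⟩ := IsFractionRing.div_surjective (A := R) x
    obtain ⟨b, t, ht, rfl⟩ := IsFractionRing.div_surjective (A := R) y
    have hs' : algebraMap R K s ≠ 0 := IsFractionRing.to_map_ne_zero_of_mem_nonZeroDivisors hs
    have ht' : algebraMap R K t ≠ 0 := IsFractionRing.to_map_ne_zero_of_mem_nonZeroDivisors ht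
    have hst : s * t ≠ 0 := nonZeroDivisors.ne_zero (mul_mem hs ht)
    refine exists_pow_add_pow_eq_neg_one_of_pow_add_pow_add_pow_eq_zero
      (a := a * t) (b := b * s) hst (IsFractionRing.injective R K ?_)
    simp only [map_add, map_mul, map_pow, map_zero]
    rw [div_pow, div_pow, div_add_div _ _ (pow_ne_zero n hs') (pow_ne_zero n ht'),
      div_eq_iff (mul_ne_zero (pow_ne_zero n hs') (pow_ne_zero n ht'))] at h
    linear_combination h
  · rintro ⟨x, y, h⟩
    exact ⟨algebraMap R K x, algebraMap R K y, by simp [← map_pow, ← map_add, h]⟩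

end ValuationRing

theorem exists_pow_eq_of_pow_sub_mem {R : Type*} [CommRing R] {I : Ideal R} [HenselianRing R I]
    {n : ℕ} (hn : IsUnit (n : R)) {a c : R} (ha : IsUnit a) (hac : a ^ n - c ∈ I) :
    ∃ z : R, z ^ n = c := by
  nontriviality R
  have hn0 : n ≠ 0 := by
    rintro rfl
    simp at hn
  have hderiv : IsUnit ((X ^ n - C c).derivative.eval a) := by
    simpa [derivative_X_pow] using hn.mul (ha.pow (n - 1))
  obtain ⟨z, hz, -⟩ := HenselianRing.is_henselian (X ^ n - C c) (monic_X_pow_sub_C c hn0) a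
    (by simpa using hac) (hderiv.map (Ideal.Quotient.mk I))
  exact ⟨z, by simpa [sub_eq_zero] using hz⟩

theorem exists_sq_add_sq_eq_of_finite {F : Type*} [Field F] [Finite F] (c : F) :
    ∃ a b : F, a ^ 2 + b ^ 2 = c := by
  have := Fintype.ofFinite F
  by_cases hF : ringChar F = 2
  · obtain ⟨a, rfl⟩ := FiniteField.isSquare_of_char_two hF c
    exact ⟨a, 0, by ring⟩
  · obtain ⟨a, b, hab⟩ := FiniteField.exists_root_sum_quadratic (degree_X_pow 2)
      (degree_X_pow_sub_C two_pos c) (FiniteField.odd_card_of_char_ne_two hF)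
    refine ⟨a, b, ?_⟩
    simp only [eval_pow, eval_X, eval_sub, eval_C] at hab
    linear_combination hab

theorem exists_sq_add_sq_eq_of_isUnit {R : Type*} [CommRing R] [IsLocalRing R]
    [HenselianRing R (maximalIdeal R)] [Finite (ResidueField R)] (h2 : IsUnit (2 : R)) {u : R}
    (hu : IsUnit u) : ∃ x y : R, x ^ 2 + y ^ 2 = u := by
  obtain ⟨a, b, hab⟩ := exists_sq_add_sq_eq_of_finite (residue R u)
  wlog ha : a ≠ 0 generalizing a b
  · have hb : b ≠ 0 := by
      rintro rfl
      refine (residue_ne_zero_iff_isUnit u).mpr hu ?_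
      simp [← hab, not_not.mp ha]
    exact this b a (by rwa [add_comm]) hb
  obtain ⟨x₀, rfl⟩ := residue_surjective a
  obtain ⟨y, rfl⟩ := residue_surjective b
  have hx₀ : x₀ ^ 2 - (u - y ^ 2) ∈ maximalIdeal R := by
    rw [← residue_eq_zero_iff]
    simp [← hab]
  obtain ⟨x, hx⟩ := exists_pow_eq_of_pow_sub_mem (n := 2) (by exact_mod_cast h2)
    ((residue_ne_zero_iff_isUnit x₀).mp ha) hx₀
  exact ⟨x, y, by rw [hx, sub_add_cancel]⟩

theorem sq_add_sq_ne_neg_one_of_ringHom_zmod_four {R : Type*} [Ring R] (f : R →+* ZMod 4)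
    (x y : R) : x ^ 2 + y ^ 2 ≠ -1 := by
  have mod_four : ∀ a b : ZMod 4, a ^ 2 + b ^ 2 ≠ -1 := by decide
  intro h
  exact mod_four (f x) (f y) (by simp [← map_pow, ← map_add, h])

/-- −1 is a sum of two squares in ℚ_p if and only if p is odd; equivalently the
Hilbert symbol (−1, −1)_p equals 1 exactly for odd primes p. -/
theorem padic_neg_one_sum_two_squares_iff_odd
    (p : ℕ) [Fact p.Prime] :
    (∃ x y : ℚ_[p], x ^ 2 + y ^ 2 = -1) ↔ p ≠ 2 := by
  rw [exists_pow_add_pow_eq_neg_one_iff_of_isFractionRing ℤ_[p] ℚ_[p]]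
  constructor
  · rintro ⟨x, y, h⟩ rfl
    exact sq_add_sq_ne_neg_one_of_ringHom_zmod_four (PadicInt.toZModPow 2) x y h
  · intro hp
    have hcop : p.Coprime 2 := (Nat.coprime_primes Fact.out Nat.prime_two).mpr hp
    have h2 : IsUnit (2 : ℤ_[p]) :=
      PadicInt.isUnit_iff.mpr (by exact_mod_cast PadicInt.norm_natCast_eq_one_iff.mpr hcop)
    exact exists_sq_add_sq_eq_of_isUnit h2 isUnit_one.neg
end

section
/- Let F be a field with char F ≠ 2 and let q be a nondegenerate quadratic form on a finite-dimensional F-vector space V. Then there exist a natural number n and an anisotropic quadratic form q_an on a finite-dimensional F-vector space such that q is equivalent to the orthogonal direct sum of n copies of the hyperbolic plane (the rank-2 form x² − y²) with q_an. Moreover this decomposition is unique: if q is also equivalent to the orthogonal sum of m copies of the hyperbolic plane with an anisotropic form q'_an, then m = n and q_an is equivalent to q'_an. (Witt decomposition over a field of characteristic different from 2.) -/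
/-!
Existence: an isotropic vector of a nondegenerate form spans, together with a second vector, a
hyperbolic plane. The plane is itself nondegenerate, so it splits off as an orthogonal summand, and
one concludes by induction on the dimension.

Uniqueness: hyperbolic planes can be cancelled one at a time, and an anisotropic form contains none
of them. As a hyperbolic plane is a sum of two rank-one forms, it suffices to cancel a rank-one form
`Q₀` from an isometry `Q₀ ⊥ Q₁ ≃ Q₀ ⊥ Q₂`. Reflections act transitively, up to sign, on the vectors
of a given nonzero norm `c`: as `Q (w - e) + Q (w + e) = 4 c`, one of `w - e`, `w + e` has nonzero
norm, and the reflection along it maps `w` to `e` or `-e`. So the isometry may be assumed to fix the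
space of `Q₀` pointwise, and it then maps the space of `Q₁` onto that of `Q₂`.
-/

open QuadraticMap

namespace WittDecomposition

section Semiring

variable {R M₁ M₂ M₃ N : Type*} [CommSemiring R] [AddCommMonoid M₁] [AddCommMonoid M₂]
  [AddCommMonoid M₃] [AddCommMonoid N] [Module R M₁] [Module R M₂] [Module R M₃] [Module R N]

theorem anisotropic_of_equivalent {Q₁ : QuadraticMap R M₁ N} {Q₂ : QuadraticMap R M₂ N}
    (h : Q₁.Equivalent Q₂) (h₁ : Q₁.Anisotropic) : Q₂.Anisotropic := by
  obtain ⟨f⟩ := h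
  intro x hx
  have hfx : f.symm x = 0 := h₁ _ (by rw [f.symm.map_app, hx])
  rw [← f.apply_symm_apply x, hfx, map_zero]

theorem equivalent_prod_assoc (Q₁ : QuadraticMap R M₁ N) (Q₂ : QuadraticMap R M₂ N)
    (Q₃ : QuadraticMap R M₃ N) : ((Q₁.prod Q₂).prod Q₃).Equivalent (Q₁.prod (Q₂.prod Q₃)) :=
  ⟨⟨LinearEquiv.prodAssoc R M₁ M₂ M₃, fun _ ↦ (add_assoc _ _ _).symm⟩⟩

end Semiring

section Ring

variable {R M M₁ M₂ N : Type*} [CommRing R] [AddCommGroup M] [AddCommGroup M₁] [AddCommGroup M₂]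
  [AddCommGroup N] [Module R M] [Module R M₁] [Module R M₂] [Module R N]

theorem polar_isometry_apply {Q₁ : QuadraticMap R M₁ N} {Q₂ : QuadraticMap R M₂ N}
    (f : Q₁ →qᵢ Q₂) (x y : M₁) : polar Q₂ (f x) (f y) = polar Q₁ x y := by
  simp only [polar, ← map_add, f.map_app]

theorem map_sub_add_map_add (Q : QuadraticMap R M N) (x y : M) :
    Q (x - y) + Q (x + y) = 2 • (Q x + Q y) := by
  rw [sub_eq_add_neg, QuadraticMap.map_add Q, QuadraticMap.map_add Q, QuadraticMap.map_neg,
    polar_neg_right]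
  abel

theorem polarBilin_separatingLeft_of_equivalent {Q₁ : QuadraticMap R M₁ N}
    {Q₂ : QuadraticMap R M₂ N} (h : Q₁.Equivalent Q₂) (h₁ : Q₁.polarBilin.SeparatingLeft) :
    Q₂.polarBilin.SeparatingLeft := by
  obtain ⟨f⟩ := h
  intro x hx
  have hfx : f.symm x = 0 := h₁ _ fun y ↦ by
    have hxy := polar_isometry_apply f.toIsometry (f.symm x) y
    change polar Q₂ (f (f.symm x)) (f y) = _ at hxy
    rw [f.apply_symm_apply] at hxy
    exact hxy.symm.trans (hx (f y))
  rw [← f.apply_symm_apply x, hfx, map_zero]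

theorem polarBilin_separatingLeft_of_prod_right {Q₁ : QuadraticMap R M₁ N}
    {Q₂ : QuadraticMap R M₂ N} (h : (Q₁.prod Q₂).polarBilin.SeparatingLeft) :
    Q₂.polarBilin.SeparatingLeft := fun x hx ↦ by
  have h₀ : ((0 : M₁), x) = 0 := h _ fun y ↦ by simpa using hx y.2
  exact congrArg Prod.snd h₀

/-- The orthogonal complement of the image of an isometry `f`, with respect to the polar form. -/
def isometryOrthogonal {Q₁ : QuadraticMap R M₁ N} {Q : QuadraticMap R M N} (f : Q₁ →qᵢ Q) :
    Submodule R M :=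
  LinearMap.ker (Q.polarBilin.compl₂ f.toLinearMap)

theorem mem_isometryOrthogonal {Q₁ : QuadraticMap R M₁ N} {Q : QuadraticMap R M N}
    {f : Q₁ →qᵢ Q} {v : M} : v ∈ isometryOrthogonal f ↔ ∀ x, polar Q v (f x) = 0 :=
  LinearMap.ext_iff

theorem equivalent_prod_restrict_isometryOrthogonal {Q₁ : QuadraticMap R M₁ N}
    {Q : QuadraticMap R M N} (h₁ : Function.Bijective Q₁.polarBilin) (f : Q₁ →qᵢ Q) :
    Q.Equivalent (Q₁.prod (Q.restrict (isometryOrthogonal f))) := by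
  let g : M₁ × isometryOrthogonal f →ₗ[R] M :=
    f.toLinearMap.coprod (isometryOrthogonal f).subtype
  have hg (x : M₁) (w : isometryOrthogonal f) : g (x, w) = f x + w := rfl
  have hw (w : isometryOrthogonal f) (x : M₁) : polar Q w (f x) = 0 :=
    mem_isometryOrthogonal.mp w.2 x
  have g_injective : Function.Injective g := by
    rw [injective_iff_map_eq_zero]
    rintro ⟨x, w⟩ hxw
    have hx : x = 0 := (map_eq_zero_iff _ h₁.injective).mp <| LinearMap.ext fun y ↦ by
      simpa [hg, hw, polar_isometry_apply] using congrArg (fun v ↦ polar Q v (f y)) hxw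
    simpa [hg, hx] using hxw
  have g_surjective : Function.Surjective g := fun v ↦ by
    obtain ⟨x, hx⟩ := h₁.surjective (Q.polarBilin.compl₂ f.toLinearMap v)
    have hv : v - f x ∈ isometryOrthogonal f := mem_isometryOrthogonal.mpr fun y ↦ by
      have hxy : polar Q₁ x y = polar Q v (f y) := LinearMap.congr_fun hx y
      rw [polar_sub_left, polar_isometry_apply, hxy, sub_self]
    exact ⟨(x, ⟨v - f x, hv⟩), by simp [hg]⟩
  refine Equivalent.symm ⟨.ofBijective g ⟨g_injective, g_surjective⟩, fun ⟨x, w⟩ ↦ ?_⟩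
  change Q (f x + w) = Q₁ x + Q w
  rw [QuadraticMap.map_add Q, polar_comm, hw, f.map_app, add_zero]

section Cancellation

variable {M₀ : Type*} [AddCommGroup M₀] [Module R M₀] {Q₀ : QuadraticMap R M₀ N}
  {Q₁ : QuadraticMap R M₁ N} {Q₂ : QuadraticMap R M₂ N}

theorem fst_isometryEquiv_inr_eq_zero (h₀ : Q₀.polarBilin.SeparatingLeft)
    (f : (Q₀.prod Q₁).IsometryEquiv (Q₀.prod Q₂)) (hf : ∀ x, f (x, 0) = (x, 0)) (v : M₁) :
    (f (0, v)).1 = 0 :=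
  h₀ _ fun x ↦ by
    have h := polar_isometry_apply f.toIsometry (0, v) (x, 0)
    change polar _ (f (0, v)) (f (x, 0)) = _ at h
    simpa [hf] using h

theorem equivalent_of_prod_isometryEquiv (h₀ : Q₀.polarBilin.SeparatingLeft)
    (f : (Q₀.prod Q₁).IsometryEquiv (Q₀.prod Q₂)) (hf : ∀ x, f (x, 0) = (x, 0)) :
    Q₁.Equivalent Q₂ := by
  have hf' (x : M₀) : f.symm (x, 0) = (x, 0) := by rw [f.symm_apply_eq, hf]
  have hfst (v : M₁) : f (0, v) = (0, (f (0, v)).2) :=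
    Prod.ext (fst_isometryEquiv_inr_eq_zero h₀ f hf v) rfl
  have hfst' (v : M₂) : f.symm (0, v) = (0, (f.symm (0, v)).2) :=
    Prod.ext (fst_isometryEquiv_inr_eq_zero h₀ f.symm hf' v) rfl
  exact ⟨{
    LinearMap.snd R M₀ M₂ ∘ₗ f.toLinearEquiv.toLinearMap ∘ₗ LinearMap.inr R M₀ M₁ with
    invFun v := (f.symm (0, v)).2
    left_inv v := by
      change (f.symm (0, (f (0, v)).2)).2 = v
      rw [← hfst, f.symm_apply_apply]
    right_inv v := by
      change (f (0, (f.symm (0, v)).2)).2 = v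
      rw [← hfst', f.apply_symm_apply]
    map_app' v := by
      change Q₂ (f (0, v)).2 = Q₁ v
      have h := f.map_app (0, v)
      rw [hfst] at h
      simpa using h }⟩

end Cancellation

section Reflection

variable (Q : QuadraticForm R M)

theorem inv_smul_polarBilin_self {u : M} {c : Rˣ} (hc : Q u = c) :
    ((↑c⁻¹ : R) • Q.polarBilin u) u = 2 := by
  simp only [LinearMap.smul_apply, polarBilin_apply_apply, polar_self, hc, smul_eq_mul,
    nsmul_eq_mul, Nat.cast_ofNat]
  linear_combination 2 * c.inv_mul

/-- The reflection in the hyperplane orthogonal to a vector `u` whose norm is the unit `c`, as an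
isometry. -/
def reflection {u : M} {c : Rˣ} (hc : Q u = c) : Q.IsometryEquiv Q where
  toLinearEquiv := Module.reflection (inv_smul_polarBilin_self Q hc)
  map_app' x := by
    change Q (Module.reflection _ x) = Q x
    rw [Module.reflection_apply, sub_eq_add_neg, ← neg_smul, QuadraticMap.map_add Q,
      QuadraticMap.map_smul, polar_smul_right, polar_comm Q x u, hc]
    simp only [LinearMap.smul_apply, polarBilin_apply_apply, smul_eq_mul]
    linear_combination (↑c⁻¹ * polar Q u x ^ 2) * c.inv_mul

theorem reflection_apply {u : M} {c : Rˣ} (hc : Q u = c) (x : M) :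
    reflection Q hc x = x - (↑c⁻¹ * polar Q u x) • u :=
  Module.reflection_apply _ (inv_smul_polarBilin_self Q hc)

theorem reflection_sub_apply {w e : M} {c : Rˣ} (h : Q w = Q e) (hc : Q (w - e) = c) :
    reflection Q hc w = e := by
  have hpolar : polar Q (w - e) w = c := by
    rw [← hc, polar_sub_left, polar_self, polar_comm, sub_eq_add_neg w e, QuadraticMap.map_add Q,
      QuadraticMap.map_neg, polar_neg_right, h, two_nsmul]
    ring
  rw [reflection_apply, hpolar, c.inv_mul, one_smul, sub_sub_cancel]

theorem exists_isometryEquiv_apply_eq [IsLocalRing R] (h2 : IsUnit (2 : R)) {w e : M}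
    (h : Q w = Q e) (he : IsUnit (Q e)) : ∃ τ : Q.IsometryEquiv Q, τ w = e := by
  have hsum : IsUnit (Q (w - e) + Q (w + e)) := by
    rw [map_sub_add_map_add, h, ← two_mul, nsmul_eq_mul, Nat.cast_ofNat]
    exact h2.mul (h2.mul he)
  obtain ⟨c, hc⟩ | ⟨c, hc⟩ := IsLocalRing.isUnit_or_isUnit_of_isUnit_add hsum
  · exact ⟨reflection Q hc.symm, reflection_sub_apply Q h hc.symm⟩
  · have hc' : Q (w - -e) = c := by rw [sub_neg_eq_add, hc]
    let neg : Q.IsometryEquiv Q := ⟨LinearEquiv.neg R, Q.map_neg⟩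
    refine ⟨(reflection Q hc').trans neg, ?_⟩
    change -(reflection Q hc' w) = e
    rw [reflection_sub_apply Q (by rw [h, QuadraticMap.map_neg]), neg_neg]

end Reflection

theorem polarBilin_separatingLeft_of_isUnit_apply_one (h2 : IsUnit (2 : R))
    {Q₀ : QuadraticForm R R} (h₀ : IsUnit (Q₀ 1)) : Q₀.polarBilin.SeparatingLeft := fun x hx ↦ by
  have h : polar Q₀ (x • 1) 1 = 0 := by simpa using hx 1
  rw [polar_smul_left, polar_self, nsmul_eq_mul, smul_eq_mul] at h
  exact (h2.mul h₀).mul_left_eq_zero.mp (mod_cast h)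

theorem equivalent_of_rankOne_prod_equivalent [IsLocalRing R] (h2 : IsUnit (2 : R))
    {Q₀ : QuadraticForm R R} (h₀ : IsUnit (Q₀ 1)) {Q₁ : QuadraticForm R M₁}
    {Q₂ : QuadraticForm R M₂} (h : (Q₀.prod Q₁).Equivalent (Q₀.prod Q₂)) : Q₁.Equivalent Q₂ := by
  obtain ⟨g⟩ := h
  obtain ⟨τ, hτ⟩ := exists_isometryEquiv_apply_eq (Q₀.prod Q₂) h2 (w := g (1, 0)) (e := (1, 0))
    (by rw [g.map_app]; simp) (by simpa using h₀)
  refine equivalent_of_prod_isometryEquiv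
    (polarBilin_separatingLeft_of_isUnit_apply_one h2 h₀) (g.trans τ) fun x ↦ ?_
  have h₁ : (g.trans τ) (1, 0) = (1, 0) := hτ
  have hx : (x, (0 : M₁)) = x • (1, 0) := by simp
  rw [hx, map_smul, h₁]
  simp

section HyperbolicPlane

variable (R) in
/-- The hyperbolic plane `x² - y²`. -/
def hyperbolicPlane : QuadraticForm R (R × R) :=
  QuadraticMap.sq.prod (-QuadraticMap.sq)

theorem hyperbolicPlane_apply (x : R × R) : hyperbolicPlane R x = x.1 * x.1 - x.2 * x.2 := by
  simp [hyperbolicPlane, sub_eq_add_neg]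

theorem polar_hyperbolicPlane (x y : R × R) :
    polar (hyperbolicPlane R) x y = 2 * (x.1 * y.1 - x.2 * y.2) := by
  simp only [polar, hyperbolicPlane_apply, Prod.fst_add, Prod.snd_add]
  ring

theorem polarBilin_hyperbolicPlane_bijective (h2 : IsUnit (2 : R)) :
    Function.Bijective (hyperbolicPlane R).polarBilin := by
  obtain ⟨c, hc⟩ := h2
  constructor
  · rw [injective_iff_map_eq_zero]
    intro x hx
    have h₁ : 2 * (x.1 * 1 - x.2 * 0) = 0 :=
      (polar_hyperbolicPlane x (1, 0)).symm.trans (LinearMap.congr_fun hx _)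
    have h₂ : 2 * (x.1 * 0 - x.2 * 1) = 0 :=
      (polar_hyperbolicPlane x (0, 1)).symm.trans (LinearMap.congr_fun hx _)
    rw [← hc, Units.mul_right_eq_zero] at h₁ h₂
    exact Prod.ext (by simpa using h₁) (by simpa using h₂)
  · intro φ
    refine ⟨(↑c⁻¹ * φ (1, 0), -(↑c⁻¹ * φ (0, 1))), ?_⟩
    ext <;> simp [polar_hyperbolicPlane, ← hc]

theorem not_anisotropic_hyperbolicPlane [Nontrivial R] : ¬ (hyperbolicPlane R).Anisotropic :=
  not_anisotropic_iff_exists _ |>.mpr ⟨(1, 1), by simp, by simp [hyperbolicPlane_apply]⟩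

theorem nonempty_isometry_hyperbolicPlane {Q : QuadraticForm R M} {v u : M} (hv : Q v = 0)
    (hvu : polar Q v u = 1) : Nonempty (hyperbolicPlane R →qᵢ Q) := by
  obtain ⟨u', hu', hvu'⟩ : ∃ u', Q u' = 0 ∧ polar Q v u' = 1 := by
    refine ⟨u - Q u • v, ?_, ?_⟩
    · rw [sub_eq_add_neg, ← neg_smul, QuadraticMap.map_add Q, QuadraticMap.map_smul,
        polar_smul_right, polar_comm, hv, hvu]
      simp
    · simp [polar_sub_right, polar_self, hv, hvu]
  -- On the isotropic pair `v, u'` the form is `(s, t) ↦ s * t`; put `s = x + y` and `t = x - y`.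
  refine ⟨(LinearMap.fst R R R + LinearMap.snd R R R).smulRight v +
    (LinearMap.fst R R R - LinearMap.snd R R R).smulRight u', fun x ↦ ?_⟩
  change Q ((x.1 + x.2) • v + (x.1 - x.2) • u') = _
  rw [QuadraticMap.map_add Q, QuadraticMap.map_smul, QuadraticMap.map_smul, polar_smul_left,
    polar_smul_right, hv, hu', hvu', hyperbolicPlane_apply]
  simp only [smul_eq_mul]
  ring

theorem equivalent_of_hyperbolicPlane_prod_equivalent [IsLocalRing R] (h2 : IsUnit (2 : R))
    {Q₁ : QuadraticForm R M₁} {Q₂ : QuadraticForm R M₂}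
    (h : ((hyperbolicPlane R).prod Q₁).Equivalent ((hyperbolicPlane R).prod Q₂)) :
    Q₁.Equivalent Q₂ := by
  let sq : QuadraticForm R R := QuadraticMap.sq
  have h' : (sq.prod ((-sq).prod Q₁)).Equivalent (sq.prod ((-sq).prod Q₂)) :=
    (equivalent_prod_assoc _ _ _).symm.trans (h.trans (equivalent_prod_assoc _ _ _))
  exact equivalent_of_rankOne_prod_equivalent h2 (by simp [sq])
    (equivalent_of_rankOne_prod_equivalent h2 (by simp [sq]) h')

end HyperbolicPlane

section HyperbolicProd

/-- The orthogonal sum of `n` hyperbolic planes and `Q`, where the positive coordinates of the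
planes are grouped together, and so are the negative ones. -/
def hyperbolicProd (n : ℕ) (Q : QuadraticForm R M) :
    QuadraticForm R ((Fin n → R) × (Fin n → R) × M) :=
  (QuadraticMap.pi fun _ ↦ QuadraticMap.sq).prod
    ((-QuadraticMap.pi fun _ ↦ QuadraticMap.sq).prod Q)

theorem hyperbolicProd_apply (n : ℕ) (Q : QuadraticForm R M)
    (x : (Fin n → R) × (Fin n → R) × M) :
    hyperbolicProd n Q x = ∑ i, x.1 i ^ 2 - ∑ i, x.2.1 i ^ 2 + Q x.2.2 := by
  simp only [hyperbolicProd, prod_apply, pi_apply, neg_apply, sq_apply, pow_two]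
  ring

theorem hyperbolicProd_zero_equivalent (Q : QuadraticForm R M) :
    (hyperbolicProd 0 Q).Equivalent Q :=
  ⟨⟨LinearEquiv.uniqueProd.trans LinearEquiv.uniqueProd, fun x ↦ by
    simp [hyperbolicProd_apply]⟩⟩

theorem hyperbolicProd_succ_equivalent (n : ℕ) (Q : QuadraticForm R M) :
    (hyperbolicProd (n + 1) Q).Equivalent ((hyperbolicPlane R).prod (hyperbolicProd n Q)) := by
  refine ⟨⟨{
    toFun x := ((x.1 0, x.2.1 0), Fin.tail x.1, Fin.tail x.2.1, x.2.2)
    invFun x := (Fin.cons x.1.1 x.2.1, Fin.cons x.1.2 x.2.2.1, x.2.2.2)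
    map_add' _ _ := rfl
    map_smul' _ _ := rfl
    left_inv x := by simp
    right_inv x := by simp }, fun x ↦ ?_⟩⟩
  simp only [prod_apply, hyperbolicPlane_apply, hyperbolicProd_apply, Fin.sum_univ_succ, Fin.tail]
  ring

theorem not_anisotropic_hyperbolicProd_succ [Nontrivial R] (n : ℕ) (Q : QuadraticForm R M) :
    ¬ (hyperbolicProd (n + 1) Q).Anisotropic := fun h ↦
  not_anisotropic_hyperbolicPlane
    (anisotropic_of_prod (anisotropic_of_equivalent (hyperbolicProd_succ_equivalent n Q) h)).1

theorem hyperbolicProd_equivalent_of_succ [IsLocalRing R] (h2 : IsUnit (2 : R)) {m n : ℕ}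
    {Q₁ : QuadraticForm R M₁} {Q₂ : QuadraticForm R M₂}
    (h : (hyperbolicProd (m + 1) Q₁).Equivalent (hyperbolicProd (n + 1) Q₂)) :
    (hyperbolicProd m Q₁).Equivalent (hyperbolicProd n Q₂) :=
  equivalent_of_hyperbolicPlane_prod_equivalent h2 <|
    (hyperbolicProd_succ_equivalent m Q₁).symm.trans <|
      h.trans (hyperbolicProd_succ_equivalent n Q₂)

theorem eq_and_equivalent_of_hyperbolicProd_equivalent [IsLocalRing R] (h2 : IsUnit (2 : R))
    {m n : ℕ} {Q₁ : QuadraticForm R M₁} {Q₂ : QuadraticForm R M₂} (h₁ : Q₁.Anisotropic)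
    (h₂ : Q₂.Anisotropic) (h : (hyperbolicProd m Q₁).Equivalent (hyperbolicProd n Q₂)) :
    m = n ∧ Q₁.Equivalent Q₂ := by
  induction m generalizing n with
  | zero =>
    replace h := (hyperbolicProd_zero_equivalent Q₁).symm.trans h
    cases n with
    | zero => exact ⟨rfl, h.trans (hyperbolicProd_zero_equivalent Q₂)⟩
    | succ n =>
      exact absurd (anisotropic_of_equivalent h h₁) (not_anisotropic_hyperbolicProd_succ n Q₂)
  | succ m ih =>
    cases n with
    | zero =>
      replace h := (h.trans (hyperbolicProd_zero_equivalent Q₂)).symm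
      exact absurd (anisotropic_of_equivalent h h₂) (not_anisotropic_hyperbolicProd_succ m Q₁)
    | succ n =>
      exact (ih (hyperbolicProd_equivalent_of_succ h2 h)).imp_left (congrArg (· + 1))

end HyperbolicProd

end Ring

section Field

variable {F V : Type*} [Field F] [AddCommGroup V] [Module F V]

theorem nonempty_isometry_hyperbolicPlane_of_not_anisotropic {Q : QuadraticForm F V}
    (hQ : Q.polarBilin.SeparatingLeft) (h : ¬ Q.Anisotropic) :
    Nonempty (hyperbolicPlane F →qᵢ Q) := by
  obtain ⟨v, hv, hQv⟩ := (not_anisotropic_iff_exists Q).mp h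
  obtain ⟨w, hw⟩ : ∃ w, polar Q v w ≠ 0 := by
    by_contra! hc
    exact hv (hQ v hc)
  refine nonempty_isometry_hyperbolicPlane (u := (polar Q v w)⁻¹ • w) hQv ?_
  rw [polar_smul_right, smul_eq_mul, inv_mul_cancel₀ hw]

theorem exists_equivalent_hyperbolicProd (hF : (2 : F) ≠ 0) [FiniteDimensional F V]
    (Q : QuadraticForm F V) (hQ : Q.polarBilin.SeparatingLeft) :
    ∃ (n r : ℕ) (Q₀ : QuadraticForm F (Fin r → F)),
      Q₀.Anisotropic ∧ Q.Equivalent (hyperbolicProd n Q₀) := by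
  induction hd : Module.finrank F V using Nat.strong_induction_on generalizing V with
  | _ d ih =>
    by_cases h : Q.Anisotropic
    · have hrepr : Q.Equivalent (Q.basisRepr (Module.finBasis F V)) :=
        ⟨Q.isometryEquivBasisRepr (Module.finBasis F V)⟩
      exact ⟨0, _, _, anisotropic_of_equivalent hrepr h,
        hrepr.trans (hyperbolicProd_zero_equivalent _).symm⟩
    · obtain ⟨f⟩ := nonempty_isometry_hyperbolicPlane_of_not_anisotropic hQ h
      have hsplit := equivalent_prod_restrict_isometryOrthogonal
        (polarBilin_hyperbolicPlane_bijective hF.isUnit) f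
      have hlt : Module.finrank F (isometryOrthogonal f) < d := by
        obtain ⟨e⟩ := hsplit
        have hfinrank := e.toLinearEquiv.finrank_eq
        simp only [Module.finrank_prod, Module.finrank_self] at hfinrank
        omega
      have hnondeg := polarBilin_separatingLeft_of_prod_right
        (polarBilin_separatingLeft_of_equivalent hsplit hQ)
      obtain ⟨n, r, Q₀, hQ₀, h₀⟩ := ih _ hlt _ hnondeg rfl
      exact ⟨n + 1, r, Q₀, hQ₀, hsplit.trans <| ((Equivalent.refl _).prod h₀).trans
        (hyperbolicProd_succ_equivalent n Q₀).symm⟩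

end Field

end WittDecomposition

/-- Witt decomposition over a field of characteristic ≠ 2: every nondegenerate
quadratic form q on a finite-dimensional vector space is equivalent to an orthogonal
sum of n hyperbolic planes (x² − y²) and an anisotropic form, and both n and the
equivalence class of the anisotropic part are uniquely determined by q. -/
theorem witt_decomposition
    (F : Type*) [Field F] (hF : (2 : F) ≠ 0)
    (V : Type*) [AddCommGroup V] [Module F V] [FiniteDimensional F V]
    (q : QuadraticForm F V)
    (hq : ∀ x : V, (∀ y : V, QuadraticMap.polar q x y = 0) → x = 0) :
    ∃ (n r : ℕ) (qan : QuadraticForm F (Fin r → F)),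
      (∀ z : Fin r → F, qan z = 0 → z = 0) ∧
      (∃ φ : V ≃ₗ[F] ((Fin n → F) × (Fin n → F) × (Fin r → F)),
        ∀ v : V,
          (∑ i : Fin n, ((φ v).1 i) ^ 2) - (∑ i : Fin n, ((φ v).2.1 i) ^ 2)
            + qan ((φ v).2.2) = q v) ∧
      (∀ (m s : ℕ) (qan' : QuadraticForm F (Fin s → F)),
        (∀ z : Fin s → F, qan' z = 0 → z = 0) →
        (∃ ψ : V ≃ₗ[F] ((Fin m → F) × (Fin m → F) × (Fin s → F)),
          ∀ v : V,
            (∑ i : Fin m, ((ψ v).1 i) ^ 2) - (∑ i : Fin m, ((ψ v).2.1 i) ^ 2)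
              + qan' ((ψ v).2.2) = q v) →
        m = n ∧ ∃ χ : (Fin r → F) ≃ₗ[F] (Fin s → F),
          ∀ z : Fin r → F, qan' (χ z) = qan z) := by
  obtain ⟨n, r, qan, hqan, ⟨φ⟩⟩ :=
    WittDecomposition.exists_equivalent_hyperbolicProd hF q hq
  refine ⟨n, r, qan, hqan, ⟨φ.toLinearEquiv, fun v ↦ ?_⟩, ?_⟩
  · exact (WittDecomposition.hyperbolicProd_apply n qan _).symm.trans (φ.map_app v)
  · rintro m s qan' hqan' ⟨ψ, hψ⟩
    let ψ' : q.IsometryEquiv (WittDecomposition.hyperbolicProd m qan') :=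
      ⟨ψ, fun v ↦ (WittDecomposition.hyperbolicProd_apply m qan' _).trans (hψ v)⟩
    obtain ⟨hnm, ⟨χ⟩⟩ := WittDecomposition.eq_and_equivalent_of_hyperbolicProd_equivalent
      hF.isUnit hqan hqan' ⟨φ.symm.trans ψ'⟩
    exact ⟨hnm.symm, χ.toLinearEquiv, χ.map_app⟩
end

section
/- Let n ≥ 1 and let a : Fin n → ℚ with a i ≠ 0 for every i. Then there exist a natural number r ≤ 3, coefficients c : Fin r → ℚ with c i ≠ 0 for every i, and natural numbers u, v, s, t with n + 2t = r + u + v + 2s, such that the diagonal quadratic form over ℚ with coefficient list (a_1, …, a_n, followed by t pairs (1, −1)) is equivalent to the diagonal quadratic form with coefficient list (c_1, …, c_r, followed by u copies of 1, v copies of −1, and s pairs (1, −1)). (Every nondegenerate symmetric bilinear form over ℚ has rational Witt span at most 3: its image under the boundary map ∂ : W(ℚ) → ⊕_p W(𝔽_p) is realized by a form of rank at most 3.) -/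
/-!
By Milnor, `W(ℚ)` is generated by symbols `⟨a⟩`, with `a` a nonzero integer, and a class whose
residues in all `W(𝔽_p)` vanish is a multiple of `⟨1⟩`: filter `W(ℚ)` by the subgroups `L_k`
generated by the integers whose prime factors are smaller than `k`; the residue at `p` identifies
`L_{p+1} / L_p` with `W(𝔽_p)`, the inverse being `⟨a⟩ ↦ ⟨p a⟩`. Since equivalence of diagonal forms
up to adding `⟨1⟩` and `⟨-1⟩` satisfies the relations between the symbols, forms with the same
residues become equivalent after adding such units.

It remains to find a ternary form with the residues of a given class. Let `n` be the product of the
primes with nonzero residue, and `m` the product of those among them whose residue is not the class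
of a unary form; there it is a sum of two unary classes. The form `m ⟨δ, δ ℓ, n ℓ⟩` has the right
residues at the divisors of `n` as soon as the prime `ℓ` lies in suitable classes modulo these
primes. By Dirichlet there is such an `ℓ ≡ 3 mod 4`, and then the sign `δ` can be chosen so that the
residue at `ℓ` vanishes.
-/

local instance (p : Nat.Primes) : Fact (p : ℕ).Prime := ⟨p.2⟩

section Arithmetic

variable {p : ℕ} [Fact p.Prime]

lemma prime_natCast : Prime (p : ℤ) := Nat.prime_iff_prime_int.mp Fact.out

lemma intCast_zmod_ne_zero {u : ℤ} (hu : ¬ (p : ℤ) ∣ u) : (u : ZMod p) ≠ 0 :=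
  (ZMod.intCast_zmod_eq_zero_iff_dvd u p).not.2 hu

lemma exists_eq_pow_mul_and_not_dvd {z : ℤ} (hz : z ≠ 0) :
    ∃ (k : ℕ) (u : ℤ), ¬ (p : ℤ) ∣ u ∧ z = (p : ℤ) ^ k * u := by
  have hfin : FiniteMultiplicity (p : ℤ) z :=
    Int.finiteMultiplicity_iff.2 ⟨by simpa using (Fact.out : p.Prime).ne_one, hz⟩
  obtain ⟨u, h, hu⟩ := hfin.exists_eq_pow_mul_and_not_dvd
  exact ⟨_, u, hu, h⟩

lemma isSquare_or_isSquare_neg {F : Type*} [Field F] [Fintype F] (hF : Fintype.card F % 4 = 3)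
    (a : F) : IsSquare a ∨ IsSquare (-a) := by
  classical
  by_contra! h
  have hneg : ¬ IsSquare (-1 : F) := FiniteField.isSquare_neg_one_iff.not.2 (not_not.2 hF)
  simp only [← quadraticChar_neg_one_iff_not_isSquare] at h hneg
  have hmul := map_mul (quadraticChar F) (-1) a
  rw [neg_one_mul, h.1, h.2, hneg] at hmul
  norm_num at hmul

lemma exists_unit_isSquare_neg_mul (hp : p % 4 = 3) (n : ℤ) :
    ∃ δ : ℤˣ, IsSquare ((-δ * n : ℤ) : ZMod p) := by
  rcases isSquare_or_isSquare_neg (by rwa [ZMod.card]) (n : ZMod p) with h | h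
  · exact ⟨-1, by simpa using h⟩
  · exact ⟨1, by simpa using h⟩

lemma exists_mul_sq_add_mul_sq_eq {F : Type*} [Field F] [Finite F] (hF : ringChar F ≠ 2)
    {u v : F} (hu : u ≠ 0) (hv : v ≠ 0) (r : F) : ∃ x y : F, u * x ^ 2 + v * y ^ 2 = r := by
  have := Fintype.ofFinite F
  open Polynomial in
  obtain ⟨x, y, h⟩ := FiniteField.exists_root_sum_quadratic
    (f := C u * X ^ 2 + C 0 * X + C 0) (g := C v * X ^ 2 + C 0 * X + C (-r))
    (degree_quadratic hu) (degree_quadratic hv) (FiniteField.odd_card_of_char_ne_two hF)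
  exact ⟨x, y, sub_eq_zero.1 (by simpa [add_assoc, sub_eq_add_neg] using h)⟩

end Arithmetic

section Dirichlet

lemma exists_prime_gt_and_modEq_pow (S : Finset Nat.Primes) (e a : Nat.Primes → ℕ)
    (ha : ∀ q ∈ S, (a q).Coprime q) (N : ℕ) :
    ∃ l > N, l.Prime ∧ ∀ q ∈ S, l ≡ a q [MOD q ^ e q] := by
  have hM (q : Nat.Primes) : (q : ℕ) ^ e q ≠ 0 := pow_ne_zero _ q.2.ne_zero
  obtain ⟨b, hb⟩ := Nat.chineseRemainderOfFinset a (fun q : Nat.Primes => (q : ℕ) ^ e q) S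
    (fun q _ => hM q) fun q _ r _ hqr => Nat.Coprime.pow _ _
      ((Nat.coprime_primes q.2 r.2).2 (Subtype.coe_ne_coe.2 hqr))
  have hcop : b.Coprime (∏ q ∈ S, (q : ℕ) ^ e q) := Nat.Coprime.prod_right fun q hq => by
    rw [Nat.Coprime, (hb q hq).gcd_eq]
    exact (ha q hq).pow_right _
  obtain ⟨l, hlN, hl, hlb⟩ := Nat.forall_exists_prime_gt_and_modEq N
    (Finset.prod_ne_zero_iff.2 fun q _ => hM q) hcop
  exact ⟨l, hlN, hl, fun q hq => (hlb.of_dvd (Finset.dvd_prod_of_mem _ hq)).trans (hb q hq)⟩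

lemma exists_prime_three_mod_four_and_cast_eq (S : Finset Nat.Primes)
    (c : (q : Nat.Primes) → ZMod q) (hc : ∀ q ∈ S, c q ≠ 0) (N : ℕ) :
    ∃ l > N, l.Prime ∧ l % 4 = 3 ∧ ∀ q ∈ S, (l : ZMod q) = c q := by
  classical
  let two : Nat.Primes := ⟨2, Nat.prime_two⟩
  obtain ⟨l, hlN, hl, hmod⟩ := exists_prime_gt_and_modEq_pow (insert two S)
    (fun q => if q = two then 2 else 1) (fun q => if q = two then 3 else (c q).val)
    (fun q hq => by
      rcases eq_or_ne q two with rfl | h2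
      · rw [if_pos rfl]; decide
      · rw [if_neg h2, Nat.coprime_comm, q.2.coprime_iff_not_dvd, ← ZMod.natCast_eq_zero_iff,
          ZMod.natCast_zmod_val]
        exact hc q (Finset.mem_of_mem_insert_of_ne hq h2)) N
  have hl4 : l % 4 = 3 := hmod two (Finset.mem_insert_self _ _)
  refine ⟨l, hlN, hl, hl4, fun q hq => ?_⟩
  rcases eq_or_ne q two with rfl | h2
  · have hodd : (l : ZMod 2) = 1 := ZMod.natCast_eq_one_iff_odd.2 (Nat.odd_iff.2 (by omega))
    exact hodd.trans (Fin.eq_one_of_ne_zero (c two) (hc two hq)).symm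
  · have := hmod q (Finset.mem_insert_of_mem hq)
    rw [if_neg h2, if_neg h2, pow_one] at this
    rw [(ZMod.natCast_eq_natCast_iff _ _ _).2 this, ZMod.natCast_zmod_val]

lemma exists_squarefree_forall_dvd_iff (P : Finset Nat.Primes) :
    ∃ n : ℕ, Squarefree n ∧ ∀ p : Nat.Primes, (p : ℕ) ∣ n ↔ p ∈ P := by
  refine ⟨∏ p ∈ P, (p : ℕ), ?_, fun p => ?_⟩
  · exact Finset.squarefree_prod_of_pairwise_isCoprime (fun p _ q _ hpq =>
      Nat.coprime_iff_isRelPrime.1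
        ((Nat.coprime_primes p.2 q.2).2 (Subtype.coe_ne_coe.2 hpq))) fun p _ => p.2.squarefree
  · have hdvd (q : Nat.Primes) : (p : ℕ) ∣ q ↔ p = q := by
      rw [Nat.prime_dvd_prime_iff_eq p.2 q.2, Nat.Primes.coe_nat_inj]
    simp [p.2.prime.dvd_finsetProd_iff, hdvd]

lemma exists_natCast_eq_mul_of_squarefree {p : ℕ} (hp : p.Prime) {n : ℕ} (hn : Squarefree n)
    (h : p ∣ n) : ∃ k : ℤ, (n : ℤ) = p * k ∧ ¬ (p : ℤ) ∣ k := by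
  obtain ⟨k, rfl⟩ := h
  exact ⟨k, Nat.cast_mul p k, Int.natCast_dvd_natCast.not.2
    (hp.coprime_iff_not_dvd.1 (Nat.squarefree_mul_iff.1 hn).1)⟩

end Dirichlet

/-- The relations `⟨0⟩ = 0`, `⟨a b²⟩ = ⟨a⟩` and `⟨a⟩ + ⟨b⟩ = ⟨a + b⟩ + ⟨a b (a + b)⟩` between the
classes of one-dimensional forms, for a function `f a = ⟨a⟩` with values in an additive group. -/
structure IsWittSymbol {R G : Type*} [CommRing R] [AddCommGroup G] (f : R → G) : Prop where
  map_zero : f 0 = 0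
  map_mul_sq (a : R) {b : R} (hb : b ≠ 0) : f (a * b ^ 2) = f a
  map_add (a b : R) : f a + f b = f (a + b) + f (a * b * (a + b))

namespace IsWittSymbol

variable {R S G H : Type*} [CommRing R] [CommRing S] [AddCommGroup G] [AddCommGroup H]

lemma map_neg {f : R → G} (hf : IsWittSymbol f) (a : R) : f (-a) = -f a :=
  (neg_eq_of_add_eq_zero_right (by simp [hf.map_add, hf.map_zero])).symm

lemma map {f : R → G} (hf : IsWittSymbol f) (φ : G →+ H) : IsWittSymbol fun a => φ (f a) where
  map_zero := by rw [hf.map_zero, _root_.map_zero]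
  map_mul_sq a b hb := by rw [hf.map_mul_sq a hb]
  map_add a b := by rw [← _root_.map_add, hf.map_add, _root_.map_add]

lemma comp_ringHom {f : S → G} (hf : IsWittSymbol f) {φ : R →+* S} (hφ : Function.Injective φ) :
    IsWittSymbol fun a => f (φ a) where
  map_zero := by rw [_root_.map_zero, hf.map_zero]
  map_mul_sq a b hb := by
    rw [map_mul, map_pow, hf.map_mul_sq _ ((map_ne_zero_iff φ hφ).2 hb)]
  map_add a b := by rw [hf.map_add, map_mul, map_mul, _root_.map_add]

lemma comp_mul_left {f : R → G} (hf : IsWittSymbol f) {c : R} (hc : c ≠ 0) :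
    IsWittSymbol fun a => f (c * a) where
  map_zero := by rw [mul_zero, hf.map_zero]
  map_mul_sq a b hb := by rw [← mul_assoc, hf.map_mul_sq _ hb]
  map_add a b := by
    rw [hf.map_add, ← mul_add, ← hf.map_mul_sq (c * (a * b * (a + b))) hc]
    congr 2
    ring

end IsWittSymbol

/-- The relations of `IsWittSymbol`, as elements of the free abelian group on `R`. -/
inductive WittRel (R : Type*) [CommRing R] : FreeAbelianGroup R → Prop
  | zero : WittRel R (.of 0)
  | mul_sq (a b : R) (hb : b ≠ 0) : WittRel R (.of (a * b ^ 2) - .of a)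
  | add (a b : R) : WittRel R (.of a + .of b - (.of (a + b) + .of (a * b * (a + b))))

/-- The Witt group, as the universal target of an `IsWittSymbol`. For a field this is the usual
presentation by diagonal forms; for a domain such as `ℤ` it is the Witt group of the field of
fractions, because `⟨a / b⟩ = ⟨a b⟩` there. -/
def WittGroup (R : Type*) [CommRing R] : Type _ :=
  FreeAbelianGroup R ⧸ AddSubgroup.closure {x | WittRel R x}

namespace WittGroup

instance (R : Type*) [CommRing R] : AddCommGroup (WittGroup R) :=
  QuotientAddGroup.Quotient.addCommGroup _

section Presentation

variable {R G : Type*} [CommRing R] [AddCommGroup G]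

/-- The class `⟨a⟩` of a form of rank one. -/
def mk (a : R) : WittGroup R := QuotientAddGroup.mk (FreeAbelianGroup.of a)

lemma isWittSymbol_mk : IsWittSymbol (mk : R → WittGroup R) := by
  have mk_eq_of_rel {x y : FreeAbelianGroup R} (h : WittRel R (x - y)) :
      (QuotientAddGroup.mk x : WittGroup R) = QuotientAddGroup.mk y :=
    QuotientAddGroup.eq_iff_sub_mem.2 (AddSubgroup.subset_closure h)
  exact ⟨mk_eq_of_rel (y := 0) (by simpa using WittRel.zero),
    fun a b hb => mk_eq_of_rel (.mul_sq a b hb), fun a b => mk_eq_of_rel (.add a b)⟩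

@[simp] lemma mk_zero : mk (0 : R) = 0 := isWittSymbol_mk.map_zero

lemma mk_mul_sq (a : R) {b : R} (hb : b ≠ 0) : mk (a * b ^ 2) = mk a :=
  isWittSymbol_mk.map_mul_sq a hb

lemma mk_add_mk (a b : R) : mk a + mk b = mk (a + b) + mk (a * b * (a + b)) :=
  isWittSymbol_mk.map_add a b

lemma mk_neg (a : R) : mk (-a) = -mk a := isWittSymbol_mk.map_neg a

/-- The universal property of the Witt group. -/
def lift {f : R → G} (hf : IsWittSymbol f) : WittGroup R →+ G :=
  QuotientAddGroup.lift _ (FreeAbelianGroup.lift f) <| by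
    rw [AddSubgroup.closure_le]
    rintro x (_ | ⟨a, b, hb⟩ | ⟨a, b⟩)
    · simpa using hf.map_zero
    · simpa [sub_eq_zero] using hf.map_mul_sq a hb
    · simpa [sub_eq_zero] using hf.map_add a b

@[simp] lemma lift_mk {f : R → G} (hf : IsWittSymbol f) (a : R) : lift hf (mk a) = f a :=
  FreeAbelianGroup.lift_apply_of f a

lemma closure_range_mk : AddSubgroup.closure (Set.range (mk : R → WittGroup R)) = ⊤ := by
  refine top_unique fun x _ => ?_
  induction x using QuotientAddGroup.induction_on with
  | H z =>
    induction z using FreeAbelianGroup.induction_on with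
    | zero => exact zero_mem _
    | of a => exact AddSubgroup.subset_closure ⟨a, rfl⟩
    | neg a ha => exact neg_mem (ha trivial)
    | add y z hy hz => exact add_mem (hy trivial) (hz trivial)

lemma induction_on {P : WittGroup R → Prop} (x : WittGroup R) (zero : P 0)
    (mk_add : ∀ a x, P x → P (mk a + x)) : P x := by
  have hx : x ∈ AddSubgroup.closure (Set.range (mk : R → WittGroup R)) :=
    closure_range_mk (R := R) ▸ AddSubgroup.mem_top x
  induction hx using AddSubgroup.closure_induction_left with
  | zero => exact zero
  | add_left _ ha _ _ ih => obtain ⟨a, rfl⟩ := ha; exact mk_add a _ ih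
  | neg_add_cancel _ ha _ _ ih => obtain ⟨a, rfl⟩ := ha; exact mk_neg a ▸ mk_add (-a) _ ih

lemma mk_add_mk_of_represents [IsDomain R] {u v x y r : R} (hu : u ≠ 0) (hv : v ≠ 0)
    (hr : r ≠ 0) (h : u * x ^ 2 + v * y ^ 2 = r) : mk u + mk v = mk r + mk (u * v * r) := by
  rcases eq_or_ne x 0 with rfl | hx
  · obtain rfl : r = v * y ^ 2 := by simp [← h]
    have hy : y ≠ 0 := by rintro rfl; simp at hr
    rw [mk_mul_sq v hy, show u * v * (v * y ^ 2) = u * (v * y) ^ 2 by ring,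
      mk_mul_sq u (mul_ne_zero hv hy), add_comm]
  rcases eq_or_ne y 0 with rfl | hy
  · obtain rfl : r = u * x ^ 2 := by simp [← h]
    rw [mk_mul_sq u hx, show u * v * (u * x ^ 2) = v * (u * x) ^ 2 by ring,
      mk_mul_sq v (mul_ne_zero hu hx)]
  · rw [← mk_mul_sq u hx, ← mk_mul_sq v hy, mk_add_mk, h,
      show u * x ^ 2 * (v * y ^ 2) * r = u * v * r * (x * y) ^ 2 by ring,
      mk_mul_sq _ (mul_ne_zero hx hy)]

end Presentation

section FiniteField

variable {F : Type*} [Field F] [Finite F]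

lemma mk_add_mk_eq_of_discr_eq (hF : ringChar F ≠ 2) {u v r s c : F} (hu : u ≠ 0) (hv : v ≠ 0)
    (hr : r ≠ 0) (hc : c ≠ 0) (h : r * s = u * v * c ^ 2) : mk u + mk v = mk r + mk s := by
  obtain ⟨x, y, hxy⟩ := exists_mul_sq_add_mul_sq_eq hF hu hv r
  rw [mk_add_mk_of_represents hu hv hr hxy, ← mk_mul_sq s hr, ← mk_mul_sq (u * v * r) hc,
    show s * r ^ 2 = u * v * r * c ^ 2 by linear_combination r * h]

lemma exists_eq_mk_or_exists_eq_mk_add_mk (hF : ringChar F ≠ 2) (x : WittGroup F) :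
    (∃ u, u ≠ 0 ∧ x = mk u) ∨ ∃ u v, u ≠ 0 ∧ v ≠ 0 ∧ x = mk u + mk v := by
  induction x using induction_on with
  | zero => exact .inr ⟨1, -1, one_ne_zero, neg_ne_zero.2 one_ne_zero, by simp [mk_neg]⟩
  | mk_add a x ih =>
    rcases eq_or_ne a 0 with rfl | ha
    · simpa using ih
    rcases ih with ⟨u, hu, rfl⟩ | ⟨u, v, hu, hv, rfl⟩
    · exact .inr ⟨a, u, ha, hu, rfl⟩
    · refine .inl ⟨-a * u * v, by simp [ha, hu, hv], ?_⟩
      rw [mk_add_mk_eq_of_discr_eq hF (r := -a) (s := -a * u * v) hu hv (neg_ne_zero.2 ha) ha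
        (by ring), mk_neg, add_neg_cancel_left]

lemma eq_zero_or_eq_mk_one_of_ringChar_eq_two (hF : ringChar F = 2) (x : WittGroup F) :
    x = 0 ∨ x = mk 1 := by
  have : CharP F 2 := ringChar.of_eq hF
  have hmk (a : F) (ha : a ≠ 0) : mk a = mk 1 := by
    obtain ⟨b, rfl⟩ := FiniteField.isSquare_of_char_two hF a
    simpa [sq] using mk_mul_sq 1 (left_ne_zero_of_mul ha)
  induction x using induction_on with
  | zero => exact .inl rfl
  | mk_add a x ih =>
    rcases eq_or_ne a 0 with rfl | ha
    · simpa using ih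
    rcases ih with rfl | rfl
    · exact .inr (by rw [add_zero, hmk a ha])
    · exact .inl (by
        rw [hmk a ha, mk_add_mk, CharTwo.add_self_eq_zero, mul_zero, mk_zero, add_zero])

end FiniteField

section Residue

variable {p : ℕ} [Fact p.Prime]

variable (p) in
/-- The residue at `p` of the rank one form `⟨p ^ k * u⟩` with `u` prime to `p`: the class of `u`
modulo `p` if `k` is odd, and zero if `k` is even. -/
noncomputable def residueFun (z : ℤ) : WittGroup (ZMod p) :=
  if Odd (padicValInt p z) then mk ((z / (p : ℤ) ^ padicValInt p z : ℤ) : ZMod p) else 0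

lemma residueFun_pow_mul (k : ℕ) {u : ℤ} (hu : ¬ (p : ℤ) ∣ u) :
    residueFun p ((p : ℤ) ^ k * u) = if Odd k then mk (u : ZMod p) else 0 := by
  have hp : (p : ℤ) ^ k ≠ 0 := pow_ne_zero _ prime_natCast.ne_zero
  have hval : padicValInt p ((p : ℤ) ^ k * u) = k := by
    rw [padicValInt.mul hp (by rintro rfl; simp at hu), padicValInt.eq_zero_of_not_dvd hu,
      add_zero, padicValInt, Int.natAbs_pow, Int.natAbs_natCast, padicValNat.prime_pow]
  rw [residueFun, hval, Int.mul_ediv_cancel_left _ hp]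

lemma residueFun_zero : residueFun p 0 = 0 := by simp [residueFun]

lemma residueFun_of_not_dvd {u : ℤ} (hu : ¬ (p : ℤ) ∣ u) : residueFun p u = 0 := by
  simpa using residueFun_pow_mul 0 hu

lemma residueFun_prime_mul {u : ℤ} (hu : ¬ (p : ℤ) ∣ u) :
    residueFun p (p * u) = mk (u : ZMod p) := by
  simpa using residueFun_pow_mul 1 hu

lemma residueFun_neg (z : ℤ) : residueFun p (-z) = -residueFun p z := by
  rcases eq_or_ne z 0 with rfl | hz
  · simp [residueFun_zero]
  obtain ⟨k, u, hu, rfl⟩ := exists_eq_pow_mul_and_not_dvd (p := p) hz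
  rw [← mul_neg, residueFun_pow_mul k (by rwa [Int.dvd_neg]), residueFun_pow_mul k hu]
  split_ifs <;> simp [mk_neg]

lemma residueFun_mul_of_intCast_eq_sq (z : ℤ) {w : ℤ} {t : ZMod p} (ht : t ≠ 0)
    (hw : (w : ZMod p) = t ^ 2) : residueFun p (z * w) = residueFun p z := by
  rcases eq_or_ne z 0 with rfl | hz
  · simp
  obtain ⟨k, u, hu, rfl⟩ := exists_eq_pow_mul_and_not_dvd (p := p) hz
  have hpw : ¬ (p : ℤ) ∣ w := by
    rw [← ZMod.intCast_zmod_eq_zero_iff_dvd, hw]; exact pow_ne_zero 2 ht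
  rw [mul_assoc, residueFun_pow_mul k (prime_natCast.not_dvd_mul hu hpw), residueFun_pow_mul k hu,
    Int.cast_mul, hw, mk_mul_sq _ ht]

lemma residueFun_mul_of_intCast_eq_neg_sq (z : ℤ) {w : ℤ} {t : ZMod p} (ht : t ≠ 0)
    (hw : (w : ZMod p) = -t ^ 2) : residueFun p (z * w) = -residueFun p z := by
  rw [← residueFun_mul_of_intCast_eq_sq z (w := -w) ht (by simp [hw]), ← residueFun_neg, mul_neg,
    neg_neg]

lemma residueFun_mul_sq (a : ℤ) {b : ℤ} (hb : b ≠ 0) :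
    residueFun p (a * b ^ 2) = residueFun p a := by
  obtain ⟨j, v, hv, rfl⟩ := exists_eq_pow_mul_and_not_dvd (p := p) hb
  rw [mul_pow, ← mul_assoc,
    residueFun_mul_of_intCast_eq_sq _ (intCast_zmod_ne_zero hv) (Int.cast_pow v 2)]
  rcases eq_or_ne a 0 with rfl | ha
  · simp
  obtain ⟨i, u, hu, rfl⟩ := exists_eq_pow_mul_and_not_dvd (p := p) ha
  rw [show (p : ℤ) ^ i * u * (p ^ j) ^ 2 = p ^ (i + 2 * j) * u by ring,
    residueFun_pow_mul _ hu, residueFun_pow_mul _ hu]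
  simp [Nat.odd_add]

lemma residueFun_pow_mul_add_pow_mul (i : ℕ) {u : ℤ} (hu : ¬ (p : ℤ) ∣ u) (w : ℤ) :
    residueFun p (p ^ i * u) + residueFun p (p ^ i * w) =
      residueFun p (p ^ i * (u + w)) + residueFun p (p ^ i * (u * w * (u + w))) := by
  have hu' := intCast_zmod_ne_zero hu
  by_cases hw : (p : ℤ) ∣ w
  · have hw' : (w : ZMod p) = 0 := (ZMod.intCast_zmod_eq_zero_iff_dvd w p).2 hw
    have huw : ¬ (p : ℤ) ∣ u + w := by rwa [dvd_add_left hw]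
    rw [show (p : ℤ) ^ i * (u * w * (u + w)) = p ^ i * w * (u * (u + w)) by ring,
      residueFun_mul_of_intCast_eq_sq (p ^ i * w) hu' (by simp [hw', sq]),
      residueFun_pow_mul i hu, residueFun_pow_mul i huw, Int.cast_add, hw', add_zero]
  by_cases huw : (p : ℤ) ∣ u + w
  · have hw' : (w : ZMod p) = -u := by
      refine eq_neg_of_add_eq_zero_right ?_
      rwa [← Int.cast_add, ZMod.intCast_zmod_eq_zero_iff_dvd]
    rw [show (p : ℤ) ^ i * (u * w * (u + w)) = p ^ i * (u + w) * (u * w) by ring,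
      residueFun_mul_of_intCast_eq_neg_sq (p ^ i * (u + w)) hu' (by simp [hw', sq]),
      residueFun_pow_mul i hu, residueFun_pow_mul i hw, hw', mk_neg]
    split_ifs <;> simp
  · rw [residueFun_pow_mul i hu, residueFun_pow_mul i hw, residueFun_pow_mul i huw,
      residueFun_pow_mul i (prime_natCast.not_dvd_mul (prime_natCast.not_dvd_mul hu hw) huw)]
    split_ifs
    · simpa using mk_add_mk (u : ZMod p) w
    · rfl

lemma isWittSymbol_residueFun : IsWittSymbol (residueFun p) where
  map_zero := residueFun_zero
  map_mul_sq := residueFun_mul_sq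
  map_add a b := by
    have add_of_pow_mul (i : ℕ) {u : ℤ} (hu : ¬ (p : ℤ) ∣ u) (w : ℤ) :
        residueFun p (p ^ i * u) + residueFun p (p ^ i * w) = residueFun p (p ^ i * u + p ^ i * w) +
          residueFun p (p ^ i * u * (p ^ i * w) * (p ^ i * u + p ^ i * w)) := by
      rw [residueFun_pow_mul_add_pow_mul i hu w, mul_add,
        ← residueFun_mul_sq (p ^ i * (u * w * (u + w)))
          (pow_ne_zero i (prime_natCast (p := p)).ne_zero)]
      congr 2
      ring
    rcases eq_or_ne a 0 with rfl | ha
    · simp [residueFun_zero]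
    rcases eq_or_ne b 0 with rfl | hb
    · simp [residueFun_zero]
    obtain ⟨i, u, hu, rfl⟩ := exists_eq_pow_mul_and_not_dvd (p := p) ha
    obtain ⟨j, v, hv, rfl⟩ := exists_eq_pow_mul_and_not_dvd (p := p) hb
    rcases le_total i j with h | h
    · obtain ⟨d, rfl⟩ := Nat.exists_eq_add_of_le h
      simpa only [pow_add, mul_assoc] using add_of_pow_mul i hu (p ^ d * v)
    · obtain ⟨d, rfl⟩ := Nat.exists_eq_add_of_le h
      rw [add_comm, add_comm (_ * u), mul_comm (_ * u)]
      simpa only [pow_add, mul_assoc] using add_of_pow_mul j hv (p ^ d * u)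

variable (p) in
/-- The residue homomorphism (the `p`-component of the boundary map) `W(ℚ) → W(𝔽_p)`. -/
noncomputable def residue : WittGroup ℤ →+ WittGroup (ZMod p) := lift isWittSymbol_residueFun

@[simp] lemma residue_mk (z : ℤ) : residue p (mk z) = residueFun p z := lift_mk _ z

end Residue

section Smooth

/-- A nonzero integer all of whose prime factors are smaller than `k`. -/
def IsSmooth (k : ℕ) (z : ℤ) : Prop := z.natAbs ∈ Nat.smoothNumbers k

namespace IsSmooth

variable {k l : ℕ} {y z : ℤ}

lemma ne_zero (hz : IsSmooth k z) : z ≠ 0 :=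
  Int.natAbs_ne_zero.1 (Nat.ne_zero_of_mem_smoothNumbers hz)

lemma mul (hy : IsSmooth k y) (hz : IsSmooth k z) : IsSmooth k (y * z) := by
  rw [IsSmooth, Int.natAbs_mul]
  exact Nat.mul_mem_smoothNumbers hy hz

lemma of_dvd (hz : IsSmooth k z) (h : y ∣ z) : IsSmooth k y :=
  Nat.mem_smoothNumbers_of_dvd hz (Int.natAbs_dvd_natAbs.2 h)

lemma mono (h : k ≤ l) (hz : IsSmooth k z) : IsSmooth l z := Nat.smoothNumbers_mono h hz

lemma of_natAbs_lt (hz : z ≠ 0) (h : z.natAbs < k) : IsSmooth k z :=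
  Nat.mem_smoothNumbers_of_lt (Int.natAbs_pos.2 hz) h

lemma not_dvd {p : ℕ} [Fact p.Prime] (hz : IsSmooth p z) : ¬ (p : ℤ) ∣ z := fun h =>
  lt_irrefl p (Nat.mem_smoothNumbers'.1 hz p Fact.out (Int.natCast_dvd.1 h))

end IsSmooth

/-- The subgroup generated by the classes of the integers all of whose prime factors are smaller
than `k`. -/
def smooth (k : ℕ) : AddSubgroup (WittGroup ℤ) := AddSubgroup.closure (mk '' {z | IsSmooth k z})

lemma mk_mem_smooth {k : ℕ} {z : ℤ} (hz : IsSmooth k z) : mk z ∈ smooth k :=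
  AddSubgroup.subset_closure ⟨z, hz, rfl⟩

lemma smooth_mono : Monotone smooth := fun _ _ h =>
  AddSubgroup.closure_mono (Set.image_mono fun _ hz => hz.mono h)

lemma exists_mem_smooth (x : WittGroup ℤ) : ∃ k, x ∈ smooth k := by
  induction x using induction_on with
  | zero => exact ⟨0, zero_mem _⟩
  | mk_add a x ih =>
    obtain ⟨k, hk⟩ := ih
    rcases eq_or_ne a 0 with rfl | ha
    · exact ⟨k, by simpa⟩
    exact ⟨max k (a.natAbs + 1), add_mem (mk_mem_smooth (.of_natAbs_lt ha (by omega)))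
      (smooth_mono (le_max_left _ _) hk)⟩

lemma residue_eq_zero_of_mem_smooth {p k : ℕ} [Fact p.Prime] (hkp : k ≤ p) {x : WittGroup ℤ}
    (hx : x ∈ smooth k) : residue p x = 0 := by
  have : smooth k ≤ (residue p).ker := by
    rw [smooth, AddSubgroup.closure_le]
    rintro _ ⟨z, hz, rfl⟩
    simpa using residueFun_of_not_dvd (hz.mono hkp).not_dvd
  exact this hx

lemma smooth_zero_le_zmultiples : smooth 0 ≤ AddSubgroup.zmultiples (mk 1) := by
  rw [smooth, AddSubgroup.closure_le]
  rintro _ ⟨z, hz, rfl⟩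
  rw [Set.mem_ofPred_eq, IsSmooth, Nat.smoothNumbers_zero, Set.mem_singleton_iff] at hz
  rcases Int.natAbs_eq_iff.1 hz with rfl | rfl
  · exact AddSubgroup.mem_zmultiples _
  · simp [mk_neg]

end Smooth

section Coresidue

variable {p : ℕ}

/-- The class of `⟨p z⟩` modulo the classes of integers with prime factors smaller than `p`. -/
def primeMul (p : ℕ) (z : ℤ) : WittGroup ℤ ⧸ smooth p := QuotientAddGroup.mk (mk (p * z))

lemma quotientMk_mk_eq_zero {z : ℤ} (hz : IsSmooth p z) :
    (QuotientAddGroup.mk (mk z) : WittGroup ℤ ⧸ smooth p) = 0 :=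
  (QuotientAddGroup.eq_zero_iff _).2 (mk_mem_smooth hz)

variable [Fact p.Prime]

lemma isWittSymbol_primeMul : IsWittSymbol (primeMul p) :=
  (isWittSymbol_mk.comp_mul_left prime_natCast.ne_zero).map (QuotientAddGroup.mk' (smooth p))

lemma primeMul_mul_eq_of_eq_add_mul {x r s c : ℤ} (hx : IsSmooth p x) (hr : IsSmooth p r)
    (hc : IsSmooth p c) (hs : s.natAbs < p) (h : x = r + p * s) :
    primeMul p (x * c) = primeMul p (r * c) := by
  rcases eq_or_ne s 0 with rfl | hs0
  · rw [h, mul_zero, add_zero]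
  have hs' : IsSmooth p s := .of_natAbs_lt hs0 hs
  have hp : (p : ℤ) ≠ 0 := prime_natCast.ne_zero
  have key := mk_add_mk (p * (r * c)) (s * c * (p : ℤ) ^ 2)
  rw [mk_mul_sq _ hp, show (p : ℤ) * (r * c) + s * c * p ^ 2 = p * (x * c) by rw [h]; ring,
    show (p : ℤ) * (r * c) * (s * c * p ^ 2) * (p * (x * c)) =
      r * s * x * c * (c * p ^ 2) ^ 2 by ring,
    mk_mul_sq _ (mul_ne_zero hc.ne_zero (pow_ne_zero 2 hp))] at key
  have key' := congrArg (QuotientAddGroup.mk (s := smooth p)) key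
  simp only [QuotientAddGroup.mk_add, quotientMk_mk_eq_zero (hs'.mul hc),
    quotientMk_mk_eq_zero (((hr.mul hs').mul hx).mul hc), add_zero] at key'
  exact key'.symm

/-- The prime factors of `a` are absorbed into `x` one at a time, so that the quotient by `p` stays
smaller than `p`. -/
lemma primeMul_mul_natCast_eq {x : ℤ} (hx : 0 < x) (hxp : x < p) {a : ℕ} (ha : IsSmooth p a) :
    primeMul p (x * a) = primeMul p (x * a % p) := by
  induction a using induction_on_primes generalizing x with
  | zero => exact absurd rfl ha.ne_zero
  | one => rw [Nat.cast_one, mul_one, Int.emod_eq_of_lt hx.le hxp]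
  | prime_mul q a hq ih =>
    have hq' : IsSmooth p q := ha.of_dvd (Int.natCast_dvd_natCast.2 (dvd_mul_right q a))
    have ha' : IsSmooth p a := ha.of_dvd (Int.natCast_dvd_natCast.2 (dvd_mul_left a q))
    have hqp : (q : ℤ) < p :=
      Int.ofNat_lt.2 (Nat.mem_smoothNumbers'.1 hq' q hq (by simp))
    have hxq : IsSmooth p (x * q) := .mul (.of_natAbs_lt hx.ne' (by omega)) hq'
    have hr : 0 < x * q % p := (Int.emod_nonneg _ prime_natCast.ne_zero).lt_of_ne' fun h =>
      hxq.not_dvd (Int.dvd_of_emod_eq_zero h)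
    have hrp : x * q % p < p := Int.emod_lt_of_pos _ (by omega)
    have hs : (x * q / p).natAbs < p := by
      have := Int.ediv_lt_of_lt_mul (show (0 : ℤ) < p by omega)
        (mul_lt_mul'' hxp hqp hx.le (Int.natCast_nonneg q))
      have := Int.ediv_nonneg (mul_nonneg hx.le (Int.natCast_nonneg q)) (Int.natCast_nonneg p)
      omega
    rw [Nat.cast_mul, ← mul_assoc, primeMul_mul_eq_of_eq_add_mul hxq
      (.of_natAbs_lt hr.ne' (by omega)) ha' hs (Int.emod_add_mul_ediv _ _).symm, ih hr hrp ha',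
      ((Int.mod_modEq (x * q) p).mul_right a).eq]

lemma primeMul_eq_primeMul_emod {a : ℤ} (ha : IsSmooth p a) :
    primeMul p a = primeMul p (a % p) := by
  have hp : 1 < p := (Fact.out : p.Prime).one_lt
  have ha' : IsSmooth p a.natAbs := ha
  rcases a.natAbs_eq with h | h
  · have := primeMul_mul_natCast_eq one_pos (by exact_mod_cast hp) ha'
    rwa [one_mul, ← h] at this
  · calc primeMul p a = primeMul p (-1 * a.natAbs) := by rw [neg_one_mul, ← h]
      _ = primeMul p ((p - 1) * a.natAbs) :=
        primeMul_mul_eq_of_eq_add_mul (s := -1) (.of_natAbs_lt (by simp) (by simpa))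
          (.of_natAbs_lt (by omega) (by omega)) ha' (by simpa) (by ring)
      _ = primeMul p ((p - 1) * a.natAbs % p) :=
        primeMul_mul_natCast_eq (by omega) (by omega) ha'
      _ = primeMul p (a % p) := by
        have : (p - 1) * a.natAbs ≡ -a.natAbs [ZMOD p] :=
          Int.modEq_iff_dvd.2 ⟨-a.natAbs, by ring⟩
        rw [this.eq, ← h]

lemma primeMul_eq_of_intCast_eq {a b : ℤ} (ha : IsSmooth p a) (hb : IsSmooth p b)
    (h : (a : ZMod p) = b) : primeMul p a = primeMul p b := by
  rw [primeMul_eq_primeMul_emod ha, primeMul_eq_primeMul_emod hb,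
    (ZMod.intCast_eq_intCast_iff' a b p).1 h]

lemma isSmooth_valMinAbs {a : ZMod p} (ha : a ≠ 0) : IsSmooth p a.valMinAbs :=
  .of_natAbs_lt ((ZMod.valMinAbs_eq_zero a).not.2 ha)
    (a.natAbs_valMinAbs_le.trans_lt (Nat.div_lt_self (Fact.out : p.Prime).pos one_lt_two))

lemma isSmooth_valMinAbs_add_valMinAbs {a b : ZMod p} (hab : a + b ≠ 0) :
    IsSmooth p (a.valMinAbs + b.valMinAbs) := by
  have hdvd : ¬ (p : ℤ) ∣ a.valMinAbs + b.valMinAbs := by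
    rw [← ZMod.intCast_zmod_eq_zero_iff_dvd]
    simpa
  have hle : (a.valMinAbs + b.valMinAbs).natAbs ≤ p := by
    have := a.natAbs_valMinAbs_le
    have := b.natAbs_valMinAbs_le
    omega
  refine .of_natAbs_lt (by intro h; simp [h] at hdvd) (hle.lt_of_ne fun h => hdvd ?_)
  rw [← Int.dvd_natAbs, h]

lemma isWittSymbol_primeMul_valMinAbs :
    IsWittSymbol fun a : ZMod p => primeMul p a.valMinAbs where
  map_zero := by simpa using isWittSymbol_primeMul.map_zero
  map_mul_sq a b hb := by
    rcases eq_or_ne a 0 with rfl | ha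
    · simp
    have hb' := isSmooth_valMinAbs hb
    rw [← isWittSymbol_primeMul.map_mul_sq a.valMinAbs hb'.ne_zero]
    refine primeMul_eq_of_intCast_eq (isSmooth_valMinAbs (by simp [ha, hb])) ?_ (by simp)
    simpa [sq] using (isSmooth_valMinAbs ha).mul (hb'.mul hb')
  map_add a b := by
    rcases eq_or_ne a 0 with rfl | ha
    · simp [isWittSymbol_primeMul.map_zero]
    rcases eq_or_ne b 0 with rfl | hb
    · simp [isWittSymbol_primeMul.map_zero]
    have ha' := isSmooth_valMinAbs ha
    have hb' := isSmooth_valMinAbs hb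
    rcases eq_or_ne (a + b) 0 with hab | hab
    · have : primeMul p b.valMinAbs = primeMul p (-a.valMinAbs) :=
        primeMul_eq_of_intCast_eq hb' (by simpa [IsSmooth] using ha')
          (by simpa using eq_neg_of_add_eq_zero_right hab)
      simp [hab, this, isWittSymbol_primeMul.map_neg, isWittSymbol_primeMul.map_zero]
    · have hab' := isSmooth_valMinAbs_add_valMinAbs hab
      rw [isWittSymbol_primeMul.map_add, primeMul_eq_of_intCast_eq hab' (isSmooth_valMinAbs hab)
        (by simp), primeMul_eq_of_intCast_eq ((ha'.mul hb').mul hab')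
        (isSmooth_valMinAbs (mul_ne_zero (mul_ne_zero ha hb) hab)) (by simp)]

/-- The map `⟨a⟩ ↦ ⟨p a⟩`, inverse to the residue on the graded piece of the smooth filtration. -/
noncomputable def coresidue (p : ℕ) [Fact p.Prime] :
    WittGroup (ZMod p) →+ WittGroup ℤ ⧸ smooth p :=
  lift isWittSymbol_primeMul_valMinAbs

lemma coresidue_residue {x : WittGroup ℤ} (hx : x ∈ smooth (p + 1)) :
    coresidue p (residue p x) = QuotientAddGroup.mk x := by
  suffices smooth (p + 1) ≤
      ((coresidue p).comp (residue p)).eqLocus (QuotientAddGroup.mk' (smooth p)) from this hx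
  rw [smooth, AddSubgroup.closure_le]
  rintro _ ⟨z, hz, rfl⟩
  change coresidue p (residue p (mk z)) = QuotientAddGroup.mk (mk z)
  obtain ⟨k, u, hu, rfl⟩ := exists_eq_pow_mul_and_not_dvd (p := p) hz.ne_zero
  have hu' : IsSmooth p u := Nat.mem_smoothNumbers'.2 fun q hq hqu =>
    (Nat.lt_succ_iff.1 (Nat.mem_smoothNumbers'.1 hz q hq
      (by rw [Int.natAbs_mul]; exact hqu.mul_left _))).lt_of_ne
        fun h => hu (Int.natCast_dvd.2 (h ▸ hqu))
  have hpow (m : ℕ) : (p : ℤ) ^ m ≠ 0 := pow_ne_zero m prime_natCast.ne_zero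
  rw [residue_mk, residueFun_pow_mul k hu]
  split_ifs with hk
  · obtain ⟨m, rfl⟩ := hk
    rw [show (p : ℤ) ^ (2 * m + 1) * u = p * u * (p ^ m) ^ 2 by ring, mk_mul_sq _ (hpow m),
      coresidue, lift_mk]
    exact primeMul_eq_of_intCast_eq (isSmooth_valMinAbs (intCast_zmod_ne_zero hu)) hu' (by simp)
  · obtain ⟨m, rfl⟩ := Nat.not_odd_iff_even.1 hk
    rw [show (p : ℤ) ^ (m + m) * u = u * (p ^ m) ^ 2 by ring, mk_mul_sq _ (hpow m), map_zero,
      quotientMk_mk_eq_zero hu']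

theorem mem_zmultiples_of_residue_eq_zero {x : WittGroup ℤ}
    (h : ∀ p : Nat.Primes, residue p x = 0) : x ∈ AddSubgroup.zmultiples (mk 1) := by
  obtain ⟨k, hk⟩ := exists_mem_smooth x
  refine smooth_zero_le_zmultiples ?_
  induction k with
  | zero => exact hk
  | succ k ih =>
    apply ih
    by_cases hp : k.Prime
    · have : Fact k.Prime := ⟨hp⟩
      rw [← QuotientAddGroup.eq_zero_iff, ← coresidue_residue hk, h ⟨k, hp⟩, map_zero]
    · simpa only [smooth, IsSmooth, Nat.smoothNumbers_succ hp] using hk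

end Coresidue

section Ternary

/-- The class of the ternary form `m ⟨δ, δ ℓ, n ℓ⟩`. For suitable squarefree `m` and `n`, sign `δ`
and prime `ℓ` it has any prescribed finite family of residues. -/
def ternary (m n l : ℤ) (δ : ℤˣ) : WittGroup ℤ := mk (m * δ) + mk (m * δ * l) + mk (m * n * l)

variable {p : ℕ} [Fact p.Prime]

lemma residue_ternary_of_dvd_left (hp : p ≠ 2) {m n l : ℤ} (δ : ℤˣ) {u v : ZMod p} (hu : u ≠ 0)
    (hv : v ≠ 0) (hm : ¬ (p : ℤ) ∣ m) (hn : ¬ (p : ℤ) ∣ n) (hl : (l : ZMod p) = u * v) :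
    residue p (ternary (p * m) (p * n) l δ) = mk u + mk v := by
  have hl' : ¬ (p : ℤ) ∣ l := by
    rw [← ZMod.intCast_zmod_eq_zero_iff_dvd, hl]; exact mul_ne_zero hu hv
  have hmδ : ¬ (p : ℤ) ∣ m * δ := Units.dvd_mul_right.not.2 hm
  have hmδ' := intCast_zmod_ne_zero hmδ
  have hmnl := prime_natCast.not_dvd_mul (prime_natCast.not_dvd_mul hm hn) hl'
  have hform : ternary (p * m) (p * n) l δ =
      mk (p * (m * δ)) + mk (p * (m * δ * l)) + mk (m * n * l) := by
    rw [ternary, ← mk_mul_sq (m * n * l) (prime_natCast (p := p)).ne_zero]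
    ring_nf
  rw [hform, map_add, map_add, residue_mk, residue_mk, residue_mk, residueFun_prime_mul hmδ,
    residueFun_prime_mul (prime_natCast.not_dvd_mul hmδ hl'), residueFun_of_not_dvd hmnl, add_zero]
  refine (mk_add_mk_eq_of_discr_eq (by rwa [ZMod.ringChar_zmod_n]) hu hv hmδ' hmδ' ?_).symm
  rw [Int.cast_mul _ l, hl]
  ring

lemma residue_ternary_of_dvd_right {m n l : ℤ} (δ : ℤˣ) {u : ZMod p} (hu : u ≠ 0)
    (hm : ¬ (p : ℤ) ∣ m) (hn : ¬ (p : ℤ) ∣ n) (hl : (l : ZMod p) = u * (m * n : ℤ)) :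
    residue p (ternary m (p * n) l δ) = mk u := by
  have hmδ : ¬ (p : ℤ) ∣ m * δ := Units.dvd_mul_right.not.2 hm
  have hmn := prime_natCast.not_dvd_mul hm hn
  have hmn' := intCast_zmod_ne_zero hmn
  have hl' : ¬ (p : ℤ) ∣ l := by
    rw [← ZMod.intCast_zmod_eq_zero_iff_dvd, hl]; exact mul_ne_zero hu hmn'
  rw [ternary, show m * (p * n) * l = p * (m * n * l) by ring, map_add, map_add, residue_mk,
    residue_mk, residue_mk, residueFun_of_not_dvd hmδ,
    residueFun_of_not_dvd (prime_natCast.not_dvd_mul hmδ hl'),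
    residueFun_prime_mul (prime_natCast.not_dvd_mul hmn hl'), add_zero, zero_add, Int.cast_mul _ l,
    hl, show ((m * n : ℤ) : ZMod p) * (u * (m * n : ℤ)) = u * (m * n : ℤ) ^ 2 by ring,
    mk_mul_sq _ hmn']

lemma residue_ternary_self {m n : ℤ} {δ : ℤˣ} (hm : ¬ (p : ℤ) ∣ m) (hn : ¬ (p : ℤ) ∣ n)
    (hsq : IsSquare ((-δ * n : ℤ) : ZMod p)) : residue p (ternary m n p δ) = 0 := by
  have hmδ : ¬ (p : ℤ) ∣ m * δ := Units.dvd_mul_right.not.2 hm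
  obtain ⟨s, hs⟩ := hsq
  have hs0 : s ≠ 0 := by
    rintro rfl
    refine intCast_zmod_ne_zero ((Units.dvd_mul_right (u := -δ)).not.2 hn) ?_
    simpa [mul_comm] using hs
  have hmn : ((m * n : ℤ) : ZMod p) = ((-(m * δ) : ℤ) : ZMod p) * s ^ 2 := by
    rw [sq, ← hs, ← Int.cast_mul, show -(m * δ) * (-δ * n) = m * n * (δ * δ : ℤ) by ring,
      ← Units.val_mul, Int.units_mul_self, Units.val_one, mul_one]
  rw [ternary, mul_comm (m * δ) (p : ℤ), mul_comm (m * n) (p : ℤ), map_add, map_add, residue_mk,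
    residue_mk, residue_mk, residueFun_of_not_dvd hmδ, residueFun_prime_mul hmδ,
    residueFun_prime_mul (prime_natCast.not_dvd_mul hm hn), hmn, mk_mul_sq _ hs0, Int.cast_neg,
    mk_neg, zero_add, add_neg_cancel]

lemma residue_ternary_eq_zero {m n l : ℤ} (δ : ℤˣ) (hm : ¬ (p : ℤ) ∣ m) (hn : ¬ (p : ℤ) ∣ n)
    (hl : ¬ (p : ℤ) ∣ l) : residue p (ternary m n l δ) = 0 := by
  have hmδ : ¬ (p : ℤ) ∣ m * δ := Units.dvd_mul_right.not.2 hm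
  simp [ternary, residueFun_of_not_dvd hmδ,
    residueFun_of_not_dvd (prime_natCast.not_dvd_mul hmδ hl),
    residueFun_of_not_dvd (prime_natCast.not_dvd_mul (prime_natCast.not_dvd_mul hm hn) hl)]

lemma exists_forall_residue_ternary_eq {m n : ℕ} (hm : Squarefree m) (hn : Squarefree n)
    (hpn : p ∣ n) {y : WittGroup (ZMod p)} (hy : y ≠ 0)
    (hpm : p ∣ m ↔ ¬ ∃ u, u ≠ 0 ∧ y = mk u) :
    ∃ c : ZMod p, c ≠ 0 ∧
      ∀ (l : ℤ) (δ : ℤˣ), (l : ZMod p) = c → residue p (ternary m n l δ) = y := by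
  obtain ⟨n', hnn', hn'⟩ := exists_natCast_eq_mul_of_squarefree Fact.out hn hpn
  by_cases hu : ∃ u, u ≠ 0 ∧ y = mk u
  · obtain ⟨u, hu0, rfl⟩ := id hu
    have hm' : ¬ (p : ℤ) ∣ m := Int.natCast_dvd_natCast.not.2 fun h => hpm.1 h hu
    refine ⟨u * (m * n' : ℤ), mul_ne_zero hu0
      (intCast_zmod_ne_zero (prime_natCast.not_dvd_mul hm' hn')), fun l δ hl => ?_⟩
    rw [hnn', residue_ternary_of_dvd_right δ hu0 hm' hn' hl]
  · obtain ⟨m', hmm', hm'⟩ := exists_natCast_eq_mul_of_squarefree Fact.out hm (hpm.2 hu)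
    have hp : p ≠ 2 := fun hp => hu ⟨1, one_ne_zero,
      (eq_zero_or_eq_mk_one_of_ringChar_eq_two (by rwa [ZMod.ringChar_zmod_n]) y).resolve_left hy⟩
    obtain ⟨u, v, hu0, hv0, rfl⟩ :=
      (exists_eq_mk_or_exists_eq_mk_add_mk (by rwa [ZMod.ringChar_zmod_n]) y).resolve_left hu
    refine ⟨u * v, mul_ne_zero hu0 hv0, fun l δ hl => ?_⟩
    rw [hmm', hnn', residue_ternary_of_dvd_left hp δ hu0 hv0 hm' hn' hl]

lemma finite_setOf_residue_ne_zero (x : WittGroup ℤ) :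
    {p : Nat.Primes | residue p x ≠ 0}.Finite := by
  obtain ⟨k, hk⟩ := exists_mem_smooth x
  refine ((Set.finite_lt_nat k).preimage Nat.Primes.coe_nat_injective.injOn).subset
    fun (p : Nat.Primes) hp => ?_
  exact lt_of_not_ge fun h => hp (residue_eq_zero_of_mem_smooth h hk)

theorem exists_ternary_forall_residue_eq (x : WittGroup ℤ) :
    ∃ m n l : ℤ, ∃ δ : ℤˣ, m ≠ 0 ∧ n ≠ 0 ∧ l ≠ 0 ∧
      ∀ p : Nat.Primes, residue p (ternary m n l δ) = residue p x := by
  classical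
  have hfin := finite_setOf_residue_ne_zero x
  obtain ⟨n, hn, hpn⟩ := exists_squarefree_forall_dvd_iff hfin.toFinset
  obtain ⟨m, hm, hpm⟩ := exists_squarefree_forall_dvd_iff
    (hfin.toFinset.filter fun p => ¬ ∃ u, u ≠ 0 ∧ residue p x = mk u)
  simp only [Finset.mem_filter, ← hpn] at hpm
  simp only [Set.Finite.mem_toFinset, Set.mem_ofPred_eq] at hpn
  have hlocal (p : Nat.Primes) (hp : (p : ℕ) ∣ n) := exists_forall_residue_ternary_eq hm hn hp
    ((hpn p).1 hp) ((hpm p).trans (and_iff_right hp))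
  choose! c hc hcl using hlocal
  obtain ⟨l, hln, hl, hl4, hlc⟩ := exists_prime_three_mod_four_and_cast_eq hfin.toFinset c
    (fun q hq => hc q ((hpn q).2 (hfin.mem_toFinset.1 hq))) n
  have : Fact l.Prime := ⟨hl⟩
  obtain ⟨δ, hδ⟩ := exists_unit_isSquare_neg_mul hl4 n
  refine ⟨m, n, l, δ, Nat.cast_ne_zero.2 hm.ne_zero, Nat.cast_ne_zero.2 hn.ne_zero,
    Nat.cast_ne_zero.2 hl.ne_zero, fun p => ?_⟩
  by_cases hp : (p : ℕ) ∣ n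
  · exact hcl p hp l δ (by simpa using hlc p (hfin.mem_toFinset.2 ((hpn p).1 hp)))
  have hx : residue p x = 0 := not_not.1 ((hpn p).not.1 hp)
  have hpm' : ¬ ((p : ℕ) : ℤ) ∣ m := Int.natCast_dvd_natCast.not.2 fun h => hp ((hpm p).1 h).1
  have hpn' : ¬ ((p : ℕ) : ℤ) ∣ n := Int.natCast_dvd_natCast.not.2 hp
  rw [hx]
  by_cases hpl : (p : ℕ) = l
  · subst hpl
    exact residue_ternary_self hpm' hpn' hδ
  · exact residue_ternary_eq_zero δ hpm' hpn' (Int.natCast_dvd_natCast.not.2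
      ((Nat.prime_dvd_prime_iff_eq p.2 hl).not.2 hpl))

end Ternary

end WittGroup

section DiagonalForms

open QuadraticMap

lemma exists_equiv_of_map_univ_eq {ι κ α : Type*} [Fintype ι] [Fintype κ]
    {a : ι → α} {b : κ → α} (h : Finset.univ.val.map a = Finset.univ.val.map b) :
    ∃ e : ι ≃ κ, ∀ i, b (e i) = a i := by
  classical
  have hfiber (y : α) : Nonempty ({i // a i = y} ≃ {j // b j = y}) := by
    refine ⟨Fintype.equivOfCardEq ?_⟩
    have hcount := congrArg (Multiset.count y) h
    rw [Multiset.count_map, Multiset.count_map] at hcount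
    rw [Fintype.card_subtype, Fintype.card_subtype]
    simpa only [Finset.card_def, Finset.filter_val, eq_comm] using hcount
  exact ⟨(Equiv.sigmaFiberEquiv a).symm.trans
    ((Equiv.sigmaCongrRight fun y => (hfiber y).some).trans (Equiv.sigmaFiberEquiv b)),
    fun i => ((hfiber (a i)).some ⟨i, rfl⟩).2⟩

lemma weightedSumSquares_equivalent_of_map_univ_eq {R ι κ : Type*} [CommRing R] [Fintype ι]
    [Fintype κ] {a : ι → R} {b : κ → R} (h : Finset.univ.val.map a = Finset.univ.val.map b) :
    (weightedSumSquares R a).Equivalent (weightedSumSquares R b) := by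
  obtain ⟨e, he⟩ := exists_equiv_of_map_univ_eq h
  refine ⟨⟨LinearEquiv.funCongrLeft R R e.symm, fun x => ?_⟩⟩
  simp only [weightedSumSquares_apply]
  rw [← e.sum_comp]
  simp [LinearMap.funLeft, he]

lemma weightedSumSquares_sumElim_equivalent {R ι κ : Type*} [CommRing R] [Fintype ι] [Fintype κ]
    (a : ι → R) (b : κ → R) : (weightedSumSquares R (Sum.elim a b)).Equivalent
      ((weightedSumSquares R a).prod (weightedSumSquares R b)) :=
  ⟨⟨LinearEquiv.sumArrowLequivProdArrow ι κ R R, fun x => by simp⟩⟩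

variable {R : Type*} [CommRing R] [DecidableEq R]

/-- The diagonal form whose coefficients are the elements of the multiset `s`. Diagonal forms are
indexed by multisets because reordering the coefficients does not change the form up to
equivalence. -/
def diagForm (s : Multiset R) : QuadraticForm R (s → R) := weightedSumSquares R fun i : s => (i : R)

lemma weightedSumSquares_equivalent_diagForm {ι : Type*} [Fintype ι] {a : ι → R} {s : Multiset R}
    (h : Finset.univ.val.map a = s) : (weightedSumSquares R a).Equivalent (diagForm s) :=
  weightedSumSquares_equivalent_of_map_univ_eq (h.trans s.map_univ_coe.symm)

lemma diagForm_add_equivalent_prod (s t : Multiset R) :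
    (diagForm (s + t)).Equivalent ((diagForm s).prod (diagForm t)) :=
  (weightedSumSquares_equivalent_diagForm
    (by simp [← Finset.univ_disjSum_univ, Multiset.disjSum])).symm.trans
      (weightedSumSquares_sumElim_equivalent _ _)

lemma diagForm_add_equivalent {s s' t t' : Multiset R} (h : (diagForm s).Equivalent (diagForm t))
    (h' : (diagForm s').Equivalent (diagForm t')) :
    (diagForm (s + s')).Equivalent (diagForm (t + t')) :=
  (diagForm_add_equivalent_prod s s').trans
    ((h.prod h').trans (diagForm_add_equivalent_prod t t').symm)

lemma diagForm_singleton_mul_sq_equivalent (a : R) {b : R} (hb : IsUnit b) :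
    (diagForm {a * b ^ 2}).Equivalent (diagForm {a}) := by
  have hsingle (c : R) : (weightedSumSquares R fun _ : Unit => c).Equivalent (diagForm {c}) :=
    weightedSumSquares_equivalent_diagForm (by simp)
  exact (hsingle _).symm.trans <|
    .trans ⟨QuadraticForm.isometryEquivWeightedSumSquaresWeightedSumSquares
      (fun _ => hb.unit) fun _ => rfl⟩ (hsingle a)

/-- The substitution with matrix `!![p, q; r, s]` takes `c X² + d Y²` to `a X² + b Y²`. -/
lemma diagForm_pair_equivalent {a b c d p q r s : R} (hdet : IsUnit (p * s - q * r))
    (ha : c * p ^ 2 + d * r ^ 2 = a) (hb : c * q ^ 2 + d * s ^ 2 = b)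
    (hab : c * p * q + d * r * s = 0) : (diagForm {a, b}).Equivalent (diagForm {c, d}) := by
  have hpair (x y : R) : (weightedSumSquares R ![x, y]).Equivalent (diagForm {x, y}) :=
    weightedSumSquares_equivalent_diagForm (by simp [Fin.univ_val_map]; rfl)
  have hdet' : IsUnit (!![p, q; r, s] : Matrix (Fin 2) (Fin 2) R).det := by
    rw [Matrix.det_fin_two_of]; exact hdet
  refine (hpair a b).symm.trans (.trans
    ⟨⟨Matrix.toLinearEquiv' _ (Matrix.invertibleOfIsUnitDet _ hdet'), fun x => ?_⟩⟩ (hpair c d))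
  simp only [AddHom.toFun_eq_coe, LinearMap.coe_toAddHom, Matrix.toLinearEquiv'_apply,
    Matrix.toLin'_apply, weightedSumSquares_apply, Fin.sum_univ_two, Matrix.mulVec, dotProduct,
    Matrix.of_apply, Matrix.cons_val_zero, Matrix.cons_val_one, smul_eq_mul]
  linear_combination x 0 ^ 2 * ha + x 1 ^ 2 * hb + 2 * x 0 * x 1 * hab

lemma diagForm_pair_equivalent_add {a b : R} (hab : IsUnit (a + b)) :
    (diagForm {a, b}).Equivalent (diagForm {a + b, a * b * (a + b)}) := by
  refine (diagForm_pair_equivalent (p := 1) (q := -b) (r := 1) (s := a) ?_ ?_ ?_ ?_).symm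
  · simpa [add_comm] using hab
  all_goals ring

lemma diagForm_pair_neg_equivalent {K : Type*} [Field K] [DecidableEq K] [NeZero (2 : K)]
    {a : K} (ha : a ≠ 0) : (diagForm {a, -a}).Equivalent (diagForm {1, -1}) := by
  have h2 : (2 : K) ≠ 0 := two_ne_zero
  refine diagForm_pair_equivalent (p := (a + 1) / 2) (q := (a - 1) / 2) (r := (a - 1) / 2)
    (s := (a + 1) / 2) ?_ ?_ ?_ ?_
  · rw [show (a + 1) / 2 * ((a + 1) / 2) - (a - 1) / 2 * ((a - 1) / 2) = a by field_simp; ring]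
    exact ha.isUnit
  all_goals
    field_simp
    ring

end DiagonalForms

section StableEquivalence

/-- The coefficients of the sum of `u` copies of `⟨1⟩` and `v` copies of `⟨-1⟩`. -/
def unitCoeffs (R : Type*) [Ring R] (u v : ℕ) : Multiset R :=
  Multiset.replicate u 1 + Multiset.replicate v (-1)

lemma unitCoeffs_add_unitCoeffs {R : Type*} [Ring R] (u v u' v' : ℕ) :
    unitCoeffs R u v + unitCoeffs R u' v' = unitCoeffs R (u + u') (v + v') := by
  simp only [unitCoeffs, Multiset.replicate_add]
  abel

variable {R : Type*} [CommRing R] [DecidableEq R]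

variable (R) in
/-- Equivalence of diagonal forms up to adding forms `⟨1⟩` and `⟨-1⟩`. Zero coefficients are
discarded first, so that the classes of one-dimensional forms are an `IsWittSymbol`. -/
def stableCon : AddCon (Multiset R) where
  r s t := ∃ u v u' v', (diagForm (s.filter (· ≠ 0) + unitCoeffs R u v)).Equivalent
    (diagForm (t.filter (· ≠ 0) + unitCoeffs R u' v'))
  iseqv :=
    { refl := fun s => ⟨0, 0, 0, 0, .refl _⟩
      symm := fun ⟨u, v, u', v', h⟩ => ⟨u', v', u, v, h.symm⟩
      trans := by
        rintro s t w ⟨u₁, v₁, u₂, v₂, h⟩ ⟨u₃, v₃, u₄, v₄, h'⟩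
        refine ⟨u₁ + u₃, v₁ + v₃, u₄ + u₂, v₄ + v₂, ?_⟩
        rw [← unitCoeffs_add_unitCoeffs, ← unitCoeffs_add_unitCoeffs, ← add_assoc, ← add_assoc]
        refine (diagForm_add_equivalent h (.refl _)).trans ?_
        rw [add_right_comm]
        exact diagForm_add_equivalent h' (.refl _) }
  add' := by
    rintro s t s' t' ⟨u₁, v₁, u₂, v₂, h⟩ ⟨u₃, v₃, u₄, v₄, h'⟩
    refine ⟨u₁ + u₃, v₁ + v₃, u₂ + u₄, v₂ + v₄, ?_⟩
    rw [← unitCoeffs_add_unitCoeffs, ← unitCoeffs_add_unitCoeffs, Multiset.filter_add,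
      Multiset.filter_add, add_add_add_comm, add_add_add_comm (t.filter _)]
    exact diagForm_add_equivalent h h'

/-- The class of a diagonal form up to adding forms `⟨1⟩` and `⟨-1⟩`. -/
def stableClass : Multiset R →+ (stableCon R).Quotient := (stableCon R).mk'

lemma stableClass_eq_iff {s t : Multiset R} (hs : 0 ∉ s) (ht : 0 ∉ t) :
    stableClass s = stableClass t ↔ ∃ u v u' v',
      (diagForm (s + unitCoeffs R u v)).Equivalent (diagForm (t + unitCoeffs R u' v')) := by
  have hfilter {w : Multiset R} (hw : 0 ∉ w) : w.filter (· ≠ 0) = w :=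
    Multiset.filter_eq_self.2 fun _ ha => ne_of_mem_of_not_mem ha hw
  refine (AddCon.eq (stableCon R)).trans ?_
  change (∃ u v u' v', (diagForm (s.filter _ + _)).Equivalent (diagForm (t.filter _ + _))) ↔ _
  rw [hfilter hs, hfilter ht]

lemma stableClass_eq_of_equivalent {s t : Multiset R} (hs : 0 ∉ s) (ht : 0 ∉ t)
    (h : (diagForm s).Equivalent (diagForm t)) : stableClass s = stableClass t :=
  (stableClass_eq_iff hs ht).2 ⟨0, 0, 0, 0, diagForm_add_equivalent h (.refl _)⟩

@[simp] lemma stableClass_zero : stableClass {(0 : R)} = 0 :=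
  (AddCon.eq (stableCon R)).2 ⟨0, 0, 0, 0, by
    rw [Multiset.filter_singleton, if_neg (not_not.2 rfl)]
    rfl⟩

@[simp] lemma stableClass_unitCoeffs [Nontrivial R] (u v : ℕ) :
    stableClass (unitCoeffs R u v) = 0 := by
  rw [← map_zero stableClass]
  refine (stableClass_eq_iff ?_ (Multiset.notMem_zero 0)).2 ⟨0, 0, u, v, ?_⟩
  · simp [unitCoeffs, Multiset.mem_replicate]
  · rw [unitCoeffs_add_unitCoeffs, add_zero, add_zero, zero_add]

variable {K : Type*} [Field K] [DecidableEq K]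

lemma stableClass_mul_sq (a : K) {b : K} (hb : b ≠ 0) :
    stableClass {a * b ^ 2} = stableClass {a} := by
  rcases eq_or_ne a 0 with rfl | ha
  · simp
  · exact stableClass_eq_of_equivalent (by simp [ha, hb]) (by simp [ha.symm])
      (diagForm_singleton_mul_sq_equivalent a hb.isUnit)

variable [NeZero (2 : K)]

lemma stableClass_add_neg (a : K) : stableClass {a} + stableClass {-a} = 0 := by
  rcases eq_or_ne a 0 with rfl | ha
  · simp
  rw [← map_add, ← stableClass_unitCoeffs 1 1]
  exact stableClass_eq_of_equivalent (by simp [ha, ha.symm]) (by simp [unitCoeffs])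
    (diagForm_pair_neg_equivalent ha)

lemma stableClass_add (a b : K) :
    stableClass {a} + stableClass {b} = stableClass {a + b} + stableClass {a * b * (a + b)} := by
  rcases eq_or_ne (a + b) 0 with hab | hab
  · rw [hab, mul_zero, eq_neg_of_add_eq_zero_right hab, stableClass_add_neg]
    simp
  rcases eq_or_ne a 0 with rfl | ha
  · simp [add_comm]
  rcases eq_or_ne b 0 with rfl | hb
  · simp
  rw [← map_add, ← map_add]
  exact stableClass_eq_of_equivalent (by simp [ha.symm, hb.symm])
    (by simp [ha, hb, hab, hab.symm]) (diagForm_pair_equivalent_add (isUnit_iff_ne_zero.2 hab))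

/-- The stable class of `⟨a⟩`, with the class of `⟨-a⟩` as its negative. -/
def stableUnit (a : K) : AddUnits (stableCon K).Quotient :=
  ⟨stableClass {a}, stableClass {-a}, stableClass_add_neg a,
    by rw [add_comm, stableClass_add_neg]⟩

lemma isWittSymbol_stableUnit :
    IsWittSymbol (stableUnit : K → AddUnits (stableCon K).Quotient) where
  map_zero := AddUnits.ext stableClass_zero
  map_mul_sq a _ hb := AddUnits.ext (stableClass_mul_sq a hb)
  map_add a b := AddUnits.ext (stableClass_add a b)

/-- The homomorphism sending `⟨z⟩` to its stable class over `ℚ`. -/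
def toStableClass : WittGroup ℤ →+ AddUnits (stableCon ℚ).Quotient :=
  WittGroup.lift (isWittSymbol_stableUnit.comp_ringHom (φ := Int.castRingHom ℚ) Int.cast_injective)

@[simp] lemma coe_toStableClass_mk (z : ℤ) :
    (toStableClass (.mk z) : (stableCon ℚ).Quotient) = stableClass {(z : ℚ)} := by
  simp [toStableClass, stableUnit]

lemma coe_toStableClass_mk_num_mul_den (a : ℚ) :
    (toStableClass (.mk (a.num * a.den)) : (stableCon ℚ).Quotient) = stableClass {a} := by
  rw [coe_toStableClass_mk, ← stableClass_mul_sq a (Nat.cast_ne_zero.2 a.den_ne_zero), Int.cast_mul,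
    Int.cast_natCast, pow_two, ← mul_assoc, Rat.mul_den_eq_num]

lemma exists_coe_toStableClass_eq (s : Multiset ℚ) :
    ∃ x, (toStableClass x : (stableCon ℚ).Quotient) = stableClass s := by
  induction s using Multiset.induction with
  | empty => exact ⟨0, by simp⟩
  | cons a s ih =>
    obtain ⟨x, hx⟩ := ih
    refine ⟨.mk (a.num * a.den) + x, ?_⟩
    rw [map_add, AddUnits.val_add, coe_toStableClass_mk_num_mul_den, hx, ← map_add,
      Multiset.singleton_add]

lemma toStableClass_eq_of_residue_eq {x y : WittGroup ℤ}
    (h : ∀ p : Nat.Primes, WittGroup.residue p x = WittGroup.residue p y) :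
    toStableClass x = toStableClass y := by
  have hmk : toStableClass (.mk 1) = 0 :=
    AddUnits.ext (by simpa [unitCoeffs] using stableClass_unitCoeffs (R := ℚ) 1 0)
  have hmem := WittGroup.mem_zmultiples_of_residue_eq_zero (x := x - y) fun p => by
    rw [map_sub, h p, sub_self]
  obtain ⟨k, hk⟩ := AddSubgroup.mem_zmultiples_iff.1 hmem
  rw [← sub_eq_zero, ← map_sub, ← hk, map_zsmul, hmk, smul_zero]

theorem exists_ternary_stableClass_eq (s : Multiset ℚ) :
    ∃ c : Fin 3 → ℚ, (∀ i, c i ≠ 0) ∧ stableClass s = stableClass (Finset.univ.val.map c) := by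
  obtain ⟨x, hx⟩ := exists_coe_toStableClass_eq s
  obtain ⟨m, n, l, δ, hm, hn, hl, hres⟩ := WittGroup.exists_ternary_forall_residue_eq x
  refine ⟨![(m * δ : ℤ), (m * δ * l : ℤ), (m * n * l : ℤ)], ?_, ?_⟩
  · simp [Fin.forall_fin_succ, hm, hn, hl]
  · rw [← hx, ← toStableClass_eq_of_residue_eq hres, WittGroup.ternary, map_add, map_add,
      AddUnits.val_add, AddUnits.val_add, coe_toStableClass_mk, coe_toStableClass_mk,
      coe_toStableClass_mk, ← map_add, ← map_add]
    rfl

end StableEquivalence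

section Coefficients

lemma map_univ_fin_add {α : Type*} {m n : ℕ} (f : Fin (m + n) → α) :
    Finset.univ.val.map f = Finset.univ.val.map (fun i : Fin m => f (i.castAdd n)) +
      Finset.univ.val.map (fun i : Fin n => f (i.natAdd m)) := by
  rw [Fin.univ_val_map, List.ofFn_add, ← Multiset.coe_add, Fin.univ_val_map, Fin.univ_val_map]
  rfl

lemma zero_notMem_map_univ {ι α : Type*} [Fintype ι] [Zero α] {a : ι → α} (ha : ∀ i, a i ≠ 0) :
    0 ∉ Finset.univ.val.map a := by
  simpa using ha

variable {R : Type*} [Ring R]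

lemma map_univ_alternating (t : ℕ) :
    Finset.univ.val.map (fun i : Fin (2 * t) => if (i : ℕ) % 2 = 0 then (1 : R) else -1) =
      unitCoeffs R t t := by
  induction t with
  | zero => rfl
  | succ t ih =>
    rw [show 2 * (t + 1) = 2 * t + 2 by ring, map_univ_fin_add, ← unitCoeffs_add_unitCoeffs, ← ih]
    congr 1
    simp [Fin.univ_val_map, unitCoeffs]
    rfl

lemma map_univ_append_hyperbolic {n : ℕ} (a : Fin n → R) (t : ℕ) :
    Finset.univ.val.map (fun i : Fin (n + 2 * t) =>
        if h : (i : ℕ) < n then a ⟨i, h⟩ else if ((i : ℕ) - n) % 2 = 0 then 1 else -1) =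
      Finset.univ.val.map a + unitCoeffs R t t := by
  rw [map_univ_fin_add, ← map_univ_alternating]
  simp

lemma map_univ_append_units_append_hyperbolic {r : ℕ} (c : Fin r → R) (u v s : ℕ) :
    Finset.univ.val.map (fun i : Fin (r + u + v + 2 * s) =>
        if h : (i : ℕ) < r then c ⟨i, h⟩
        else if (i : ℕ) < r + u then 1
        else if (i : ℕ) < r + u + v then -1
        else if ((i : ℕ) - (r + u + v)) % 2 = 0 then 1 else -1) =
      Finset.univ.val.map c + unitCoeffs R (u + s) (v + s) := by
  rw [map_univ_fin_add, map_univ_fin_add, map_univ_fin_add, ← unitCoeffs_add_unitCoeffs,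
    ← map_univ_alternating s]
  simp [unitCoeffs, Nat.add_sub_add_left, add_assoc, Fin.univ_val_map,
    ← Multiset.coe_replicate]

end Coefficients

/-- Every nondegenerate diagonal form over ℚ has rational Witt span at most 3:
after adding t hyperbolic pairs (1, −1) to the coefficient list (a₁, …, aₙ), the
resulting diagonal form is equivalent to a diagonal form whose coefficient list
consists of at most 3 nonzero rationals c₁, …, c_r, followed by u copies of 1,
v copies of −1 and s hyperbolic pairs (1, −1). -/
theorem rational_witt_span_le_three
    (n : ℕ) (hn : 1 ≤ n) (a : Fin n → ℚ) (ha : ∀ i, a i ≠ 0) :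
    ∃ r : ℕ, r ≤ 3 ∧ ∃ c : Fin r → ℚ, (∀ i, c i ≠ 0) ∧
      ∃ u v s t : ℕ, n + 2 * t = r + u + v + 2 * s ∧
        ∃ φ : (Fin (n + 2 * t) → ℚ) ≃ₗ[ℚ] (Fin (r + u + v + 2 * s) → ℚ),
          ∀ x : Fin (n + 2 * t) → ℚ,
            (∑ i : Fin (r + u + v + 2 * s),
              (if h : (i : ℕ) < r then c ⟨(i : ℕ), h⟩
                else if (i : ℕ) < r + u then 1
                else if (i : ℕ) < r + u + v then -1
                else if ((i : ℕ) - (r + u + v)) % 2 = 0 then 1 else -1)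
              * (φ x i) ^ 2)
            = ∑ i : Fin (n + 2 * t),
                (if h : (i : ℕ) < n then a ⟨(i : ℕ), h⟩
                  else if ((i : ℕ) - n) % 2 = 0 then 1 else -1)
                * (x i) ^ 2 := by
  obtain ⟨c, hc, hac⟩ := exists_ternary_stableClass_eq (Finset.univ.val.map a)
  obtain ⟨u, v, u', v', h⟩ :=
    (stableClass_eq_iff (zero_notMem_map_univ ha) (zero_notMem_map_univ hc)).1 hac
  -- Adding `v` copies of `⟨1⟩` and `u` of `⟨-1⟩` turns the units next to `a` into hyperbolic pairs.
  have hunits := diagForm_add_equivalent h (.refl (diagForm (unitCoeffs ℚ v u)))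
  rw [add_assoc, add_assoc, unitCoeffs_add_unitCoeffs, unitCoeffs_add_unitCoeffs,
    add_comm v u] at hunits
  obtain ⟨φ⟩ :=
    (weightedSumSquares_equivalent_diagForm (map_univ_append_hyperbolic a (u + v))).trans <|
      hunits.trans (weightedSumSquares_equivalent_diagForm
        (map_univ_append_units_append_hyperbolic c (u' + v) (v' + u) 0)).symm
  refine ⟨3, le_rfl, c, hc, u' + v, v' + u, 0, u + v,
    by simpa using φ.toLinearEquiv.finrank_eq, φ.toLinearEquiv, fun x => ?_⟩
  simpa only [QuadraticMap.weightedSumSquares_apply, smul_eq_mul, ← pow_two] using! φ.map_app x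
end
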